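/- arXiv:1903.01929 — 3 statements merged into one kernel-verified Lean document; each statement's English description precedes it below -/
import Mathlib

section
/- Let ℓ be a prime, T a free ℤ_ℓ-module of finite rank, and Π ⊆ GL(T) a closed subgroup whose Zariski closure G in GL(T ⊗ ℚ_ℓ) is reductive. Set s_ℓ = ℓ if ℓ ≠ 2 and s_ℓ = 4 if ℓ = 2. If Π acts trivially on T/s_ℓT, then for all integers n, m ≥ 0 and every open subgroup U ⊆ Π of finite index, the U-invariants of the tensor space T^{⊗n} ⊗ (T^∨)^{⊗m} ⊗ ℚ_ℓ coincide with the Π-invariants. -/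
noncomputable section
open Matrix

/-- The Zariski topology on the space of square matrices over `K`: the topology generated by
the basic open sets `{M | p(M) ≠ 0}` for polynomials `p` in the matrix entries. -/
def zariskiMat (n : Type*) [Fintype n] (K : Type*) [CommRing K] :
    TopologicalSpace (Matrix n n K) :=
  TopologicalSpace.generateFrom
    {U | ∃ p : MvPolynomial (n × n) K,
      U = {M : Matrix n n K | MvPolynomial.eval (fun q => M q.1 q.2) p ≠ 0}}

/-- The Zariski topology on the algebraic group `GL_n(K)`, induced by the closed embedding
`g ↦ (g, g⁻¹)` into matrix pairs. -/
def zariskiGL (n : Type*) [Fintype n] [DecidableEq n] (K : Type*) [CommRing K] :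
    TopologicalSpace (GL n K) :=
  TopologicalSpace.induced
    (fun g => (((g : GL n K) : Matrix n n K), ((g⁻¹ : GL n K) : Matrix n n K)))
    (@instTopologicalSpaceProd _ _ (zariskiMat n K) (zariskiMat n K))

variable {n : Type*} [Fintype n] [DecidableEq n] {K : Type*} [CommRing K]

/-- Zariski closure in `GL_n(K)`. -/
def zClosure (S : Set (GL n K)) : Set (GL n K) := @closure _ (zariskiGL n K) S

/-- Zariski connectedness in `GL_n(K)`. -/
def zIsConnected (S : Set (GL n K)) : Prop := @IsConnected _ (zariskiGL n K) S

/-- Zariski closedness in `GL_n(K)`. -/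
def zIsClosed (S : Set (GL n K)) : Prop := @IsClosed _ (zariskiGL n K) S

/-- The connected component of `g` inside `S ⊆ GL_n(K)`, for the Zariski topology; for
`g = 1` and `S = G` an algebraic subgroup this is the neutral component `G⁰`. -/
def zComponentIn (S : Set (GL n K)) (g : GL n K) : Set (GL n K) :=
  @connectedComponentIn _ (zariskiGL n K) S g

/-- The set `π₀` of connected components of a subset of `GL_n(K)` in the Zariski topology. -/
def zPi0 (S : Set (GL n K)) : Type _ :=
  @ConnectedComponents S (TopologicalSpace.induced Subtype.val (zariskiGL n K))

/-- The tensor space `T^{n,m}(V) = V^{⊗n} ⊗ (V^∨)^{⊗m}`. -/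
abbrev TensorSpace (K V : Type*) [CommRing K] [AddCommGroup V] [Module K V] (n m : ℕ) :=
  TensorProduct K (TensorPower K n V) (TensorPower K m (Module.Dual K V))

/-- The action of an invertible endomorphism `f` (with inverse `finv`) of `V` on
`T^{n,m}(V)`: `f` on each tensor factor `V` and `φ ↦ φ ∘ finv` on each dual factor. -/
def tensorAct {K V : Type*} [CommRing K] [AddCommGroup V] [Module K V]
    (f finv : V →ₗ[K] V) (n m : ℕ) :
    TensorSpace K V n m →ₗ[K] TensorSpace K V n m :=
  TensorProduct.map (PiTensorProduct.map fun _ => f)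
    (PiTensorProduct.map fun _ => finv.dualMap)

/-- The representation of `Γ` on `K^n` induced by a homomorphism `Γ → GL_n(K)`. -/
def glRep {K : Type*} [Field K] {nn : Type*} [Fintype nn] [DecidableEq nn]
    {Γ : Type*} [Group Γ] (ρ : Γ →* GL nn K) : Representation K Γ (nn → K) :=
  ((Matrix.toLinAlgEquiv' (R := K) (n := nn)).toAlgHom.toRingHom.toMonoidHom).comp
    ((Units.coeHom (Matrix nn nn K)).comp ρ)

/-- The inclusion `GL_r(ℤ_ℓ) → GL_r(ℚ_ℓ)`. -/
def glPadicIncl (ℓ r : ℕ) [Fact ℓ.Prime] : GL (Fin r) ℤ_[ℓ] →* GL (Fin r) ℚ_[ℓ] :=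
  Units.map (((PadicInt.Coe.ringHom (p := ℓ)).mapMatrix :
    Matrix (Fin r) (Fin r) ℤ_[ℓ] →+* Matrix (Fin r) (Fin r) ℚ_[ℓ])).toMonoidHom

/-!
Choose `k > 0` with `g ^ k ∈ U` and let `1 + N` be the action of `g` on tensor space. In a basis of
pure tensors, `‖N‖ ≤ c` for the same `c` that bounds `g - 1` and `g⁻¹ - 1`. If `w` is fixed by
`g ^ k`, then `0 = (1 + N) ^ k w - w = k • N w + ∑ j ≥ 1, (k.choose (j + 1)) • N ^ j (N w)`, where
`k.choose (j + 1) = (k / (j + 1)) * (k - 1).choose j`. The condition `c ^ (p - 1) < 1 / p`, which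
describes the disc of convergence of the `p`-adic exponential, says that `c ^ j < |j + 1|` for all
`j ≥ 1`; so `k • N w` strictly dominates every other term unless `N w = 0`.
-/

section Valuation

variable {p : ℕ} [Fact p.Prime]

lemma pow_lt_norm_natCast_succ {c : ℝ} (hc₀ : 0 ≤ c) (hc : c ^ (p - 1) < (p : ℝ)⁻¹) {j : ℕ}
    (hj : j ≠ 0) : c ^ j < ‖((j + 1 : ℕ) : ℚ_[p])‖ := by
  have hp : 2 ≤ p := (Fact.out : p.Prime).two_le
  set v := padicValNat p (j + 1)
  have bernoulli : 1 + v * (p - 1) ≤ j + 1 :=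
    calc 1 + v * (p - 1) ≤ (1 + (p - 1)) ^ v := one_add_le_pow_of_two_add_nonneg (Nat.zero_le _) v
      _ = p ^ v := by rw [Nat.add_sub_cancel' (by lia)]
      _ ≤ j + 1 := Nat.le_of_dvd j.succ_pos pow_padicValNat_dvd
  have norm_eq : ‖((j + 1 : ℕ) : ℚ_[p])‖ = (p : ℝ)⁻¹ ^ v := by
    rw [Padic.norm_eq_zpow_neg_valuation (Nat.cast_ne_zero.2 j.succ_ne_zero),
      Padic.valuation_natCast, _root_.zpow_neg, zpow_natCast, inv_pow]
  refine lt_of_pow_lt_pow_left₀ (p - 1) (norm_nonneg _) ?_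
  calc (c ^ j) ^ (p - 1) = (c ^ (p - 1)) ^ j := pow_right_comm c j (p - 1)
    _ < (p : ℝ)⁻¹ ^ j := pow_lt_pow_left₀ hc (pow_nonneg hc₀ _) hj
    _ ≤ (p : ℝ)⁻¹ ^ (v * (p - 1)) :=
      pow_le_pow_of_le_one (by positivity) (Nat.cast_inv_le_one p) (by lia)
    _ = ‖((j + 1 : ℕ) : ℚ_[p])‖ ^ (p - 1) := by rw [norm_eq, pow_mul]

lemma norm_choose_succ_mul_pow_lt {c : ℝ} (hc₀ : 0 ≤ c) (hc : c ^ (p - 1) < (p : ℝ)⁻¹)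
    {j : ℕ} (hj : j ≠ 0) (k : ℕ) :
    ‖((k + 1).choose (j + 1) : ℚ_[p])‖ * c ^ j < ‖((k + 1 : ℕ) : ℚ_[p])‖ := by
  have hk : 0 < ‖((k + 1 : ℕ) : ℚ_[p])‖ := norm_pos_iff.2 (Nat.cast_ne_zero.2 k.succ_ne_zero)
  obtain hzero | hpos := (norm_nonneg ((k + 1).choose (j + 1) : ℚ_[p])).eq_or_lt
  · rwa [← hzero, zero_mul]
  calc ‖((k + 1).choose (j + 1) : ℚ_[p])‖ * c ^ j
      < ‖((k + 1).choose (j + 1) : ℚ_[p])‖ * ‖((j + 1 : ℕ) : ℚ_[p])‖ :=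
        mul_lt_mul_of_pos_left (pow_lt_norm_natCast_succ hc₀ hc hj) hpos
    _ = ‖((k + 1 : ℕ) : ℚ_[p])‖ * ‖(k.choose j : ℚ_[p])‖ := by
        rw [← norm_mul, ← norm_mul, ← Nat.cast_mul, ← Nat.cast_mul, Nat.add_one_mul_choose_eq]
    _ ≤ ‖((k + 1 : ℕ) : ℚ_[p])‖ :=
        mul_le_of_le_one_right hk.le (IsUltrametricDist.norm_natCast_le_one ℚ_[p] _)

end Valuation

section FixedVectors

lemma add_one_pow_succ_eq {R : Type*} [Semiring R] (x : R) (k : ℕ) :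
    (x + 1) ^ (k + 1) =
      (∑ j ∈ Finset.range k, (k + 1).choose (j + 2) • x ^ (j + 1)) * x + (k + 1) • x + 1 := by
  rw [(Commute.one_right x).add_pow, Finset.sum_range_succ', Finset.sum_range_succ',
    Finset.sum_mul]
  simp only [one_pow, mul_one, pow_zero, Nat.choose_zero_right, Nat.cast_one, zero_add, pow_one,
    Nat.choose_one_right, nsmul_eq_mul, mul_assoc, ← pow_succ, ← Nat.cast_comm]

lemma norm_pow_apply_le {R E : Type*} [Semiring R] [SeminormedAddCommGroup E]
    [Module R E] {N : Module.End R E} {c : ℝ} (hc₀ : 0 ≤ c) (hN : ∀ x, ‖N x‖ ≤ c * ‖x‖)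
    (j : ℕ) (x : E) : ‖(N ^ j) x‖ ≤ c ^ j * ‖x‖ := by
  induction j with
  | zero => simp
  | succ j ih =>
    calc ‖(N ^ (j + 1)) x‖ = ‖N ((N ^ j) x)‖ := by rw [pow_succ', Module.End.mul_apply]
      _ ≤ c * (c ^ j * ‖x‖) := (hN _).trans (mul_le_mul_of_nonneg_left ih hc₀)
      _ = c ^ (j + 1) * ‖x‖ := by ring

variable {p : ℕ} [Fact p.Prime]

lemma apply_eq_zero_of_add_one_pow_apply_eq {R E : Type*} [Semiring R] [NormedAddCommGroup E]
    [NormedSpace ℚ_[p] E] [IsUltrametricDist E] [Module R E] {N : Module.End R E} {c : ℝ}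
    (hc₀ : 0 ≤ c) (hc : c ^ (p - 1) < (p : ℝ)⁻¹) (hN : ∀ x, ‖N x‖ ≤ c * ‖x‖)
    {k : ℕ} (hk : k ≠ 0) {w : E} (hw : ((N + 1) ^ k) w = w) : N w = 0 := by
  obtain ⟨k, rfl⟩ := Nat.exists_eq_succ_of_ne_zero hk
  have norm_nsmul (a : ℕ) (y : E) : ‖a • y‖ = ‖(a : ℚ_[p])‖ * ‖y‖ := by
    rw [← Nat.cast_smul_eq_nsmul ℚ_[p], norm_smul]
  have expansion :
      ∑ j ∈ Finset.range k, (k + 1).choose (j + 2) • (N ^ (j + 1)) (N w) = -((k + 1) • N w) := by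
    rw [add_one_pow_succ_eq] at hw
    rw [eq_neg_iff_add_eq_zero]
    simpa only [LinearMap.add_apply, Module.End.mul_apply, LinearMap.sum_apply,
      LinearMap.smul_apply, Module.End.one_apply, add_eq_right] using hw
  by_contra hNw
  have hNw_pos : 0 < ‖N w‖ := norm_pos_iff.2 hNw
  have term_lt (j : ℕ) :
      ‖(k + 1).choose (j + 2) • (N ^ (j + 1)) (N w)‖ < ‖(k + 1) • N w‖ := by
    rw [norm_nsmul, norm_nsmul]
    calc ‖((k + 1).choose (j + 2) : ℚ_[p])‖ * ‖(N ^ (j + 1)) (N w)‖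
        ≤ ‖((k + 1).choose (j + 2) : ℚ_[p])‖ * (c ^ (j + 1) * ‖N w‖) :=
          mul_le_mul_of_nonneg_left (norm_pow_apply_le hc₀ hN _ _) (norm_nonneg _)
      _ = ‖((k + 1).choose (j + 2) : ℚ_[p])‖ * c ^ (j + 1) * ‖N w‖ := (mul_assoc _ _ _).symm
      _ < ‖((k + 1 : ℕ) : ℚ_[p])‖ * ‖N w‖ := mul_lt_mul_of_pos_right
          (norm_choose_succ_mul_pow_lt hc₀ hc j.succ_ne_zero k) hNw_pos
  obtain ⟨j, -, hj⟩ := IsUltrametricDist.exists_norm_finsetSum_le (Finset.range k)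
    fun j => (k + 1).choose (j + 2) • (N ^ (j + 1)) (N w)
  rw [expansion, norm_neg] at hj
  exact (term_lt j).not_ge hj

end FixedVectors

section SupNorm

open scoped Matrix.Norms.Elementwise

variable {ι κ R : Type*}

lemma norm_mulVec_le [Fintype ι] [Fintype κ] [SeminormedRing R] [IsUltrametricDist R]
    (A : Matrix κ ι R) (x : ι → R) :
    ‖A *ᵥ x‖ ≤ ‖A‖ * ‖x‖ := by
  refine (pi_norm_le_iff_of_nonneg (by positivity)).2 fun i => ?_
  refine IsUltrametricDist.norm_sum_le_of_forall_le_of_nonneg (by positivity) fun j _ => ?_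
  exact (norm_mul_le _ _).trans <| mul_le_mul (norm_entry_le_entrywise_sup_norm A)
    (norm_le_pi_norm x j) (norm_nonneg _) (norm_nonneg _)

section Fixed

variable {p : ℕ} [Fact p.Prime] [Fintype ι] [DecidableEq ι] [NormedCommRing R]
  [NormedAlgebra ℚ_[p] R] [IsUltrametricDist R]

lemma mulVec_eq_of_pow_mulVec_eq {A : Matrix ι ι R} (hA : ‖A - 1‖ ^ (p - 1) < (p : ℝ)⁻¹)
    {k : ℕ} (hk : k ≠ 0) {x : ι → R} (hx : (A ^ k) *ᵥ x = x) : A *ᵥ x = x := by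
  have hN : (A - 1).mulVecLin + 1 = toLin' A := by
    rw [← toLin'_apply', map_sub, toLin'_one, ← Module.End.one_eq_id, sub_add_cancel]
  have key : (A - 1).mulVecLin x = 0 :=
    apply_eq_zero_of_add_one_pow_apply_eq (norm_nonneg _) hA (norm_mulVec_le (A - 1)) hk <| by
      rw [hN, ← toLin'_pow, toLin'_apply, hx]
  rwa [mulVecLin_apply, sub_mulVec, one_mulVec, sub_eq_zero] at key

lemma apply_eq_of_pow_apply_eq {M : Type*} [AddCommMonoid M] [Module R M]
    (b : Module.Basis ι R M) {f : Module.End R M}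
    (hf : ‖LinearMap.toMatrix b b f - 1‖ ^ (p - 1) < (p : ℝ)⁻¹)
    {k : ℕ} (hk : k ≠ 0) {w : M} (hw : (f ^ k) w = w) : f w = w := by
  refine b.equivFun.injective ?_
  simp only [b.equivFun_apply, ← LinearMap.toMatrix_mulVec_repr b b]
  refine mulVec_eq_of_pow_mulVec_eq hf hk ?_
  rw [LinearMap.toMatrix_pow, LinearMap.toMatrix_mulVec_repr, hw]

end Fixed

section Congruence

lemma norm_mul_sub_mul_le [SeminormedCommRing R] [IsUltrametricDist R] {c : ℝ} {x x' y y' : R}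
    (hx : ‖x‖ ≤ 1) (hy' : ‖y'‖ ≤ 1) (hxx' : ‖x - x'‖ ≤ c) (hyy' : ‖y - y'‖ ≤ c) :
    ‖x * y - x' * y'‖ ≤ c :=
  calc ‖x * y - x' * y'‖ = ‖x * (y - y') + (x - x') * y'‖ := by ring_nf
    _ ≤ max ‖x * (y - y')‖ ‖(x - x') * y'‖ := IsUltrametricDist.norm_add_le_max _ _
    _ ≤ max ‖y - y'‖ ‖x - x'‖ := max_le_max
        ((norm_mul_le _ _).trans (mul_le_of_le_one_left (norm_nonneg _) hx))
        ((norm_mul_le _ _).trans (mul_le_of_le_one_right (norm_nonneg _) hy'))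
    _ ≤ c := max_le hyy' hxx'

variable [SeminormedCommRing R] [NormOneClass R]

lemma norm_one_apply_le_one [DecidableEq ι] (i j : ι) : ‖(1 : Matrix ι ι R) i j‖ ≤ 1 := by
  rw [one_apply]
  split_ifs <;> simp

variable [IsUltrametricDist R] {c : ℝ}

lemma norm_prod_sub_prod_le {x y : ι → R} (hc : 0 ≤ c) (hx : ∀ i, ‖x i‖ ≤ 1)
    (hy : ∀ i, ‖y i‖ ≤ 1) (hxy : ∀ i, ‖x i - y i‖ ≤ c) (s : Finset ι) :
    ‖∏ i ∈ s, x i - ∏ i ∈ s, y i‖ ≤ c := by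
  classical
  induction s using Finset.induction_on with
  | empty => simpa using hc
  | insert i s hi ih =>
    rw [Finset.prod_insert hi, Finset.prod_insert hi]
    refine norm_mul_sub_mul_le (hx i) ?_ (hxy i) ih
    exact mem_closedBall_zero_iff.1 <| (Submonoid.unitClosedBall R).prod_mem fun i _ =>
      mem_closedBall_zero_iff.2 (hy i)

variable [Fintype ι] [Fintype κ] [DecidableEq ι] [DecidableEq κ]

lemma norm_apply_le_one_of_norm_sub_one_le {A : Matrix ι ι R} (hA : ‖A - 1‖ ≤ 1) (i j : ι) :
    ‖A i j‖ ≤ 1 :=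
  calc ‖A i j‖ = ‖(A - 1) i j + (1 : Matrix ι ι R) i j‖ := by
        rw [← Matrix.add_apply, sub_add_cancel]
    _ ≤ max ‖(A - 1) i j‖ ‖(1 : Matrix ι ι R) i j‖ := IsUltrametricDist.norm_add_le_max _ _
    _ ≤ 1 := max_le ((norm_entry_le_entrywise_sup_norm _).trans hA) (norm_one_apply_le_one i j)

variable {M N : Type*} [AddCommMonoid M] [Module R M] [AddCommMonoid N] [Module R N]

lemma norm_toMatrix_tensorProduct_map_sub_one_le (b : Module.Basis ι R M)
    (b' : Module.Basis κ R N) {f : Module.End R M} {g : Module.End R N} (hc : c ≤ 1)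
    (hf : ‖LinearMap.toMatrix b b f - 1‖ ≤ c) (hg : ‖LinearMap.toMatrix b' b' g - 1‖ ≤ c) :
    ‖LinearMap.toMatrix (b.tensorProduct b') (b.tensorProduct b') (TensorProduct.map f g) - 1‖
      ≤ c := by
  rw [norm_le_iff ((norm_nonneg _).trans hf)]
  rintro ⟨i, k⟩ ⟨j, l⟩
  have entry : LinearMap.toMatrix (b.tensorProduct b') (b.tensorProduct b')
      (TensorProduct.map f g) (i, k) (j, l) =
        LinearMap.toMatrix b b f i j * LinearMap.toMatrix b' b' g k l := by
    simp only [LinearMap.toMatrix_apply, Module.Basis.tensorProduct_apply,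
      TensorProduct.map_tmul, Module.Basis.tensorProduct_repr_tmul_apply, smul_eq_mul, mul_comm]
  rw [Matrix.sub_apply, entry, ← one_kronecker_one, kronecker_apply]
  exact norm_mul_sub_mul_le (norm_apply_le_one_of_norm_sub_one_le (hf.trans hc) _ _)
    (norm_one_apply_le_one _ _) ((norm_entry_le_entrywise_sup_norm (_ - 1)).trans hf)
    ((norm_entry_le_entrywise_sup_norm (_ - 1)).trans hg)

lemma norm_toMatrix_piTensorProduct_map_sub_one_le (b : Module.Basis ι R M)
    {f : κ → Module.End R M} (hc₀ : 0 ≤ c) (hc : c ≤ 1)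
    (hf : ∀ k, ‖LinearMap.toMatrix b b (f k) - 1‖ ≤ c) :
    ‖LinearMap.toMatrix (Basis.piTensorProduct fun _ : κ => b) (Basis.piTensorProduct fun _ => b)
      (PiTensorProduct.map f) - 1‖ ≤ c := by
  have entry (f : κ → Module.End R M) (i j : κ → ι) :
      LinearMap.toMatrix (Basis.piTensorProduct fun _ : κ => b)
          (Basis.piTensorProduct fun _ => b) (PiTensorProduct.map f) i j =
        ∏ k, LinearMap.toMatrix b b (f k) (i k) (j k) := by
    simp only [LinearMap.toMatrix_apply, Basis.piTensorProduct_apply, PiTensorProduct.map_tprod,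
      Basis.piTensorProduct_repr_tprod_apply]
  have one_entry (i j : κ → ι) :
      (1 : Matrix (κ → ι) (κ → ι) R) i j = ∏ k, (1 : Matrix ι ι R) (i k) (j k) := by
    simp only [one_apply, Finset.prod_ite_zero, Finset.prod_const_one, Finset.mem_univ,
      forall_const, funext_iff]
  rw [norm_le_iff hc₀]
  intro i j
  rw [Matrix.sub_apply, entry, one_entry]
  exact norm_prod_sub_prod_le hc₀
    (fun k => norm_apply_le_one_of_norm_sub_one_le ((hf k).trans hc) _ _)
    (fun k => norm_one_apply_le_one _ _)
    (fun k => (norm_entry_le_entrywise_sup_norm (_ - 1)).trans (hf k)) Finset.univ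

end Congruence

end SupNorm

section Padic

open scoped Matrix.Norms.Elementwise

variable {ℓ : ℕ} [Fact ℓ.Prime]

lemma norm_glPadicIncl_sub_one_le {r : ℕ} {g : GL (Fin r) ℤ_[ℓ]} {s : ℤ_[ℓ]}
    (hg : ∀ i j, ((g : Matrix (Fin r) (Fin r) ℤ_[ℓ]) - 1) i j ∈ Ideal.span {s}) :
    ‖(glPadicIncl ℓ r g : Matrix (Fin r) (Fin r) ℚ_[ℓ]) - 1‖ ≤ ‖s‖ := by
  rw [norm_le_iff (norm_nonneg _)]
  intro i j
  have entry : ((glPadicIncl ℓ r g : Matrix (Fin r) (Fin r) ℚ_[ℓ]) - 1) i j =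
      (((g : Matrix (Fin r) (Fin r) ℤ_[ℓ]) - 1) i j : ℤ_[ℓ]) := by
    have one_entry : ((1 : Matrix (Fin r) (Fin r) ℤ_[ℓ]) i j : ℚ_[ℓ]) =
        (1 : Matrix (Fin r) (Fin r) ℚ_[ℓ]) i j := by
      rw [one_apply, one_apply]
      split_ifs <;> rfl
    rw [Matrix.sub_apply, Matrix.sub_apply, PadicInt.coe_sub, one_entry]
    rfl
  obtain ⟨t, ht⟩ := Ideal.mem_span_singleton'.1 (hg i j)
  calc ‖((glPadicIncl ℓ r g : Matrix (Fin r) (Fin r) ℚ_[ℓ]) - 1) i j‖ = ‖t * s‖ := by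
        rw [entry, ← ht, PadicInt.norm_def]
    _ = ‖t‖ * ‖s‖ := norm_mul t s
    _ ≤ ‖s‖ := mul_le_of_le_one_left (norm_nonneg s) t.norm_le_one

lemma norm_ite_four_pow_lt :
    ‖((if ℓ = 2 then 4 else ℓ : ℕ) : ℤ_[ℓ])‖ ^ (ℓ - 1) < (ℓ : ℝ)⁻¹ := by
  have hℓ : ℓ.Prime := Fact.out
  have hℓ_inv : (ℓ : ℝ)⁻¹ < 1 := inv_lt_one_of_one_lt₀ (by exact_mod_cast hℓ.one_lt)
  have hℓ_inv_pos : 0 < (ℓ : ℝ)⁻¹ := inv_pos.2 (by exact_mod_cast hℓ.pos)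
  split_ifs with h
  · subst h
    rw [show 4 = 2 ^ 2 from rfl, Nat.cast_pow, norm_pow, PadicInt.norm_p]
    norm_num
  · rw [PadicInt.norm_p]
    exact pow_lt_self_of_lt_one₀ hℓ_inv_pos hℓ_inv (by have := hℓ.two_le; lia)

lemma norm_glPadicIncl_sub_one_pow_lt {r : ℕ} {g : GL (Fin r) ℤ_[ℓ]}
    (hg : ∀ i j, ((g : Matrix (Fin r) (Fin r) ℤ_[ℓ]) - 1) i j ∈
      Ideal.span {((if ℓ = 2 then 4 else ℓ : ℕ) : ℤ_[ℓ])}) :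
    ‖(glPadicIncl ℓ r g : Matrix (Fin r) (Fin r) ℚ_[ℓ]) - 1‖ ^ (ℓ - 1) < (ℓ : ℝ)⁻¹ :=
  (pow_le_pow_left₀ (norm_nonneg _) (norm_glPadicIncl_sub_one_le hg) _).trans_lt
    norm_ite_four_pow_lt

end Padic

section TensorSpace

open scoped Matrix.Norms.Elementwise

lemma tensorAct_mul {R V : Type*} [CommRing R] [AddCommGroup V] [Module R V]
    (f f' g g' : Module.End R V) (a b : ℕ) :
    tensorAct (f * g) (g' * f') a b =
      (tensorAct f f' a b * tensorAct g g' a b : Module.End R (TensorSpace R V a b)) := by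
  unfold tensorAct
  rw [← TensorProduct.map_mul, ← PiTensorProduct.map_mul, ← PiTensorProduct.map_mul]
  rfl

lemma tensorAct_one {R V : Type*} [CommRing R] [AddCommGroup V] [Module R V] (a b : ℕ) :
    tensorAct (1 : Module.End R V) (1 : Module.End R V) a b = LinearMap.id := by
  unfold tensorAct
  rw [Module.End.one_eq_id, LinearMap.dualMap_id, PiTensorProduct.map_id, PiTensorProduct.map_id,
    TensorProduct.map_id]

lemma tensorAct_pow {R V : Type*} [CommRing R] [AddCommGroup V] [Module R V]
    (f f' : Module.End R V) (a b k : ℕ) :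
    tensorAct (f ^ k) (f' ^ k) a b =
      (tensorAct f f' a b ^ k : Module.End R (TensorSpace R V a b)) := by
  induction k with
  | zero => exact tensorAct_one a b
  | succ k ih => rw [pow_succ f, pow_succ' f', tensorAct_mul, ih, pow_succ]

variable {ι R V : Type*} [Fintype ι] [DecidableEq ι] [AddCommGroup V]

/-- The basis of `T^{a,b}(V)` formed by the pure tensors in a basis of `V` and its dual basis. -/
def tensorSpaceBasis [CommRing R] [Module R V] (e : Module.Basis ι R V) (a b : ℕ) :
    Module.Basis ((Fin a → ι) × (Fin b → ι)) R (TensorSpace R V a b) :=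
  (Basis.piTensorProduct fun _ => e).tensorProduct (Basis.piTensorProduct fun _ => e.dualBasis)

lemma norm_toMatrix_tensorAct_sub_one_le [SeminormedCommRing R] [NormOneClass R]
    [IsUltrametricDist R] [Module R V] (e : Module.Basis ι R V) {f f' : Module.End R V} {c : ℝ}
    (hc : c ≤ 1) (hf : ‖LinearMap.toMatrix e e f - 1‖ ≤ c)
    (hf' : ‖LinearMap.toMatrix e e f' - 1‖ ≤ c) (a b : ℕ) :
    ‖LinearMap.toMatrix (tensorSpaceBasis e a b) (tensorSpaceBasis e a b) (tensorAct f f' a b) - 1‖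
      ≤ c := by
  have hc₀ : 0 ≤ c := (norm_nonneg _).trans hf
  have hdual : ‖LinearMap.toMatrix e.dualBasis e.dualBasis f'.dualMap - 1‖ ≤ c := by
    rw [LinearMap.dualMap_def, LinearMap.toMatrix_transpose, ← transpose_one, ← transpose_sub,
      norm_transpose]
    exact hf'
  unfold tensorSpaceBasis tensorAct
  exact norm_toMatrix_tensorProduct_map_sub_one_le _ _ hc
    (norm_toMatrix_piTensorProduct_map_sub_one_le e hc₀ hc fun _ => hf)
    (norm_toMatrix_piTensorProduct_map_sub_one_le e.dualBasis hc₀ hc fun _ => hdual)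

lemma tensorAct_apply_eq_of_pow_apply_eq {p : ℕ} [Fact p.Prime] [NormedCommRing R]
    [NormOneClass R] [NormedAlgebra ℚ_[p] R] [IsUltrametricDist R] [Module R V]
    (e : Module.Basis ι R V) {f f' : Module.End R V}
    (hf : ‖LinearMap.toMatrix e e f - 1‖ ^ (p - 1) < (p : ℝ)⁻¹)
    (hf' : ‖LinearMap.toMatrix e e f' - 1‖ ^ (p - 1) < (p : ℝ)⁻¹)
    {a b k : ℕ} (hk : k ≠ 0) {w : TensorSpace R V a b}
    (hw : tensorAct (f ^ k) (f' ^ k) a b w = w) : tensorAct f f' a b w = w := by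
  set c := max ‖LinearMap.toMatrix e e f - 1‖ ‖LinearMap.toMatrix e e f' - 1‖
  have hc₀ : 0 ≤ c := le_max_of_le_left (norm_nonneg _)
  have hc : c ^ (p - 1) < (p : ℝ)⁻¹ := by
    rcases max_choice ‖LinearMap.toMatrix e e f - 1‖ ‖LinearMap.toMatrix e e f' - 1‖ with h | h
    · rwa [← h] at hf
    · rwa [← h] at hf'
  have hp : p - 1 ≠ 0 := Nat.sub_ne_zero_of_lt (Fact.out : p.Prime).one_lt
  have hc₁ : c ≤ 1 := (pow_le_one_iff_of_nonneg hc₀ hp).1 (hc.le.trans (Nat.cast_inv_le_one p))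
  rw [tensorAct_pow] at hw
  refine apply_eq_of_pow_apply_eq (p := p) (tensorSpaceBasis e a b) ?_ hk hw
  exact (pow_le_pow_left₀ (norm_nonneg _) (norm_toMatrix_tensorAct_sub_one_le e hc₁
    (le_max_left _ _) (le_max_right _ _) a b) _).trans_lt hc

theorem tensor_invariants_open_subgroup_general {p : ℕ} [Fact p.Prime] [NormedCommRing R]
    [NormOneClass R] [NormedAlgebra ℚ_[p] R] [IsUltrametricDist R] {Γ : Type*} [Group Γ]
    (ρ : Γ →* GL ι R) (hρ : ∀ g, ‖(ρ g : Matrix ι ι R) - 1‖ ^ (p - 1) < (p : ℝ)⁻¹)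
    {U : Subgroup Γ} (hU : U.index ≠ 0) {a b : ℕ} {w : TensorSpace R (ι → R) a b}
    (hw : ∀ u ∈ U, tensorAct (Matrix.toLin' (ρ u : Matrix ι ι R))
      (Matrix.toLin' ((ρ u)⁻¹ : GL ι R)) a b w = w) (g : Γ) :
    tensorAct (Matrix.toLin' (ρ g : Matrix ι ι R)) (Matrix.toLin' ((ρ g)⁻¹ : GL ι R)) a b w =
      w := by
  obtain ⟨k, hk, -, hgk⟩ := Subgroup.exists_pow_mem_of_index_ne_zero hU g
  have hinv := hρ g⁻¹
  rw [map_inv] at hinv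
  refine tensorAct_apply_eq_of_pow_apply_eq (p := p) (Pi.basisFun R ι) ?_ ?_ hk.ne' ?_
  · rw [← toLin_eq_toLin', LinearMap.toMatrix_toLin]
    exact hρ g
  · rwa [← toLin_eq_toLin', LinearMap.toMatrix_toLin]
  · rw [← toLin'_pow, ← toLin'_pow, ← Units.val_pow_eq_pow_val, ← Units.val_pow_eq_pow_val,
      inv_pow, ← map_pow]
    exact hw _ hgk

end TensorSpace

/-- Let `ℓ` be a prime, `T` a free `ℤ_ℓ`-module of finite rank `r`, and
`P ⊆ GL(T)` a closed subgroup whose Zariski closure `G` in `GL(T ⊗ ℚ_ℓ)` is reductive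
(reductivity being expressed, as is equivalent in characteristic zero, by semisimplicity of
the standard module `T ⊗ ℚ_ℓ` over `P`). Set `s_ℓ = ℓ` for `ℓ ≠ 2` and `s_ℓ = 4` for
`ℓ = 2`. If `P` acts trivially on `T/s_ℓT`, then for all `n, m ≥ 0` and every open finite
index subgroup `U ⊆ P`, the `U`-invariants of `T^{⊗n} ⊗ (T^∨)^{⊗m} ⊗ ℚ_ℓ` coincide with the
`P`-invariants. -/
theorem tensor_invariants_open_subgroup
    (ℓ r : ℕ) [Fact ℓ.Prime]
    (P : Subgroup (GL (Fin r) ℤ_[ℓ])) (hPcl : IsClosed (P : Set (GL (Fin r) ℤ_[ℓ])))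
    (hred : IsSemisimpleModule (MonoidAlgebra ℚ_[ℓ] P)
      (Representation.asModule (glRep ((glPadicIncl ℓ r).comp P.subtype))))
    (htriv : ∀ g ∈ P, ∀ i j : Fin r,
      ((g : Matrix (Fin r) (Fin r) ℤ_[ℓ]) - 1) i j ∈
        Ideal.span {((if ℓ = 2 then 4 else ℓ : ℕ) : ℤ_[ℓ])}) :
    ∀ (n m : ℕ) (U : Subgroup P), IsOpen (U : Set P) → U.index ≠ 0 →
      ∀ w : TensorSpace ℚ_[ℓ] (Fin r → ℚ_[ℓ]) n m,
        (∀ u ∈ U, tensorAct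
            (Matrix.toLin' ((((glPadicIncl ℓ r).comp P.subtype) u : GL (Fin r) ℚ_[ℓ]) :
              Matrix (Fin r) (Fin r) ℚ_[ℓ]))
            (Matrix.toLin' (((((glPadicIncl ℓ r).comp P.subtype) u)⁻¹ : GL (Fin r) ℚ_[ℓ]) :
              Matrix (Fin r) (Fin r) ℚ_[ℓ])) n m w = w) →
        ∀ g : P, tensorAct
            (Matrix.toLin' ((((glPadicIncl ℓ r).comp P.subtype) g : GL (Fin r) ℚ_[ℓ]) :
              Matrix (Fin r) (Fin r) ℚ_[ℓ]))
            (Matrix.toLin' (((((glPadicIncl ℓ r).comp P.subtype) g)⁻¹ : GL (Fin r) ℚ_[ℓ]) :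
              Matrix (Fin r) (Fin r) ℚ_[ℓ])) n m w = w := by
  intro n m U _ hU w hw
  exact tensor_invariants_open_subgroup_general ((glPadicIncl ℓ r).comp P.subtype)
    (fun g => norm_glPadicIncl_sub_one_pow_lt (htriv g g.2)) hU hw
end
end

section
/- Let ℓ be a prime and s_ℓ = ℓ if ℓ ≠ 2, s_ℓ = 4 if ℓ = 2. Let T be a free ℤ_ℓ-module of rank r and Π ⊆ GL(T) a closed subgroup. Then the number of connected components of the Zariski closure G of Π in GL(T ⊗ ℚ_ℓ) is at most |GL_r(ℤ/s_ℓ)|. -/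
noncomputable section
open Matrix

variable {n : Type*} [Fintype n] [DecidableEq n] {K : Type*} [CommRing K]

/-!
Let `e` satisfy `1 < e * (p - 1)`. If `g = 1 + p ^ e A` is a `p`-adic matrix, then
`g ^ N = ∑ k, p ^ (e k) A ^ k (N choose k)`, and since `p ^ (e k) / k!` decays geometrically
(Legendre's formula), the entries of `g ^ N` are the values at `N` of power series converging
absolutely on `ℤ_[p]`. A nonzero such series cannot vanish on the sequence `p ^ N → 0`, so these
functions of `N` form an integral domain; consequently no two nonempty Zariski open subsets of a
curve `{x * g ^ N | N ∈ ℕ}` are disjoint, and such curves are Zariski connected.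

Any two elements `x`, `y` of `P` with the same reduction modulo `p ^ e` lie on the curve
`N ↦ x * (x⁻¹ * y) ^ N`, which stays in their residue class. Hence the Zariski closure of `P` is the
union of the closures of finitely many connected sets, one for each element of the image of `P` in
`GL_n(ℤ / p ^ e)`.
-/

open Filter TopologicalSpace Topology
open scoped PowerSeries

section Cozero

variable {X : Type*}

/-- The topology on `X` generated by the non-vanishing loci of the functions in `A`, the analogue
of the Zariski topology for an arbitrary algebra of functions. -/
abbrev cozeroTopology (A : Subalgebra K (X → K)) : TopologicalSpace X :=
  generateFrom (Function.support '' (A : Set (X → K)))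

theorem isTopologicalBasis_cozeroTopology [IsDomain K] (A : Subalgebra K (X → K)) :
    IsTopologicalBasis (t := cozeroTopology A) (Function.support '' (A : Set (X → K))) := by
  let := cozeroTopology A
  refine isTopologicalBasis_of_subbasis_of_finiteInter rfl
    ⟨⟨1, A.one_mem, Function.support_one K⟩, ?_⟩
  rintro _ ⟨f, hf, rfl⟩ _ ⟨g, hg, rfl⟩
  exact ⟨f * g, A.mul_mem hf hg, Function.support_mul f g⟩

theorem preirreducibleSpace_cozeroTopology [IsDomain K] (A : Subalgebra K (X → K))
    [NoZeroDivisors A] : @PreirreducibleSpace X (cozeroTopology A) := by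
  let := cozeroTopology A
  have hA := isTopologicalBasis_cozeroTopology A
  refine .of_forall_nonempty_inter fun U V hU hV ⟨x, hx⟩ ⟨y, hy⟩ ↦ ?_
  obtain ⟨_, ⟨f, hf, rfl⟩, hfx, hfU⟩ := hA.exists_subset_of_mem_open hx hU
  obtain ⟨_, ⟨g, hg, rfl⟩, hgy, hgV⟩ := hA.exists_subset_of_mem_open hy hV
  have hfg : f * g ≠ 0 := fun h ↦ by
    rcases mul_eq_zero.1 (Subtype.ext h : (⟨f, hf⟩ * ⟨g, hg⟩ : A) = 0) with h | h
    · exact hfx (congrFun (congrArg Subtype.val h) x)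
    · exact hgy (congrFun (congrArg Subtype.val h) y)
  rw [← Function.support_nonempty_iff, Function.support_mul'] at hfg
  exact hfg.mono (Set.inter_subset_inter hfU hgV)

theorem continuous_zariskiMat {m : Type*} [Fintype m] {A : Subalgebra K (X → K)}
    {M : X → Matrix m m K} (hM : ∀ i j, (fun x ↦ M x i j) ∈ A) :
    Continuous[cozeroTopology A, zariskiMat m K] M := by
  let := cozeroTopology A
  refine continuous_generateFrom_iff.2 ?_
  rintro _ ⟨p, rfl⟩
  let entry (q : m × m) (x : X) : K := M x q.1 q.2
  have hp : MvPolynomial.aeval entry p ∈ A := by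
    have : Algebra.adjoin K (Set.range entry) ≤ A :=
      Algebra.adjoin_le (Set.range_subset_iff.2 fun q ↦ hM q.1 q.2)
    rw [Algebra.adjoin_range_eq_range_aeval] at this
    exact this ⟨p, rfl⟩
  refine isOpen_generateFrom_of_mem ⟨_, hp, ?_⟩
  ext x
  have : MvPolynomial.aeval entry p x = MvPolynomial.eval (fun q ↦ M x q.1 q.2) p :=
    DFunLike.congr_fun (MvPolynomial.comp_aeval (f := entry) (Pi.evalAlgHom K _ x)) p
  simp [this]

theorem continuous_zariskiGL {A : Subalgebra K (X → K)} {g : X → GL n K}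
    (hg : ∀ i j, (fun x ↦ g x i j) ∈ A) (hg' : ∀ i j, (fun x ↦ (g x)⁻¹ i j) ∈ A) :
    Continuous[cozeroTopology A, zariskiGL n K] g := by
  let := cozeroTopology A
  let := zariskiMat n K
  exact continuous_induced_rng.2 ((continuous_zariskiMat hg).prodMk (continuous_zariskiMat hg'))

theorem isPreconnected_range_zariskiGL [IsDomain K] (A : Subalgebra K (X → K))
    [NoZeroDivisors A] {g : X → GL n K}
    (hg : ∀ i j, (fun x ↦ g x i j) ∈ A) (hg' : ∀ i j, (fun x ↦ (g x)⁻¹ i j) ∈ A) :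
    @IsPreconnected _ (zariskiGL n K) (Set.range g) := by
  let := cozeroTopology A
  let := zariskiGL n K
  have := preirreducibleSpace_cozeroTopology A
  exact isPreconnected_range (continuous_zariskiGL hg hg')

theorem mul_entry_mem {m : Type*} [Fintype m] {A : Subalgebra K (X → K)}
    {M N : X → Matrix m m K}
    (hM : ∀ i j, (fun x ↦ M x i j) ∈ A) (hN : ∀ i j, (fun x ↦ N x i j) ∈ A) (i j : m) :
    (fun x ↦ (M x * N x) i j) ∈ A := by
  convert sum_mem fun k (_ : k ∈ Finset.univ) ↦ mul_mem (hM i k) (hN k j) using 1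
  ext x
  simp [Matrix.mul_apply]

end Cozero

section Components

theorem card_connectedComponents_closure_iUnion_le {ι Y : Type*} [Finite ι] [TopologicalSpace Y]
    {C : ι → Set Y} (hC : ∀ i, IsConnected (C i)) :
    Nat.card (ConnectedComponents (closure (⋃ i, C i))) ≤ Nat.card ι := by
  have hsub i : closure (C i) ⊆ closure (⋃ i, C i) := closure_mono (Set.subset_iUnion C i)
  choose c hc using fun i ↦ (hC i).nonempty
  have hc' i : c i ∈ closure (C i) := subset_closure (hc i)
  refine Nat.card_le_card_of_surjective
    (fun i ↦ ((⟨c i, hsub i (hc' i)⟩ : closure (⋃ i, C i)) : ConnectedComponents _)) fun y ↦ ?_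
  obtain ⟨⟨x, hx⟩, rfl⟩ := ConnectedComponents.surjective_coe y
  obtain ⟨i, hi⟩ := Set.mem_iUnion.1 (closure_iUnion_of_finite (f := C) ▸ hx)
  have hpre : IsPreconnected ((↑) ⁻¹' closure (C i) : Set (closure (⋃ i, C i))) := by
    rw [← IsInducing.subtypeVal.isPreconnected_image, Subtype.image_preimage_coe,
      Set.inter_eq_right.2 (hsub i)]
    exact (hC i).isPreconnected.closure
  exact ⟨i, ConnectedComponents.coe_eq_coe'.2 (hpre.subset_connectedComponent hi (hc' i))⟩

end Components

section AbsolutelyConvergent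

variable {𝕜 : Type*}

/-- The power series whose coefficients are absolutely summable, that is, those converging
absolutely on the closed unit disc. -/
def wienerAlgebra (𝕜 : Type*) [NormedField 𝕜] : Subalgebra 𝕜 𝕜⟦X⟧ where
  carrier := {F | Summable fun k ↦ ‖F.coeff k‖}
  mul_mem' {F G} hF hG := by
    have := summable_norm_sum_mul_antidiagonal_of_summable_norm
      (f := fun k ↦ F.coeff k) (g := fun k ↦ G.coeff k) hF hG
    simpa only [Set.mem_ofPred_eq, PowerSeries.coeff_mul] using this
  add_mem' {F G} hF hG := by
    refine .of_nonneg_of_le (g := fun k ↦ ‖(F + G).coeff k‖) (fun _ ↦ norm_nonneg _)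
      (fun k ↦ ?_) (Summable.add hF hG)
    rw [map_add]
    exact norm_add_le _ _
  algebraMap_mem' c := by
    refine summable_of_ne_finset_zero (f := fun k ↦ ‖(algebraMap 𝕜 𝕜⟦X⟧ c).coeff k‖) (s := {0})
      fun k hk ↦ ?_
    rw [Finset.mem_singleton] at hk
    simp [PowerSeries.coeff_C, hk]

namespace wienerAlgebra

theorem mem_iff [NormedField 𝕜] {F : 𝕜⟦X⟧} :
    F ∈ wienerAlgebra 𝕜 ↔ Summable fun k ↦ ‖F.coeff k‖ :=
  Iff.rfl

theorem summable_norm_coeff_mul_pow [NormedField 𝕜] (F : wienerAlgebra 𝕜) {x : 𝕜} (hx : ‖x‖ ≤ 1) :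
    Summable fun k ↦ ‖F.1.coeff k * x ^ k‖ := by
  refine .of_nonneg_of_le (fun _ ↦ norm_nonneg _) (fun k ↦ ?_) F.2
  rw [norm_mul, norm_pow]
  exact mul_le_of_le_one_right (norm_nonneg _) (pow_le_one₀ (norm_nonneg _) hx)

/-- Evaluation of an absolutely convergent power series at a point of the closed unit disc. -/
def eval [NormedField 𝕜] [CompleteSpace 𝕜] (x : 𝕜) (hx : ‖x‖ ≤ 1) : wienerAlgebra 𝕜 →ₐ[𝕜] 𝕜 where
  toFun F := ∑' k, F.1.coeff k * x ^ k
  map_one' := by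
    rw [tsum_eq_single 0 fun k hk ↦ by simp [PowerSeries.coeff_one, hk]]
    simp
  map_zero' := by simp
  map_mul' F G := by
    rw [tsum_mul_tsum_eq_tsum_sum_antidiagonal_of_summable_norm
      (summable_norm_coeff_mul_pow F hx) (summable_norm_coeff_mul_pow G hx)]
    refine tsum_congr fun k ↦ ?_
    rw [MulMemClass.coe_mul, PowerSeries.coeff_mul, Finset.sum_mul]
    refine Finset.sum_congr rfl fun ij hij ↦ ?_
    rw [← Finset.HasAntidiagonal.mem_antidiagonal.1 hij, pow_add, mul_mul_mul_comm]
  map_add' F G := by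
    rw [← (summable_norm_coeff_mul_pow F hx).of_norm.tsum_add
      (summable_norm_coeff_mul_pow G hx).of_norm]
    simp [add_mul]
  commutes' c := by
    rw [tsum_eq_single 0 fun k hk ↦ by simp [PowerSeries.coeff_C, hk]]
    simp

theorem eval_apply [NormedField 𝕜] [CompleteSpace 𝕜] {x : 𝕜} (hx : ‖x‖ ≤ 1) (F : wienerAlgebra 𝕜) :
    eval x hx F = ∑' k, F.1.coeff k * x ^ k :=
  rfl

theorem eq_zero_of_frequently_eval_eq_zero [NontriviallyNormedField 𝕜] [CompleteSpace 𝕜]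
    {F : wienerAlgebra 𝕜} (hF : ∃ᶠ x in 𝓝[≠] 0, ∃ hx : ‖x‖ ≤ 1, eval x hx F = 0) : F = 0 := by
  let p := FormalMultilinearSeries.ofScalars 𝕜 fun k ↦ F.1.coeff k
  have hp : 0 < p.radius := by
    refine one_pos.trans_le (p.le_radius_of_summable_norm (r := 1) ?_)
    simpa [p, FormalMultilinearSeries.ofScalars_norm] using mem_iff.1 F.2
  have hp0 : p = 0 := by
    by_contra h
    refine hF (((p.hasFPowerSeriesOnBall hp).hasFPowerSeriesAt.locally_ne_zero h).mono ?_)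
    rintro x hx0 ⟨hx, h0⟩
    apply hx0
    rw [← h0, eval_apply]
    exact tsum_congr fun k ↦ by simp [p, mul_comm]
  ext k
  exact congrFun ((FormalMultilinearSeries.ofScalars_series_eq_zero 𝕜).1 hp0) k

end wienerAlgebra

variable {X : Type*}

/-- The functions on `X` obtained by substituting `u : X → 𝕜`, with values in the closed unit disc,
into absolutely convergent power series. -/
def analyticFunctions [NormedField 𝕜] [CompleteSpace 𝕜] (u : X → 𝕜) (hu : ∀ x, ‖u x‖ ≤ 1) :
    Subalgebra 𝕜 (X → 𝕜) :=
  (AlgHom.pi fun x ↦ wienerAlgebra.eval (u x) (hu x)).range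

theorem noZeroDivisors_analyticFunctions [NontriviallyNormedField 𝕜] [CompleteSpace 𝕜] {u : X → 𝕜}
    (hu : ∀ x, ‖u x‖ ≤ 1) (h0 : ∃ᶠ z in 𝓝[≠] 0, z ∈ Set.range u) :
    NoZeroDivisors (analyticFunctions u hu) := by
  refine (AlgEquiv.ofInjective _ ?_).symm.injective.noZeroDivisors _ (map_zero _) (map_mul _)
  refine (injective_iff_map_eq_zero _).2 fun F hF ↦
    wienerAlgebra.eq_zero_of_frequently_eval_eq_zero (h0.mono ?_)
  rintro _ ⟨x, rfl⟩
  exact ⟨hu x, congrFun hF x⟩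

theorem tsum_eval_mem_analyticFunctions [NormedField 𝕜] [CompleteSpace 𝕜] {ι : Type*} {u : X → 𝕜}
    (hu : ∀ x, ‖u x‖ ≤ 1) {P : ι → Polynomial 𝕜}
    (hP : Summable fun q : ι × ℕ ↦ ‖(P q.1).coeff q.2‖) :
    (fun x ↦ ∑' i, (P i).eval (u x)) ∈ analyticFunctions u hu := by
  have hcoeff : Summable fun k ↦ ‖∑' i, (P i).coeff k‖ :=
    .of_nonneg_of_le (fun _ ↦ norm_nonneg _)
      (fun k ↦ norm_tsum_le_tsum_norm (hP.prod_symm.prod_factor k)) hP.prod_symm.prod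
  refine ⟨⟨PowerSeries.mk fun k ↦ ∑' i, (P i).coeff k, by
    simpa [wienerAlgebra.mem_iff] using hcoeff⟩, ?_⟩
  ext x
  have hsum : Summable (Function.uncurry fun i k ↦ (P i).coeff k * u x ^ k) := by
    refine .of_norm_bounded hP fun q ↦ ?_
    rw [Function.uncurry_def, norm_mul, norm_pow]
    exact mul_le_of_le_one_right (norm_nonneg _) (pow_le_one₀ (norm_nonneg _) (hu x))
  calc ∑' k, (PowerSeries.mk fun k ↦ ∑' i, (P i).coeff k).coeff k * u x ^ k
      = ∑' k, ∑' i, (P i).coeff k * u x ^ k := by simp only [PowerSeries.coeff_mk, tsum_mul_right]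
    _ = ∑' i, ∑' k, (P i).coeff k * u x ^ k := hsum.tsum_comm
    _ = ∑' i, (P i).eval (u x) := tsum_congr fun i ↦ by
      rw [Polynomial.eval_eq_sum, Polynomial.sum]
      exact tsum_eq_sum fun k hk ↦ by rw [Polynomial.notMem_support_iff.1 hk, zero_mul]

end AbsolutelyConvergent

section Padic

variable {p : ℕ} [Fact p.Prime]

/-- The sequences interpolated by an absolutely convergent power series on `ℤ_[p]`. -/
abbrev analyticSequences (p : ℕ) [Fact p.Prime] : Subalgebra ℚ_[p] (ℕ → ℚ_[p]) :=
  analyticFunctions (fun m : ℕ ↦ (m : ℚ_[p])) (IsUltrametricDist.norm_natCast_le_one ℚ_[p])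

theorem frequently_mem_range_natCast_padic :
    ∃ᶠ z in 𝓝[≠] (0 : ℚ_[p]), z ∈ Set.range (Nat.cast : ℕ → ℚ_[p]) := by
  have hp : (p : ℚ_[p]) ≠ 0 := by exact_mod_cast (Fact.out : p.Prime).ne_zero
  have hlim : Tendsto (fun N : ℕ ↦ (p : ℚ_[p]) ^ N) atTop (𝓝[≠] 0) :=
    tendsto_nhdsWithin_iff.2 ⟨tendsto_pow_atTop_nhds_zero_of_norm_lt_one Padic.norm_p_lt_one,
      .of_forall fun N ↦ pow_ne_zero N hp⟩
  exact hlim.frequently (.of_forall fun N ↦ ⟨p ^ N, by push_cast; rfl⟩)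

instance noZeroDivisors_analyticSequences : NoZeroDivisors (analyticSequences p) :=
  noZeroDivisors_analyticFunctions _ frequently_mem_range_natCast_padic

theorem norm_pow_div_factorial_pow_le {e : ℕ} (he : 1 < e * (p - 1)) (k : ℕ) :
    ‖(p : ℚ_[p]) ^ (e * k) / k.factorial‖ ^ (p - 1) ≤ (p : ℝ)⁻¹ ^ k := by
  have hp : 1 < (p : ℝ) := by exact_mod_cast (Fact.out : p.Prime).one_lt
  have hk : (k.factorial : ℚ_[p]) ≠ 0 := by exact_mod_cast k.factorial_ne_zero
  have hval : k + (p - 1) * padicValNat p k.factorial ≤ e * k * (p - 1) := by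
    have := sub_one_mul_padicValNat_factorial (p := p) k
    nlinarith [Nat.sub_le k (p.digits k).sum, Nat.mul_le_mul_right k he]
  rw [norm_div, Padic.norm_p_pow, Padic.norm_eq_zpow_neg_valuation hk, Padic.valuation_natCast,
    ← zpow_sub₀ (by positivity), ← zpow_natCast, ← _root_.zpow_mul, inv_pow, ← zpow_natCast,
    ← _root_.zpow_neg]
  refine zpow_le_zpow_right₀ hp.le ?_
  zify at hval
  push_cast at hval ⊢
  linarith

theorem exists_norm_pow_div_factorial_le {e : ℕ} (he : 1 < e * (p - 1)) :
    ∃ ρ : ℝ, 0 ≤ ρ ∧ ρ < 1 ∧ ∀ k : ℕ, ‖(p : ℚ_[p]) ^ (e * k) / k.factorial‖ ≤ ρ ^ k := by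
  have hp : 1 < p := (Fact.out : p.Prime).one_lt
  have hp1 : p - 1 ≠ 0 := by omega
  have hinv : (p : ℝ)⁻¹ < 1 := inv_lt_one_of_one_lt₀ (by exact_mod_cast hp)
  refine ⟨(p : ℝ)⁻¹ ^ ((p - 1 : ℕ) : ℝ)⁻¹, by positivity,
    Real.rpow_lt_one (by positivity) hinv (by positivity), fun k ↦ ?_⟩
  refine le_of_pow_le_pow_left₀ hp1 (by positivity) ?_
  rw [pow_right_comm, Real.rpow_inv_natCast_pow (by positivity) hp1]
  exact norm_pow_div_factorial_pow_le he k

theorem norm_coeff_descPochhammer_le_one (k j : ℕ) :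
    ‖(descPochhammer ℚ_[p] k).coeff j‖ ≤ 1 := by
  rw [← descPochhammer_map (Int.castRingHom ℚ_[p]), Polynomial.coeff_map]
  exact Padic.norm_int_le_one _

theorem summable_coeff_smul_descPochhammer {b : ℕ → ℚ_[p]} {ρ : ℝ} (h0 : 0 ≤ ρ) (h1 : ρ < 1)
    (hb : ∀ k, ‖b k‖ ≤ ρ ^ k) :
    Summable fun q : ℕ × ℕ ↦ ‖(b q.1 • descPochhammer ℚ_[p] q.1).coeff q.2‖ := by
  have hzero : ∀ k, ∀ j ∉ Finset.range (k + 1), ‖(b k • descPochhammer ℚ_[p] k).coeff j‖ = 0 := by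
    intro k j hj
    rw [Polynomial.coeff_smul, Polynomial.coeff_eq_zero_of_natDegree_lt, smul_zero, norm_zero]
    rw [descPochhammer_natDegree]
    simpa using hj
  refine (summable_prod_of_nonneg fun _ ↦ norm_nonneg _).2
    ⟨fun k ↦ summable_of_ne_finset_zero (hzero k), ?_⟩
  have hgeom : Summable fun k : ℕ ↦ ((k + 1 : ℕ) : ℝ) * ρ ^ k := by
    have := summable_pow_mul_geometric_of_norm_lt_one 1 (by rwa [Real.norm_of_nonneg h0])
    simpa [add_mul] using this.add (summable_geometric_of_lt_one h0 h1)
  refine .of_nonneg_of_le (fun k ↦ tsum_nonneg fun j ↦ norm_nonneg _) (fun k ↦ ?_) hgeom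
  rw [tsum_eq_sum (hzero k), ← nsmul_eq_mul]
  refine (Finset.sum_le_card_nsmul _ _ _ fun j _ ↦ ?_).trans_eq (by rw [Finset.card_range])
  rw [Polynomial.coeff_smul, norm_smul]
  exact (mul_le_of_le_one_right (norm_nonneg _) (norm_coeff_descPochhammer_le_one k j)).trans (hb k)

theorem sum_choose_mem_analyticSequences {e : ℕ} (he : 1 < e * (p - 1)) {c : ℕ → ℚ_[p]}
    (hc : ∀ k, ‖c k‖ ≤ 1) :
    (fun m : ℕ ↦ ∑ k ∈ Finset.range (m + 1), (p : ℚ_[p]) ^ (e * k) * c k * m.choose k) ∈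
      analyticSequences p := by
  obtain ⟨ρ, h0, h1, hρ⟩ := exists_norm_pow_div_factorial_le he
  let b (k : ℕ) : ℚ_[p] := (p : ℚ_[p]) ^ (e * k) / k.factorial * c k
  have hb (k : ℕ) : ‖b k‖ ≤ ρ ^ k := by
    rw [norm_mul]
    exact (mul_le_of_le_one_right (norm_nonneg _) (hc k)).trans (hρ k)
  have hterm (m k : ℕ) : (b k • descPochhammer ℚ_[p] k).eval (m : ℚ_[p]) =
      (p : ℚ_[p]) ^ (e * k) * c k * m.choose k := by
    have hk : (k.factorial : ℚ_[p]) ≠ 0 := by exact_mod_cast k.factorial_ne_zero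
    rw [Polynomial.eval_smul, descPochhammer_eval_eq_descFactorial,
      Nat.descFactorial_eq_factorial_mul_choose, smul_eq_mul]
    push_cast
    simp only [b]
    field_simp
  have hsum (m : ℕ) : ∑ k ∈ Finset.range (m + 1), (p : ℚ_[p]) ^ (e * k) * c k * m.choose k =
      ∑' k, (b k • descPochhammer ℚ_[p] k).eval (m : ℚ_[p]) := by
    simp only [hterm]
    refine (tsum_eq_sum fun k hk ↦ ?_).symm
    rw [Nat.choose_eq_zero_of_lt (by simpa using hk), Nat.cast_zero, mul_zero]
  simp only [hsum]
  exact tsum_eval_mem_analyticFunctions _ (summable_coeff_smul_descPochhammer h0 h1 hb)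

theorem one_add_smul_pow_entry_mem {e : ℕ} (he : 1 < e * (p - 1)) (A : Matrix n n ℤ_[p]) (i j : n) :
    (fun N : ℕ ↦ (((1 + (p : ℤ_[p]) ^ e • A) ^ N) i j : ℚ_[p])) ∈ analyticSequences p := by
  convert sum_choose_mem_analyticSequences he (c := fun k ↦ ((A ^ k) i j : ℚ_[p]))
    (fun k ↦ PadicInt.norm_le_one _) using 2 with N
  rw [add_comm, (Commute.one_right _).add_pow, Matrix.sum_apply, PadicInt.coe_sum]
  refine Finset.sum_congr rfl fun k _ ↦ ?_
  rw [one_pow, mul_one, smul_pow, ← pow_mul, ← nsmul_eq_mul', Matrix.smul_apply,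
    Matrix.smul_apply, nsmul_eq_mul, smul_eq_mul]
  push_cast
  ring

theorem exists_eq_one_add_pow_smul {e : ℕ} {M : Matrix n n ℤ_[p]}
    (hM : (PadicInt.toZModPow e).mapMatrix M = 1) :
    ∃ A : Matrix n n ℤ_[p], M = 1 + (p : ℤ_[p]) ^ e • A := by
  have hdvd (i j : n) : (p : ℤ_[p]) ^ e ∣ (M - 1) i j := by
    rw [← Ideal.mem_span_singleton, ← PadicInt.ker_toZModPow, RingHom.mem_ker]
    change (PadicInt.toZModPow e).mapMatrix (M - 1) i j = 0
    rw [map_sub, hM, map_one, sub_self, Matrix.zero_apply]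
  choose A hA using hdvd
  refine ⟨Matrix.of A, ?_⟩
  rw [← sub_eq_iff_eq_add']
  ext1 i j
  exact hA i j

end Padic

section Reduction

variable {p : ℕ} [Fact p.Prime] {e : ℕ}

theorem pow_entry_mem_analyticSequences (he : 1 < e * (p - 1)) {g : GL n ℤ_[p]}
    (hg : GeneralLinearGroup.map (PadicInt.toZModPow e) g = 1) (i j : n) :
    (fun N : ℕ ↦ ((g ^ N) i j : ℚ_[p])) ∈ analyticSequences p := by
  obtain ⟨A, hA⟩ := exists_eq_one_add_pow_smul (M := g.1) (congrArg Units.val hg)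
  simp only [Units.val_pow_eq_pow_val, hA]
  exact one_add_smul_pow_entry_mem he A i j

theorem isPreconnected_range_map_mul_pow (he : 1 < e * (p - 1)) (x : GL n ℤ_[p]) {g : GL n ℤ_[p]}
    (hg : GeneralLinearGroup.map (PadicInt.toZModPow e) g = 1) :
    @IsPreconnected _ (zariskiGL n ℚ_[p])
      (Set.range fun N : ℕ ↦ GeneralLinearGroup.map PadicInt.Coe.ringHom (x * g ^ N)) := by
  have hconst (y : GL n ℚ_[p]) (i j : n) : (fun _ : ℕ ↦ y i j) ∈ analyticSequences p :=
    (analyticSequences p).algebraMap_mem (y i j)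
  have hpow {h : GL n ℤ_[p]} (hh : GeneralLinearGroup.map (PadicInt.toZModPow e) h = 1)
      (i j : n) : (fun N : ℕ ↦ GeneralLinearGroup.map PadicInt.Coe.ringHom (h ^ N) i j) ∈
        analyticSequences p :=
    pow_entry_mem_analyticSequences he hh i j
  refine isPreconnected_range_zariskiGL (analyticSequences p) (fun i j ↦ ?_) fun i j ↦ ?_
  · simp only [map_mul, Units.val_mul]
    exact mul_entry_mem (hconst _) (hpow hg) i j
  · simp only [map_mul, map_pow, _root_.mul_inv_rev, ← inv_pow, ← map_inv]
    simp only [← map_pow, Units.val_mul]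
    exact mul_entry_mem (hpow (by rw [map_inv, hg, inv_one])) (hconst _) i j

theorem isConnected_map_fiber (he : 1 < e * (p - 1)) {P : Subgroup (GL n ℤ_[p])}
    {y : GL n (ZMod (p ^ e))} (hy : y ∈ P.map (GeneralLinearGroup.map (PadicInt.toZModPow e))) :
    @IsConnected _ (zariskiGL n ℚ_[p]) (GeneralLinearGroup.map PadicInt.Coe.ringHom ''
      {x | x ∈ P ∧ GeneralLinearGroup.map (PadicInt.toZModPow e) x = y}) := by
  let := zariskiGL n ℚ_[p]
  obtain ⟨x₀, hx₀, rfl⟩ := hy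
  refine ⟨⟨_, x₀, ⟨hx₀, rfl⟩, rfl⟩, isPreconnected_of_forall
    (GeneralLinearGroup.map PadicInt.Coe.ringHom x₀) ?_⟩
  rintro _ ⟨x, ⟨hx, hxx₀⟩, rfl⟩
  have hg : GeneralLinearGroup.map (PadicInt.toZModPow e) (x₀⁻¹ * x) = 1 := by
    rw [map_mul, map_inv, hxx₀, inv_mul_cancel]
  refine ⟨Set.range fun N : ℕ ↦ GeneralLinearGroup.map PadicInt.Coe.ringHom (x₀ * (x₀⁻¹ * x) ^ N),
    ?_, ⟨0, ?_⟩, ⟨1, ?_⟩, isPreconnected_range_map_mul_pow he x₀ hg⟩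
  · rintro _ ⟨N, rfl⟩
    refine ⟨_, ⟨P.mul_mem hx₀ (P.pow_mem (P.mul_mem (P.inv_mem hx₀) hx) N), ?_⟩, rfl⟩
    rw [map_mul, map_pow, hg, one_pow, mul_one]
  · simp only [pow_zero, mul_one]
  · simp only [pow_one, mul_inv_cancel_left]

theorem card_zPi0_zClosure_map_le (he : 1 < e * (p - 1)) (P : Subgroup (GL n ℤ_[p])) :
    Nat.card (zPi0 (zClosure (GeneralLinearGroup.map PadicInt.Coe.ringHom ''
      (P : Set (GL n ℤ_[p]))))) ≤
      Nat.card (P.map (GeneralLinearGroup.map (n := n) (PadicInt.toZModPow e))) := by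
  let := zariskiGL n ℚ_[p]
  have : NeZero (p ^ e) := ⟨pow_ne_zero e (Fact.out : p.Prime).ne_zero⟩
  have hcover : GeneralLinearGroup.map PadicInt.Coe.ringHom '' (P : Set (GL n ℤ_[p])) =
      ⋃ y : P.map (GeneralLinearGroup.map (PadicInt.toZModPow e)),
        GeneralLinearGroup.map PadicInt.Coe.ringHom ''
          {x | x ∈ P ∧ GeneralLinearGroup.map (PadicInt.toZModPow e) x = y} := by
    rw [← Set.image_iUnion]
    congr 1
    ext x
    simpa using fun hx : x ∈ P ↦ Subgroup.mem_map_of_mem _ hx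
  rw [hcover]
  exact card_connectedComponents_closure_iUnion_le fun y ↦ isConnected_map_fiber he y.2

end Reduction

theorem card_pi0_zariski_closure_le_general (ℓ : ℕ) [Fact ℓ.Prime] (P : Subgroup (GL n ℤ_[ℓ])) :
    Nat.card (zPi0 (zClosure (GeneralLinearGroup.map PadicInt.Coe.ringHom ''
      (P : Set (GL n ℤ_[ℓ]))))) ≤ Nat.card (GL n (ZMod (if ℓ = 2 then 4 else ℓ))) := by
  have hℓ : 2 ≤ ℓ := (Fact.out : ℓ.Prime).two_le
  obtain ⟨e, he, hpow⟩ : ∃ e, 1 < e * (ℓ - 1) ∧ ℓ ^ e = if ℓ = 2 then 4 else ℓ := by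
    split_ifs with h2
    · exact ⟨2, by omega, by rw [h2]; norm_num⟩
    · exact ⟨1, by omega, pow_one ℓ⟩
  have : NeZero (ℓ ^ e) := ⟨by positivity⟩
  rw [← hpow]
  exact (card_zPi0_zClosure_map_le he P).trans (Subgroup.card_le_card_group _)

/-- Let `ℓ` be a prime, `s_ℓ = ℓ` if `ℓ ≠ 2` and `s_ℓ = 4` if `ℓ = 2`, `T` a
free `ℤ_ℓ`-module of rank `r`, and `P ⊆ GL(T)` a closed subgroup. Then the number of
connected components of the Zariski closure `G` of `P` in `GL(T ⊗ ℚ_ℓ) = GL_r(ℚ_ℓ)` is at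
most `|GL_r(ℤ/s_ℓ)|`. -/
theorem card_pi0_zariski_closure_le (ℓ r : ℕ) [Fact ℓ.Prime]
    (P : Subgroup (GL (Fin r) ℤ_[ℓ])) (hP : IsClosed (P : Set (GL (Fin r) ℤ_[ℓ]))) :
    Nat.card (zPi0 (zClosure
      ((Units.map (((PadicInt.Coe.ringHom (p := ℓ)).mapMatrix :
          Matrix (Fin r) (Fin r) ℤ_[ℓ] →+* Matrix (Fin r) (Fin r) ℚ_[ℓ])).toMonoidHom :
        GL (Fin r) ℤ_[ℓ] →* GL (Fin r) ℚ_[ℓ]) '' (P : Set (GL (Fin r) ℤ_[ℓ]))))) ≤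
      Nat.card (GL (Fin r) (ZMod (if ℓ = 2 then 4 else ℓ))) :=
  card_pi0_zariski_closure_le_general ℓ P
end
end

section
/- Let G be a reductive algebraic group over a field of characteristic zero with identity component G⁰. If for every finite-dimensional representation W of the ambient general linear group containing G one has W^G = W^{G⁰}, then G is connected. -/
noncomputable section
open Matrix

variable {n : Type*} [Fintype n] [DecidableEq n] {K : Type*} [CommRing K]

/-- The standard (inclusion) representation of a subgroup `G ⊆ GL_n(K)` on `K^n`. -/
noncomputable def stdRepOf {K : Type*} [Field K] {nn : Type*} [Fintype nn] [DecidableEq nn]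
    (G : Subgroup (GL nn K)) : Representation K G (nn → K) :=
  ((Matrix.toLinAlgEquiv' (R := K) (n := nn)).toAlgHom.toRingHom.toMonoidHom).comp
    ((Units.coeHom (Matrix nn nn K)).comp G.subtype)

/-!
Let `G⁰` be the component of `1` in `G`. The functions defined by polynomials in the entries of `g`
and `g⁻¹` separate the connected components of `G`, so one of them, `f`, is the indicator function
of `G⁰` on `G`. As `f ^ 2 = f` on `G`, its derivatives along the Lie algebra `𝔤` of `G` vanish
on `G`.

Since `G` acts semisimply on the standard module, so does `𝔤`; hence the quotient of `𝔤` by its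
centre has trivial radical and the centre acts by semisimple endomorphisms, on the polynomials of
bounded degree as well. Weyl's argument with the Casimir operator then produces a polynomial `w`
which on `G` is a nonzero multiple of `f` and which is killed by `𝔤` identically, not only on `G`.

In characteristic zero a polynomial killed by `𝔤` is algebraic over the constants on `G`, hence
takes finitely many values there. Applied to the left translates of `w`, this shows that `w` is
fixed by the right translations by `G⁰`. If `G` fixes `w` too, then `f` is constant on `G`, so
`G = G⁰`.
-/

namespace LarsenPink

open LieAlgebra LieModule

attribute [local instance] LieRing.ofAssociativeRing

section TraceCriterion

open Polynomial

variable {k V : Type*} [Field k] [CharZero k] [AddCommGroup V] [Module k V]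
  [FiniteDimensional k V]

/- The projection onto the nonzero generalized eigenspaces of `x` is a polynomial in `x` divisible
by `x`, so its trace, which is its rank, vanishes. -/
theorem isNilpotent_of_trace_mul_aeval_eq_zero (x : Module.End k V)
    (h : ∀ p : k[X], LinearMap.trace k V (x * aeval x p) = 0) : IsNilpotent x := by
  obtain ⟨q, hq, hq0⟩ := exists_eq_pow_rootMultiplicity_mul_and_not_dvd _
    (minpoly.ne_zero (Algebra.IsIntegral.isIntegral x)) (0 : k)
  set n := (minpoly k x).rootMultiplicity 0
  simp only [map_zero, sub_zero] at hq hq0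
  obtain ⟨u, v, huv⟩ : IsCoprime (X ^ (n + 1)) q :=
    ((irreducible_X.coprime_iff_not_dvd).mpr hq0).pow_left
  have hXq : aeval x (X ^ n * q) = 0 := hq ▸ minpoly.aeval k x
  have hdvd {p : k[X]} (hp : X ^ n * q ∣ p) : aeval x p = 0 := by
    obtain ⟨r, rfl⟩ := hp
    rw [map_mul, hXq, zero_mul]
  set e := aeval x (u * X ^ (n + 1)) with he
  have he_idem : IsIdempotentElem e := by
    rw [IsIdempotentElem, ← sub_eq_zero, he, ← map_mul, ← map_sub]
    exact hdvd ⟨-(u * v * X), by linear_combination (u * X ^ (n + 1)) * huv⟩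
  have he_trace : LinearMap.trace k V e = 0 := by
    rw [he, show u * X ^ (n + 1) = X * (X ^ n * u) by ring, map_mul, aeval_X]
    exact h _
  have he_zero : e = 0 := LinearMap.IsIdempotentElem.eq_zero_of_trace_eq_zero he_idem he_trace
  refine ⟨n + 1, ?_⟩
  calc x ^ (n + 1) = aeval x (X ^ (n + 1) * (u * X ^ (n + 1)) + X ^ (n + 1) * (v * q)) := by
        rw [← mul_add, huv]; simp
    _ = 0 := by
        rw [map_add, map_mul, ← he, he_zero, mul_zero, zero_add]
        exact hdvd ⟨X * v, by ring⟩

end TraceCriterion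

section KernelOfCommuting

variable {R L M : Type*} [CommRing R] [LieRing L] [LieAlgebra R L] [AddCommGroup M] [Module R M]
  [LieRingModule L M] [LieModule R L M]

/-- The kernel of an endomorphism commuting with the action of `L`, as a Lie submodule. -/
def kerOfCommute (C : Module.End R M) (hC : ∀ x : L, Commute (toEnd R L M x) C) :
    LieSubmodule R L M where
  toSubmodule := LinearMap.ker C
  lie_mem {x m} (hm : C m = 0) := by
    have := LinearMap.congr_fun (hC x).eq m
    rw [Module.End.mul_apply, Module.End.mul_apply, hm, map_zero] at this
    exact this.symm

theorem commute_aeval_toEnd {x y : L} (h : Commute (toEnd R L M y) (toEnd R L M x))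
    (p : Polynomial R) : Commute (toEnd R L M y) (Polynomial.aeval (toEnd R L M x) p) :=
  Algebra.commute_of_mem_adjoin_singleton_of_commute
    (Polynomial.aeval_mem_adjoin_singleton R _) h

end KernelOfCommuting

section NilpotentAction

variable {k L V : Type*} [Field k] [CharZero k] [LieRing L] [LieAlgebra k L]
  [AddCommGroup V] [Module k V] [LieRingModule L V] [LieModule k L V] [FiniteDimensional k V]

theorem isNilpotent_toEnd_of_mem_lie {I J : LieIdeal k L} {x : L} (hx : x ∈ ⁅I, J⁆)
    (hcomm : ∀ y ∈ J, Commute (toEnd k L V y) (toEnd k L V x)) :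
    IsNilpotent (toEnd k L V x) := by
  refine isNilpotent_of_trace_mul_aeval_eq_zero _ fun p ↦ ?_
  have hp : ∀ y ∈ J, Commute (toEnd k L V y) (Polynomial.aeval (toEnd k L V x) p) :=
    fun y hy ↦ commute_aeval_toEnd (hcomm y hy) p
  generalize Polynomial.aeval (toEnd k L V x) p = c at hp
  clear hcomm
  rw [← LieSubmodule.mem_toSubmodule, LieSubmodule.lieIdeal_oper_eq_linear_span'] at hx
  induction hx using Submodule.span_induction with
  | mem _ h =>
    obtain ⟨a, -, b, hb, rfl⟩ := h
    rw [LieHom.map_lie, LinearMap.trace_lie_mul_eq, (commute_iff_lie_eq).1 (hp b hb), mul_zero,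
      map_zero]
  | zero => simp
  | add y z _ _ hy hz => rw [map_add, add_mul, map_add, hy, hz, add_zero]
  | smul r y _ hy => rw [map_smul, smul_mul_assoc, map_smul, hy, smul_zero]

end NilpotentAction

section SemisimpleModule

variable {k L V : Type*} [Field k] [LieRing L] [LieAlgebra k L] [AddCommGroup V] [Module k V]
  [LieRingModule L V] [LieModule k L V] [ComplementedLattice (LieSubmodule k L V)]

/-- The vectors killed by the ideal `J`, as a Lie submodule of the ambient module. -/
def idealInvariants (k V : Type*) {L : Type*} [CommRing k] [LieRing L] [LieAlgebra k L]
    [AddCommGroup V] [Module k V] [LieRingModule L V] [LieModule k L V] (J : LieIdeal k L) :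
    LieSubmodule k L V where
  carrier := {v | ∀ x ∈ J, ⁅x, v⁆ = 0}
  add_mem' ha hb x hx := by rw [lie_add, ha x hx, hb x hx, add_zero]
  zero_mem' x _ := lie_zero x
  smul_mem' c v hv x hx := by rw [lie_smul, hv x hx, smul_zero]
  lie_mem {y v} hv x hx := by
    rw [leibniz_lie, hv x hx, lie_zero, add_zero]
    exact hv _ (lie_mem_left k L J x y hx)

/- Otherwise Engel's theorem provides a nonzero invariant of `J` in a complement of the space of
all its invariants. -/
theorem eq_bot_of_isNilpotent_toEnd [FiniteDimensional k L] [FiniteDimensional k V]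
    [IsFaithful k L V] {J : LieIdeal k L} (hJ : ∀ x ∈ J, IsNilpotent (toEnd k L V x)) :
    J = ⊥ := by
  obtain ⟨C, hC⟩ := exists_isCompl (idealInvariants k V J)
  have hnil : LieModule.IsNilpotent J C := by
    rw [LieModule.isNilpotent_iff_forall' (R := k)]
    intro x
    have hmaps : ∀ v ∈ C.toSubmodule, toEnd k L V x v ∈ C.toSubmodule := fun v hv ↦ C.lie_mem hv
    exact Module.End.isNilpotent.restrict hmaps (hJ x x.2)
  have hC_bot : C = ⊥ := by
    by_contra hne
    have := LieSubmodule.nontrivial_iff_ne_bot k L V |>.mpr hne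
    have := LieModule.nontrivial_max_triv_of_isNilpotent k J C
    obtain ⟨⟨v, hv⟩, hv0⟩ := exists_ne (0 : maxTrivSubmodule k J C)
    have hvJ : (v : V) ∈ idealInvariants k V J := fun x hx ↦
      congrArg Subtype.val ((mem_maxTrivSubmodule k J C v).1 hv ⟨x, hx⟩)
    have hv_bot := hC.inf_eq_bot ▸ (show (v : V) ∈ idealInvariants k V J ⊓ C from ⟨hvJ, v.2⟩)
    exact hv0 (Subtype.ext (Subtype.ext ((LieSubmodule.mem_bot _).1 hv_bot)))
  have htop : idealInvariants k V J = ⊤ := by simpa [hC_bot] using hC.sup_eq_top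
  refine (LieSubmodule.eq_bot_iff J).2 fun x hx ↦ ext_of_isFaithful (R := k) (M := V) fun v ↦ ?_
  rw [zero_lie]
  exact (htop ▸ LieSubmodule.mem_top v : v ∈ idealInvariants k V J) x hx

/- If `q(z)² = 0`, then `q(z)` maps a Lie complement of its kernel into that kernel, so `q(z) = 0`:
the minimal polynomial of `z` is squarefree. -/
theorem isSemisimple_toEnd_of_mem_center [FiniteDimensional k V] {z : L}
    (hz : z ∈ center k L) : (toEnd k L V z).IsSemisimple := by
  have hradical : IsRadical (minpoly k (toEnd k L V z)) := by
    rw [isRadical_iff_pow_one_lt 2 one_lt_two]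
    intro q hq
    rw [minpoly.dvd_iff, map_pow, pow_two] at hq
    rw [minpoly.dvd_iff]
    set Q := Polynomial.aeval (toEnd k L V z) q
    have hQ : ∀ x : L, Commute (toEnd k L V x) Q :=
      fun x ↦ commute_aeval_toEnd (commute_toEnd_of_mem_center_right V hz x) q
    obtain ⟨C, hC⟩ := exists_isCompl (kerOfCommute Q hQ)
    have hQC : ∀ v ∈ C, Q v = 0 := fun v hv ↦ by
      have hstable : C.toSubmodule ≤ C.toSubmodule.comap (toEnd k L V z) := fun u hu ↦ C.lie_mem hu
      have hQv : Q v ∈ kerOfCommute Q hQ ⊓ C :=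
        ⟨LinearMap.congr_fun hq v, Polynomial.aeval_apply_smul_mem_of_le_comap hv q _ hstable⟩
      rwa [hC.inf_eq_bot, LieSubmodule.mem_bot] at hQv
    have hker : kerOfCommute Q hQ = ⊤ := by
      rw [← hC.sup_eq_top, left_eq_sup]
      exact hQC
    exact LinearMap.ker_eq_top.1 (congrArg LieSubmodule.toSubmodule hker)
  exact Module.End.isSemisimple_of_squarefree_aeval_eq_zero
    (hradical.squarefree (minpoly.ne_zero (Algebra.IsIntegral.isIntegral _))) (minpoly.aeval _ _)

end SemisimpleModule

section ReductiveLieAlgebra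

variable {k L : Type*} [Field k] [CharZero k] [LieRing L] [LieAlgebra k L] [FiniteDimensional k L]
  (V : Type*) [AddCommGroup V] [Module k V] [LieRingModule L V] [LieModule k L V]
  [FiniteDimensional k V] [ComplementedLattice (LieSubmodule k L V)] [IsFaithful k L V]

include V

theorem le_center_of_lie_self_eq_bot {J : LieIdeal k L} (hJ : ⁅J, J⁆ = ⊥) : J ≤ center k L := by
  have hlie : ⁅(⊤ : LieIdeal k L), J⁆ = ⊥ := eq_bot_of_isNilpotent_toEnd (V := V) fun x hx ↦
    isNilpotent_toEnd_of_mem_lie hx fun y hy ↦ by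
      have hxy : ⁅y, x⁆ ∈ ⁅J, J⁆ := LieSubmodule.lie_mem_lie hy (LieSubmodule.lie_le_right J ⊤ hx)
      rw [hJ, LieSubmodule.mem_bot] at hxy
      rw [commute_iff_lie_eq, ← LieHom.map_lie, hxy, map_zero]
  intro x hx
  rw [mem_maxTrivSubmodule]
  intro y
  have hyx : ⁅y, x⁆ ∈ ⁅(⊤ : LieIdeal k L), J⁆ :=
    LieSubmodule.lie_mem_lie (LieSubmodule.mem_top y) hx
  rwa [hlie, LieSubmodule.mem_bot] at hyx

theorem center_inf_derived_eq_bot : center k L ⊓ ⁅(⊤ : LieIdeal k L), (⊤ : LieIdeal k L)⁆ = ⊥ :=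
  eq_bot_of_isNilpotent_toEnd (V := V) fun _ hx ↦ isNilpotent_toEnd_of_mem_lie hx.2 fun y _ ↦
    commute_toEnd_of_mem_center_right V hx.1 y

theorem hasTrivialRadical_quotient_center : HasTrivialRadical k (L ⧸ center k L) := by
  rw [hasTrivialRadical_iff_no_abelian_ideals]
  intro I hI
  let J : LieIdeal k L :=
    { I.toSubmodule.comap (LieSubmodule.Quotient.mk' (center k L) : L →ₗ[k] L ⧸ center k L) with
      lie_mem {x y} hy := lie_mem_right k _ I (LieSubmodule.Quotient.mk x) _ hy }
  have hJ : ⁅J, J⁆ ≤ center k L := by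
    rw [LieSubmodule.lie_le_iff]
    intro x hx y hy
    exact LieSubmodule.Quotient.mk_eq_zero'.1 (congrArg Subtype.val (hI.trivial ⟨_, hx⟩ ⟨_, hy⟩))
  have hJ_bot : ⁅J, J⁆ = ⊥ := by
    rw [eq_bot_iff, ← center_inf_derived_eq_bot V]
    exact le_inf hJ (LieSubmodule.mono_lie le_top le_top)
  refine (LieSubmodule.eq_bot_iff I).2 fun x hx ↦ ?_
  obtain ⟨x, rfl⟩ := LieSubmodule.Quotient.surjective_mk' _ x
  exact LieSubmodule.Quotient.mk_eq_zero'.2 (le_center_of_lie_self_eq_bot V hJ_bot hx)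

end ReductiveLieAlgebra

section Cartan

variable {k L V : Type*} [Field k] [LieRing L] [LieAlgebra k L] [AddCommGroup V] [Module k V]
  [LieRingModule L V] [LieModule k L V] [FiniteDimensional k V]

theorem lieRing_isNilpotent_of_isFaithful [IsFaithful k L V] [LieModule.IsNilpotent L V] :
    LieRing.IsNilpotent L := by
  have hrange : LieRing.IsNilpotent (toEnd k L V).range := by
    rw [LieAlgebra.isNilpotent_iff_forall (R := k)]
    rintro ⟨-, x, rfl⟩
    exact LieAlgebra.isNilpotent_ad_of_isNilpotent
      ((LieModule.isNilpotent_iff_forall' (R := k)).1 ‹_› x)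
  refine Function.Injective.lieAlgebra_isNilpotent (R := k) (f := (toEnd k L V).rangeRestrict) ?_
  exact fun x y hxy ↦ (toEnd_eq_iff k L V).1 (congrArg Subtype.val hxy)

theorem isSolvable_of_traceForm_eq_zero [CharZero k] [IsFaithful k L V]
    (h : traceForm k L V = 0) : IsSolvable L := by
  have hnil := isNilpotent_derivedSeries_of_traceForm_eq_zero h
  have hfaithful : IsFaithful k (derivedSeries k L 1) V :=
    ⟨fun x y hxy ↦ Subtype.ext ((toEnd_eq_iff k L V).1 hxy)⟩
  have hnil' : LieRing.IsNilpotent (derivedSeries k L 1) :=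
    lieRing_isNilpotent_of_isFaithful (k := k) (V := V)
  obtain ⟨n, hn⟩ := IsSolvable.solvable k (derivedSeries k L 1)
  rw [LieIdeal.derivedSeries_eq_bot_iff] at hn
  exact IsSolvable.mk (R := k) (k := n + 1) (by rwa [derivedSeries_def, derivedSeriesOfIdeal_add])

end Cartan

section Casimir

variable {k L V : Type*} [Field k] [LieRing L] [LieAlgebra k L] [AddCommGroup V] [Module k V]
  [LieRingModule L V] [LieModule k L V]

theorem lie_toEnd_basis_eq_sum {ι : Type*} [Fintype ι] {J : LieIdeal k L}
    (b : Module.Basis ι k J) (x : L) (y : J) :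
    ⁅toEnd k L V x, toEnd k L V y⁆ = ∑ j, b.repr ⁅x, y⁆ j • toEnd k L V (b j) := by
  have h := congrArg ((toEnd k L V : L →ₗ[k] Module.End k V) ∘ₗ J.toSubmodule.subtype)
    (b.sum_repr ⁅x, y⁆)
  simp only [map_sum, map_smul] at h
  rw [← LieHom.map_lie]
  exact h.symm

variable [FiniteDimensional k L] (J : LieIdeal k L) (hJ : (traceForm k J V).Nondegenerate)

/-- The Casimir operator of an ideal `J` on whose representation `V` the trace form is
nondegenerate: the sum of the `bᵢ b'ᵢ` over a basis `b` of `J` and its trace-dual basis `b'`. -/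
def casimir : Module.End k V :=
  ∑ i, toEnd k L V (Module.finBasis k J i) *
    toEnd k L V ((traceForm k J V).dualBasis hJ (Module.finBasis k J) i)

theorem commute_casimir (x : L) : Commute (toEnd k L V x) (casimir J hJ) := by
  let B := traceForm k J V
  let b := Module.finBasis k J
  let b' := B.dualBasis hJ b
  have hB : B.IsSymm := ⟨fun y z ↦ traceForm_comm k J V y z⟩
  have hinv (i j) : B ⁅x, b' i⁆ (b j) = -B ⁅x, b j⁆ (b' i) := by
    rw [← hB.eq (b' i)]
    exact traceForm_lieInvariant k L V x (b' i : L) (b j : L)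
  have lie_b (i) : ⁅toEnd k L V x, toEnd k L V (b i)⁆ =
      ∑ j, B ⁅x, b i⁆ (b' j) • toEnd k L V (b j) := by
    rw [lie_toEnd_basis_eq_sum b]
    simp only [b', ← B.dualBasis_repr_apply hJ, B.dualBasis_dualBasis hJ hB]
  have lie_b' (i) : ⁅toEnd k L V x, toEnd k L V (b' i)⁆ =
      -∑ j, B ⁅x, b j⁆ (b' i) • toEnd k L V (b' j) := by
    rw [lie_toEnd_basis_eq_sum b', ← Finset.sum_neg_distrib]
    refine Finset.sum_congr rfl fun j _ ↦ ?_
    rw [B.dualBasis_repr_apply, hinv, neg_smul]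
  have leibniz (i) : ⁅toEnd k L V x, toEnd k L V (b i) * toEnd k L V (b' i)⁆ =
      ⁅toEnd k L V x, toEnd k L V (b i)⁆ * toEnd k L V (b' i) +
        toEnd k L V (b i) * ⁅toEnd k L V x, toEnd k L V (b' i)⁆ := by
    simp only [Ring.lie_def]
    noncomm_ring
  rw [commute_iff_lie_eq, casimir, lie_sum, Finset.sum_congr rfl fun i _ ↦ leibniz i]
  simp only [lie_b, lie_b', Finset.sum_mul, mul_neg, Finset.mul_sum, smul_mul_assoc, mul_smul_comm,
    Finset.sum_add_distrib, Finset.sum_neg_distrib]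
  rw [Finset.sum_comm, add_neg_cancel]

theorem trace_casimir : LinearMap.trace k V (casimir J hJ) = Module.finrank k J := by
  have h (i) : LinearMap.trace k V (toEnd k L V (Module.finBasis k J i) *
      toEnd k L V ((traceForm k J V).dualBasis hJ (Module.finBasis k J) i)) = 1 :=
    ((traceForm k J V).apply_dualBasis_right hJ ⟨fun y z ↦ traceForm_comm k J V y z⟩
      (Module.finBasis k J) i i).trans (if_pos rfl)
  rw [casimir, map_sum, Finset.sum_congr rfl fun i _ ↦ h i]
  simp

theorem map_casimir_eq_zero {φ : Module.Dual k V} (hφ : ∀ (x : L) v, φ ⁅x, v⁆ = 0) (v : V) :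
    φ (casimir J hJ v) = 0 := by
  simp only [casimir, LinearMap.sum_apply, map_sum]
  exact Finset.sum_eq_zero fun i _ ↦ hφ _ _

end Casimir

section Weyl

variable {k L V : Type*} [Field k] [LieRing L] [LieAlgebra k L] [AddCommGroup V] [Module k V]
  [LieRingModule L V] [LieModule k L V] [FiniteDimensional k V]

theorem nondegenerate_traceForm_of_isFaithful [CharZero k] [FiniteDimensional k L]
    [HasTrivialRadical k L] (J : LieIdeal k L) [IsFaithful k J V] :
    (traceForm k J V).Nondegenerate := by
  let N : LieIdeal k L :=
    J ⊓ LieAlgebra.InvariantForm.orthogonal (traceForm k L V) (traceForm_lieInvariant k L V) J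
  have hN : ∀ x : N, ∀ y ∈ J, traceForm k L V x y = 0 := fun x y hy ↦ by
    rw [traceForm_comm]
    exact (LieAlgebra.InvariantForm.mem_orthogonal _ _ _ _).1 x.2.2 y hy
  have hfaithful : IsFaithful k N V := ⟨fun x y hxy ↦ by
    have h : (⟨x, x.2.1⟩ : J) = ⟨y, y.2.1⟩ := (toEnd_eq_iff k J V).1 hxy
    exact Subtype.ext (Subtype.mk.inj h)⟩
  have hsolvable : IsSolvable N :=
    isSolvable_of_traceForm_eq_zero (k := k) (V := V)
      (LinearMap.ext₂ fun x y ↦ hN x y y.2.1)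
  have hN_bot : N = ⊥ := (hasTrivialRadical_iff_no_solvable_ideals k L).1 ‹_› N hsolvable
  have hleft (x : J) (hx : ∀ y, traceForm k J V x y = 0) : x = 0 := by
    have hxN : (x : L) ∈ N := ⟨x.2, (LieAlgebra.InvariantForm.mem_orthogonal _ _ _ _).2 fun y hy ↦
      (traceForm_comm k L V _ _).trans (hx ⟨y, hy⟩)⟩
    rw [hN_bot, LieSubmodule.mem_bot] at hxN
    exact Subtype.ext hxN
  exact ⟨hleft, fun x hx ↦ hleft x fun y ↦ (traceForm_comm k J V x y).trans (hx y)⟩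

section MinimalModule

variable {φ : Module.Dual k V} (hφ : φ ≠ 0) (hφL : ∀ (x : L) v, φ ⁅x, v⁆ = 0)
  (hmin : ∀ N : LieSubmodule k L V, N ≠ ⊤ → ∀ v ∈ N, φ v = 0)

include hφ hmin

theorem isNilpotent_of_commute_of_minimal {C : Module.End k V}
    (hC : ∀ x : L, Commute (toEnd k L V x) C) (hφC : ∀ v, φ (C v) = 0) : IsNilpotent C := by
  obtain ⟨n, hn⟩ := Filter.eventually_atTop.1 (LinearMap.eventually_isCompl_ker_pow_range_pow C)
  have hfitting := hn (n + 1) n.le_succ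
  let N := kerOfCommute (C ^ (n + 1)) fun x ↦ (hC x).pow_right _
  suffices hN : N = ⊤ from
    ⟨n + 1, LinearMap.ker_eq_top.1 (congrArg LieSubmodule.toSubmodule hN)⟩
  by_contra hN
  refine hφ (LinearMap.ext fun v ↦ ?_)
  obtain ⟨a, ha, -, ⟨b, rfl⟩, rfl⟩ :=
    Submodule.mem_sup.1 (hfitting.sup_eq_top ▸ Submodule.mem_top (x := v))
  rw [map_add, hmin N hN a ha, pow_succ', Module.End.mul_apply, hφC]
  simp

include hφL

theorem lie_eq_zero_of_isSemisimple_of_minimal {z : L} (hz : z ∈ center k L)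
    (hss : (toEnd k L V z).IsSemisimple) (v : V) : ⁅z, v⁆ = 0 :=
  LinearMap.congr_fun (Module.End.eq_zero_of_isNilpotent_isSemisimple
    (isNilpotent_of_commute_of_minimal hφ hmin
      (commute_toEnd_of_mem_center_right V hz) (hφL z)) hss)
    v

theorem lie_eq_zero_of_isKilling_of_minimal [CharZero k] [FiniteDimensional k L] [IsKilling k L]
    (x : L) (v : V) : ⁅x, v⁆ = 0 := by
  have hcompl := LieIdeal.isCompl_killingCompl (LieModule.ker k L V)
  set J := LieIdeal.killingCompl k L (LieModule.ker k L V)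
  have hfaithful : IsFaithful k J V := by
    refine ⟨(injective_iff_map_eq_zero (toEnd k J V)).2 fun x hx ↦ ?_⟩
    have hmem : (x : L) ∈ LieModule.ker k L V ⊓ J :=
      ⟨(LieModule.mem_ker k L V _).2 (LinearMap.congr_fun hx), x.2⟩
    rw [hcompl.inf_eq_bot, LieSubmodule.mem_bot] at hmem
    exact Subtype.ext hmem
  have hJ := nondegenerate_traceForm_of_isFaithful (V := V) J
  have hfinrank : (Module.finrank k J : k) = 0 := by
    rw [← trace_casimir J hJ]
    exact (LinearMap.isNilpotent_trace_of_isNilpotent (isNilpotent_of_commute_of_minimal hφ hmin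
      (commute_casimir J hJ) (map_casimir_eq_zero J hJ hφL))).eq_zero
  have hJ_bot : J = ⊥ := LieSubmodule.toSubmodule_injective
    (Submodule.finrank_eq_zero.1 (Nat.cast_eq_zero.1 hfinrank))
  have hker : LieModule.ker k L V = ⊤ := by simpa [hJ_bot] using hcompl.sup_eq_top
  exact (LieModule.mem_ker k L V _).1 (hker ▸ LieSubmodule.mem_top x) v

end MinimalModule

/-- A homomorphism of Lie algebras vanishing on the ideal `I` descends to the quotient by `I`. -/
def quotientLift {k L L' : Type*} [CommRing k] [LieRing L] [LieAlgebra k L] [LieRing L']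
    [LieAlgebra k L'] (I : LieIdeal k L) (f : L →ₗ⁅k⁆ L') (hf : ∀ x ∈ I, f x = 0) :
    (L ⧸ I) →ₗ⁅k⁆ L' :=
  { I.toSubmodule.liftQ (f : L →ₗ[k] L') hf with
    map_lie' {x y} := by
      obtain ⟨x, rfl⟩ := LieSubmodule.Quotient.surjective_mk' _ x
      obtain ⟨y, rfl⟩ := LieSubmodule.Quotient.surjective_mk' _ y
      exact f.map_lie x y }

theorem lie_eq_zero_of_minimal [CharZero k] [FiniteDimensional k L]
    [HasTrivialRadical k (L ⧸ center k L)]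
    (hss : ∀ z ∈ center k L, (toEnd k L V z).IsSemisimple)
    {φ : Module.Dual k V} (hφ : φ ≠ 0) (hφL : ∀ (x : L) v, φ ⁅x, v⁆ = 0)
    (hmin : ∀ N : LieSubmodule k L V, N ≠ ⊤ → ∀ v ∈ N, φ v = 0) (x : L) (v : V) :
    ⁅x, v⁆ = 0 := by
  let ρ : (L ⧸ center k L) →ₗ⁅k⁆ Module.End k V := quotientLift (center k L) (toEnd k L V)
    fun z hz ↦ LinearMap.ext (lie_eq_zero_of_isSemisimple_of_minimal hφ hφL hmin hz (hss z hz))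
  let _ : LieRingModule (L ⧸ center k L) V := LieRingModule.compLieHom V ρ
  have _ : LieModule k (L ⧸ center k L) V := LieModule.compLieHom V ρ
  have hφQ (y : L ⧸ center k L) (u : V) : φ ⁅y, u⁆ = 0 := by
    obtain ⟨y, rfl⟩ := LieSubmodule.Quotient.surjective_mk' _ y
    exact hφL y u
  refine lie_eq_zero_of_isKilling_of_minimal (L := L ⧸ center k L) hφ hφQ (fun N hN u hu ↦ ?_)
    (LieSubmodule.Quotient.mk x) v
  let N' : LieSubmodule k L V :=
    { N.toSubmodule with lie_mem {y w} hw := N.lie_mem (x := LieSubmodule.Quotient.mk y) hw }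
  refine hmin N' (fun h ↦ hN ?_) u hu
  have hN_top : N.toSubmodule = ⊤ := congrArg LieSubmodule.toSubmodule h
  exact LieSubmodule.toSubmodule_injective hN_top

/- Weyl's complete reducibility in the form needed here. Inside a Lie submodule minimal among those
on which `φ` does not vanish, the central elements (being semisimple) and the Casimir operators
have to be nilpotent, which forces the action of `L` to be trivial. -/
theorem exists_lie_eq_zero_and_dual_apply_ne_zero [CharZero k] [FiniteDimensional k L]
    [HasTrivialRadical k (L ⧸ center k L)]
    (hss : ∀ z ∈ center k L, (toEnd k L V z).IsSemisimple)
    {φ : Module.Dual k V} (hφ : φ ≠ 0) (hφL : ∀ (x : L) v, φ ⁅x, v⁆ = 0) :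
    ∃ w : V, (∀ x : L, ⁅x, w⁆ = 0) ∧ φ w ≠ 0 := by
  obtain ⟨v, hv⟩ : ∃ v, φ v ≠ 0 := by
    contrapose! hφ
    exact LinearMap.ext hφ
  have := LieSubmodule.wellFoundedLT_of_isArtinian k L V
  obtain ⟨N, hN⟩ := exists_minimal_of_wellFoundedLT
    (fun N : LieSubmodule k L V ↦ ∃ w ∈ N, φ w ≠ 0) ⟨⊤, v, LieSubmodule.mem_top v, hv⟩
  obtain ⟨w, hwN, hw⟩ := hN.prop
  refine ⟨w, fun x ↦ ?_, hw⟩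
  suffices h : ⁅x, (⟨w, hwN⟩ : N)⁆ = 0 from congrArg Subtype.val h
  refine lie_eq_zero_of_minimal (φ := φ ∘ₗ (N.incl : N →ₗ[k] V)) (fun z hz ↦ ?_) ?_ ?_ ?_ x _
  · exact Module.End.IsSemisimple.restrict (fun u hu ↦ N.lie_mem hu) (hss z hz)
  · exact fun h ↦ hw (LinearMap.congr_fun h ⟨w, hwN⟩)
  · exact fun y u ↦ hφL y u
  · intro N' hN' u hu
    by_contra hφu
    have hle : N ≤ N'.map N.incl := hN.le_of_le ⟨u, ⟨u, hu, rfl⟩, hφu⟩ LieSubmodule.map_incl_le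
    refine hN' (eq_top_iff.2 fun y _ ↦ ?_)
    obtain ⟨y', hy', hyy'⟩ := hle y.2
    rwa [← Subtype.ext hyy']

end Weyl

/- Weyl's theorem applied to `N ⊔ k ∙ v`, on which a linear form killing `N` but not `v` is
invariant. -/
theorem exists_forall_apply_eq_zero_sub_smul_mem {k L V : Type*} [Field k] [CharZero k] [LieRing L]
    [LieAlgebra k L] [FiniteDimensional k L] [HasTrivialRadical k (L ⧸ center k L)]
    [AddCommGroup V] [Module k V] [FiniteDimensional k V] (ρ : L →ₗ⁅k⁆ Module.End k V)
    (hss : ∀ z ∈ center k L, (ρ z).IsSemisimple) {N : Submodule k V}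
    (hN : ∀ x, ∀ u ∈ N, ρ x u ∈ N) {v : V} (hv : v ∉ N) (hLv : ∀ x, ρ x v ∈ N) :
    ∃ (w : V) (c : k), c ≠ 0 ∧ (∀ x, ρ x w = 0) ∧ w - c • v ∈ N := by
  let _ : LieRingModule L V := LieRingModule.compLieHom V ρ
  have _ : LieModule k L V := LieModule.compLieHom V ρ
  obtain ⟨φ, hφv, hφN⟩ := Submodule.exists_le_ker_of_notMem hv
  have hmem {u : V} : u ∈ N ⊔ k ∙ v ↔ ∃ y ∈ N, ∃ c : k, y + c • v = u := by
    simp only [Submodule.mem_sup, Submodule.mem_span_singleton, exists_exists_eq_and]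
  have hLN (x : L) {u : V} (hu : u ∈ N ⊔ k ∙ v) : ρ x u ∈ N := by
    obtain ⟨y, hy, c, rfl⟩ := hmem.1 hu
    rw [map_add, map_smul]
    exact add_mem (hN x y hy) (N.smul_mem c (hLv x))
  let M : LieSubmodule k L V :=
    { N ⊔ k ∙ v with lie_mem hu := Submodule.mem_sup_left (hLN _ hu) }
  have hvM : v ∈ M := Submodule.mem_sup_right (Submodule.mem_span_singleton_self v)
  obtain ⟨⟨w, hw⟩, hLw, hφw⟩ := exists_lie_eq_zero_and_dual_apply_ne_zero (V := M)
    (φ := φ ∘ₗ (M.incl : M →ₗ[k] V))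
    (fun z hz ↦ Module.End.IsSemisimple.restrict (fun u hu ↦ M.lie_mem hu) (hss z hz))
    (fun h ↦ hφv (LinearMap.congr_fun h ⟨v, hvM⟩)) (fun x u ↦ hφN (hLN x u.2))
  obtain ⟨y, hy, c, rfl⟩ := hmem.1 hw
  refine ⟨y + c • v, c, fun hc ↦ hφw ?_, fun x ↦ congrArg Subtype.val (hLw x), ?_⟩
  · subst hc
    simpa using! hφN hy
  · rwa [add_sub_cancel_right]

open MvPolynomial
open scoped Polynomial TensorProduct

section CoordinateRing

/-- The polynomial ring in the entries of two generic square matrices, playing the roles of `g`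
and `g⁻¹`: its elements are the polynomial expressions defining regular functions on `GL m k`.
No relation between the two matrices is imposed. -/
abbrev CoordRing (m k : Type*) [Field k] := MvPolynomial ((m × m) ⊕ (m × m)) k

variable {m k R S : Type*} [Field k] [CommRing R] [Algebra k R] [CommRing S] [Algebra k S]

/-- The generic matrix standing for `g`. -/
def genMat : Matrix m m (CoordRing m k) := fun i j ↦ X (Sum.inl (i, j))

/-- The generic matrix standing for `g⁻¹`. -/
def genInv : Matrix m m (CoordRing m k) := fun i j ↦ X (Sum.inr (i, j))

/-- Substitution of the pair of matrices `(A, B)` for the generic pair `(g, g⁻¹)`. -/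
def evalPair (A B : Matrix m m R) : CoordRing m k →ₐ[k] R :=
  aeval (Sum.elim (fun q ↦ A q.1 q.2) fun q ↦ B q.1 q.2)

@[simp]
theorem evalPair_genMat (A B : Matrix m m R) : (genMat (k := k)).map (evalPair A B) = A := by
  ext; simp [genMat, evalPair]

@[simp]
theorem evalPair_genInv (A B : Matrix m m R) : (genInv (k := k)).map (evalPair A B) = B := by
  ext; simp [genInv, evalPair]

theorem algHom_ext_generic {f f' : CoordRing m k →ₐ[k] R} (h : genMat.map f = genMat.map f')
    (h' : genInv.map f = genInv.map f') : f = f' := by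
  refine MvPolynomial.algHom_ext ?_
  rintro (⟨i, j⟩ | ⟨i, j⟩)
  exacts [congrFun₂ h i j, congrFun₂ h' i j]

theorem map_evalPair (f : R →ₐ[k] S) (A B : Matrix m m R) (p : CoordRing m k) :
    f (evalPair A B p) = evalPair (A.map f) (B.map f) p := by
  refine AlgHom.congr_fun (φ₁ := f.comp (evalPair A B)) (algHom_ext_generic ?_ ?_) p <;>
    rw [AlgHom.coe_comp, ← Matrix.map_map] <;> simp

theorem evalPair_genMat_genInv (p : CoordRing m k) : evalPair genMat genInv p = p :=
  AlgHom.congr_fun (φ₂ := AlgHom.id k _) (algHom_ext_generic (by simp) (by simp)) p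

end CoordinateRing

section Translations

theorem map_mul_algHom {m k R S : Type*} [Fintype m] [Field k] [CommRing R] [Algebra k R]
    [CommRing S] [Algebra k S] (f : R →ₐ[k] S) (A B : Matrix m m R) :
    (A * B).map f = A.map f * B.map f :=
  Matrix.map_mul (f := (f : R →+* S))

theorem map_neg_algHom {m k R S : Type*} [Field k] [CommRing R] [Algebra k R] [CommRing S]
    [Algebra k S] (f : R →ₐ[k] S) (A : Matrix m m R) : (-A).map f = -A.map f :=
  Matrix.ext fun i j ↦ map_neg f (A i j)

variable {m k R : Type*} [Fintype m] [DecidableEq m] [Field k] [CommRing R] [Algebra k R]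

/-- A matrix over `k`, regarded as a matrix over a `k`-algebra. -/
def constMat (R : Type*) [CommRing R] [Algebra k R] : Matrix m m k →ₐ[k] Matrix m m R :=
  (Algebra.ofId k R).mapMatrix

@[simp]
theorem constMat_self (A : Matrix m m k) : constMat k A = A := rfl

@[simp]
theorem map_constMat {S : Type*} [CommRing S] [Algebra k S] (f : R →ₐ[k] S) (A : Matrix m m k) :
    (constMat R A).map f = constMat S A :=
  Matrix.ext fun i j ↦ f.commutes (A i j)

/-- The value at `g` of the regular function defined by a polynomial. -/
def evalGL (g : GL m k) : CoordRing m k →ₐ[k] k :=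
  evalPair (g : Matrix m m k) ((g⁻¹ : GL m k) : Matrix m m k)

@[simp]
theorem evalGL_genMat (g : GL m k) : genMat.map (evalGL g) = (g : Matrix m m k) :=
  evalPair_genMat _ _

@[simp]
theorem evalGL_genInv (g : GL m k) : genInv.map (evalGL g) = ((g⁻¹ : GL m k) : Matrix m m k) :=
  evalPair_genInv _ _

/-- Left translation `(u p)(g) = p(a g, g⁻¹ b)`, where `b` need not be the inverse of `a`. -/
def leftTranslate (a b : Matrix m m k) : CoordRing m k →ₐ[k] CoordRing m k :=
  evalPair (constMat _ a * genMat) (genInv * constMat _ b)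

/-- Right translation `(u p)(h) = p(h g)`. -/
def rightTranslate (g : GL m k) : CoordRing m k →ₐ[k] CoordRing m k :=
  evalPair (genMat * constMat _ (g : Matrix m m k))
    (constMat _ ((g⁻¹ : GL m k) : Matrix m m k) * genInv)

theorem evalGL_leftTranslate (g : GL m k) (a b : Matrix m m k) (p : CoordRing m k) :
    evalGL g (leftTranslate a b p) =
      evalPair (a * (g : Matrix m m k)) (((g⁻¹ : GL m k) : Matrix m m k) * b) p := by
  rw [leftTranslate, map_evalPair]
  simp only [map_mul_algHom, map_constMat, constMat_self, evalGL_genMat, evalGL_genInv]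

theorem evalGL_leftTranslate_coe (g h : GL m k) (p : CoordRing m k) :
    evalGL h (leftTranslate (g : Matrix m m k) (g⁻¹ : GL m k) p) = evalGL (g * h) p := by
  rw [evalGL_leftTranslate, evalGL, _root_.mul_inv_rev, Units.val_mul, Units.val_mul]

theorem evalPair_rightTranslate (g : GL m k) (a b : Matrix m m k) (p : CoordRing m k) :
    evalPair a b (rightTranslate g p) =
      evalPair (a * (g : Matrix m m k)) (((g⁻¹ : GL m k) : Matrix m m k) * b) p := by
  rw [rightTranslate, map_evalPair]
  simp only [map_mul_algHom, map_constMat, constMat_self, evalPair_genMat, evalPair_genInv]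

theorem evalGL_rightTranslate (g h : GL m k) (p : CoordRing m k) :
    evalGL h (rightTranslate g p) = evalGL (h * g) p := by
  rw [evalGL, evalPair_rightTranslate, evalGL, _root_.mul_inv_rev, Units.val_mul, Units.val_mul]

theorem rightTranslate_mul (g h : GL m k) :
    rightTranslate (g * h) = (rightTranslate g).comp (rightTranslate h) := by
  refine AlgHom.ext fun p ↦ ?_
  rw [AlgHom.comp_apply]
  nth_rw 3 [rightTranslate]
  rw [map_evalPair]
  simp only [map_mul_algHom, map_constMat]
  simp only [rightTranslate, evalPair_genMat, evalPair_genInv, _root_.mul_inv_rev, Units.val_mul,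
    map_mul, Matrix.mul_assoc]

theorem rightTranslate_one : rightTranslate (1 : GL m k) = AlgHom.id k (CoordRing m k) := by
  refine AlgHom.ext fun p ↦ ?_
  rw [rightTranslate, inv_one, Units.val_one, map_one, mul_one, one_mul, evalPair_genMat_genInv,
    AlgHom.id_apply]

/-- Interchange of the two generic matrices, i.e. composition with `g ↦ g⁻¹`. -/
def antipode : CoordRing m k →ₐ[k] CoordRing m k := evalPair genInv genMat

theorem evalGL_antipode (g : GL m k) (p : CoordRing m k) :
    evalGL g (antipode p) = evalGL g⁻¹ p := by
  rw [antipode, map_evalPair, evalGL_genMat, evalGL_genInv, evalGL, inv_inv]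

variable (m k) in
/-- The comultiplication of the group law in the order for which the left tensor factor is the
translating element: `(comul p)(g, h) = p(h g)`. -/
def comul : CoordRing m k →ₐ[k] CoordRing m k ⊗[k] CoordRing m k :=
  let left : CoordRing m k →ₐ[k] CoordRing m k ⊗[k] CoordRing m k :=
    Algebra.TensorProduct.includeLeft
  let right : CoordRing m k →ₐ[k] CoordRing m k ⊗[k] CoordRing m k :=
    Algebra.TensorProduct.includeRight
  evalPair (genMat.map right * genMat.map left) (genInv.map left * genInv.map right)

theorem productMap_comul (g : GL m k) (p : CoordRing m k) :
    Algebra.TensorProduct.productMap ((Algebra.ofId k _).comp (evalGL g))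
      (AlgHom.id k (CoordRing m k)) (comul m k p) = rightTranslate g p := by
  rw [comul, map_evalPair, rightTranslate, map_mul_algHom, map_mul_algHom]
  simp only [Matrix.map_map, ← AlgHom.coe_comp, Algebra.TensorProduct.productMap_left,
    Algebra.TensorProduct.productMap_right]
  simp only [AlgHom.coe_comp, ← Matrix.map_map, evalGL, evalPair_genMat, evalPair_genInv,
    AlgHom.coe_id, Matrix.map_id]
  rfl

theorem exists_rightTranslate_eq_sum (p : CoordRing m k) :
    ∃ s : Finset (CoordRing m k × CoordRing m k),
      ∀ g : GL m k, rightTranslate g p = ∑ t ∈ s, evalGL g t.1 • t.2 := by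
  obtain ⟨s, hs⟩ := TensorProduct.exists_finset (comul m k p)
  refine ⟨s, fun g ↦ ?_⟩
  rw [← productMap_comul, hs, map_sum]
  exact Finset.sum_congr rfl fun t _ ↦ by
    simp [Algebra.ofId_apply, MvPolynomial.smul_eq_C_mul]

end Translations

section InvariantDerivations

variable {m k : Type*} [Field k]

theorem derivation_ext_generic {D D' : Derivation k (CoordRing m k) (CoordRing m k)}
    (h : genMat.map D = genMat.map D') (h' : genInv.map D = genInv.map D') : D = D' := by
  refine MvPolynomial.derivation_ext ?_
  rintro (⟨i, j⟩ | ⟨i, j⟩)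
  exacts [congrFun₂ h i j, congrFun₂ h' i j]

theorem algHom_derivation_eq {D D' : Derivation k (CoordRing m k) (CoordRing m k)}
    {R : Type*} [CommRing R] [Algebra k R] {f : CoordRing m k →ₐ[k] R}
    (h : (genMat.map D).map f = (genMat.map D').map f)
    (h' : (genInv.map D).map f = (genInv.map D').map f) (p : CoordRing m k) :
    f (D p) = f (D' p) := by
  induction p using MvPolynomial.induction_on with
  | C a => simp
  | add p q hp hq => simp only [map_add, hp, hq]
  | mul_X p i hp =>
    have hi : f (D (X i)) = f (D' (X i)) := by
      obtain ⟨i, j⟩ | ⟨i, j⟩ := i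
      exacts [congrFun₂ h i j, congrFun₂ h' i j]
    simp only [Derivation.leibniz, smul_eq_mul, map_add, map_mul, hp, hi]

theorem derivation_algHom_eq {D D' : Derivation k (CoordRing m k) (CoordRing m k)}
    {f : CoordRing m k →ₐ[k] CoordRing m k}
    (h : (genMat.map f).map D = (genMat.map D').map f)
    (h' : (genInv.map f).map D = (genInv.map D').map f) (p : CoordRing m k) :
    D (f p) = f (D' p) := by
  induction p using MvPolynomial.induction_on with
  | C a => rw [← algebraMap_eq, f.commutes, D.map_algebraMap, D'.map_algebraMap, map_zero]
  | add p q hp hq => simp only [map_add, hp, hq]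
  | mul_X p i hp =>
    have hi : D (f (X i)) = f (D' (X i)) := by
      obtain ⟨i, j⟩ | ⟨i, j⟩ := i
      exacts [congrFun₂ h i j, congrFun₂ h' i j]
    simp only [Derivation.leibniz, smul_eq_mul, map_add, map_mul, hp, hi]

theorem map_derivation_mul [Fintype m] (D : Derivation k (CoordRing m k) (CoordRing m k))
    (A B : Matrix m m (CoordRing m k)) : (A * B).map D = A.map D * B + A * B.map D := by
  ext1 i j
  simp only [Matrix.map_apply, Matrix.mul_apply, Matrix.add_apply, map_sum, Derivation.leibniz,
    smul_eq_mul, Finset.sum_add_distrib]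
  rw [add_comm]
  exact congrArg (· + _) (Finset.sum_congr rfl fun _ _ ↦ mul_comm _ _)

variable [Fintype m] [DecidableEq m]

theorem map_derivation_constMat (D : Derivation k (CoordRing m k) (CoordRing m k))
    (A : Matrix m m k) : (constMat (CoordRing m k) A).map D = 0 :=
  Matrix.ext fun i j ↦ D.map_algebraMap (A i j)

/-- The left invariant derivation attached to `A`, with values `g A` and `-A g⁻¹` on the two
generic matrices. -/
def invariantDerivation (A : Matrix m m k) :
    Derivation k (CoordRing m k) (CoordRing m k) :=
  mkDerivation k (Sum.elim (fun q ↦ (genMat * constMat (CoordRing m k) A :) q.1 q.2)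
    fun q ↦ (-(constMat (CoordRing m k) A * genInv) :) q.1 q.2)

theorem invariantDerivation_genMat (A : Matrix m m k) :
    genMat.map (invariantDerivation A) = genMat * constMat _ A := by
  ext1 i j
  simp [genMat, invariantDerivation]

theorem invariantDerivation_genInv (A : Matrix m m k) :
    genInv.map (invariantDerivation A) = -(constMat _ A * genInv) := by
  ext1 i j
  simp [genInv, invariantDerivation]

variable (m k) in
/-- The differential of the right regular representation: `A` acts on polynomials by the left
invariant derivation attached to it. -/
def lieDerivation : Matrix m m k →ₗ⁅k⁆ Derivation k (CoordRing m k) (CoordRing m k) where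
  toFun := invariantDerivation
  map_add' A B := by
    have h (M : Matrix m m (CoordRing m k)) : M.map (invariantDerivation A + invariantDerivation B)
        = M.map (invariantDerivation A) + M.map (invariantDerivation B) := by ext1; simp
    apply derivation_ext_generic <;>
      simp only [h, invariantDerivation_genMat, invariantDerivation_genInv, map_add] <;>
      noncomm_ring
  map_smul' c A := by
    have h (M : Matrix m m (CoordRing m k)) :
        M.map (c • invariantDerivation A) = c • M.map (invariantDerivation A) := by ext1; simp
    apply derivation_ext_generic <;>
      simp only [RingHom.id_apply, h, invariantDerivation_genMat, invariantDerivation_genInv,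
        map_smul, mul_smul_comm, smul_mul_assoc, smul_neg]
  map_lie' {A B} := by
    have h (M : Matrix m m (CoordRing m k)) :
        M.map (⁅invariantDerivation A, invariantDerivation B⁆ : Derivation k _ _) =
          (M.map (invariantDerivation B)).map (invariantDerivation A) -
            (M.map (invariantDerivation A)).map (invariantDerivation B) := by
      ext1; simp [Derivation.commutator_apply]
    have hneg (C : Matrix m m k) (M : Matrix m m (CoordRing m k)) :
        (-M).map (invariantDerivation C) = -M.map (invariantDerivation C) := by ext1; simp
    apply derivation_ext_generic <;>
      simp only [h, hneg, LieRing.of_associative_ring_bracket, invariantDerivation_genMat,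
        invariantDerivation_genInv, map_derivation_mul, map_derivation_constMat, map_sub,
        map_mul] <;>
      noncomm_ring

theorem map_genMat_lieDerivation (A : Matrix m m k) :
    genMat.map (lieDerivation m k A) = genMat * constMat _ A :=
  invariantDerivation_genMat A

theorem map_genInv_lieDerivation (A : Matrix m m k) :
    genInv.map (lieDerivation m k A) = -(constMat _ A * genInv) :=
  invariantDerivation_genInv A

theorem lieDerivation_leftTranslate (A a b : Matrix m m k) (p : CoordRing m k) :
    lieDerivation m k A (leftTranslate a b p) = leftTranslate a b (lieDerivation m k A p) := by
  refine derivation_algHom_eq ?_ ?_ p <;>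
    simp only [leftTranslate, evalPair_genMat, evalPair_genInv, map_genMat_lieDerivation,
      map_genInv_lieDerivation, map_derivation_mul, map_derivation_constMat, map_mul_algHom,
      map_neg_algHom, map_constMat] <;>
    noncomm_ring

theorem lieDerivation_conj_rightTranslate (A : Matrix m m k) (g : GL m k) (p : CoordRing m k) :
    lieDerivation m k ((g : Matrix m m k) * A * ((g⁻¹ : GL m k) : Matrix m m k))
      (rightTranslate g p) = rightTranslate g (lieDerivation m k A p) := by
  have hg : constMat (CoordRing m k) ((g⁻¹ : GL m k) : Matrix m m k) *
      constMat _ (g : Matrix m m k) = 1 := by rw [← map_mul, Units.inv_mul, map_one]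
  refine derivation_algHom_eq ?_ ?_ p <;>
    simp only [rightTranslate, evalPair_genMat, evalPair_genInv, map_genMat_lieDerivation,
      map_genInv_lieDerivation, map_derivation_mul, map_derivation_constMat, map_mul_algHom,
      map_neg_algHom, map_constMat, map_mul (constMat _)]
  · simp only [Matrix.mul_assoc, hg, mul_zero, add_zero, mul_one]
  · simp only [← Matrix.mul_assoc, mul_neg, hg, zero_mul, zero_add, one_mul]

end InvariantDerivations

section SemisimpleOn

variable {k A : Type*} [Field k] [CommRing A] [Algebra k A]

/-- The subspace `U` is stable under `f` and `f` is semisimple on it, in the form that a squarefree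
polynomial in `f` vanishes on `U`. -/
def IsSemisimpleOn {E : Type*} [AddCommGroup E] [Module k E] (f : Module.End k E)
    (U : Submodule k E) : Prop :=
  U ≤ U.comap f ∧ ∃ q : Polynomial k, Squarefree q ∧ ∀ u ∈ U, Polynomial.aeval f q u = 0

theorem exists_squarefree_dvd_dvd {p q : Polynomial k} (hp : Squarefree p) (hq : Squarefree q) :
    ∃ r : Polynomial k, Squarefree r ∧ p ∣ r ∧ q ∣ r := by
  classical
  have hpq : p * q ≠ 0 := mul_ne_zero hp.ne_zero hq.ne_zero
  exact ⟨UniqueFactorizationMonoid.radical (p * q), UniqueFactorizationMonoid.squarefree_radical,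
    (UniqueFactorizationMonoid.dvd_radical_iff hp.isRadical hpq).2 (dvd_mul_right p q),
    (UniqueFactorizationMonoid.dvd_radical_iff hq.isRadical hpq).2 (dvd_mul_left q p)⟩

theorem aeval_apply_eq_zero_of_dvd {E : Type*} [AddCommGroup E] [Module k E] {f : Module.End k E}
    {p q : Polynomial k} (hpq : p ∣ q) {u : E} (hu : Polynomial.aeval f p u = 0) :
    Polynomial.aeval f q u = 0 := by
  obtain ⟨r, rfl⟩ := hpq
  rw [mul_comm, map_mul, Module.End.mul_apply, hu, map_zero]

theorem aeval_apply_of_comp_eq {E F : Type*} [AddCommGroup E] [Module k E] [AddCommGroup F]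
    [Module k F] {Φ : E →ₗ[k] F} {f : Module.End k E} {g : Module.End k F}
    (h : Φ ∘ₗ f = g ∘ₗ Φ) (q : Polynomial k) (u : E) :
    Φ (Polynomial.aeval f q u) = Polynomial.aeval g q (Φ u) := by
  have hpow (n : ℕ) (u : E) : Φ ((f ^ n) u) = (g ^ n) (Φ u) := by
    induction n generalizing u with
    | zero => simp
    | succ n ih =>
      rw [pow_succ, pow_succ, Module.End.mul_apply, Module.End.mul_apply, ih]
      exact congrArg _ (LinearMap.congr_fun h u)
  simp only [Polynomial.aeval_eq_sum_range, LinearMap.sum_apply, LinearMap.smul_apply, map_sum,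
    map_smul, hpow]

theorem aeval_apply_map_one {E : Type*} [AddCommGroup E] [Module k E] {f : Module.End k E}
    {Φ : Polynomial k →ₗ[k] E} (h : ∀ r, Φ (Polynomial.X * r) = f (Φ r)) (q : Polynomial k) :
    Polynomial.aeval f q (Φ 1) = Φ q := by
  rw [← aeval_apply_of_comp_eq (f := Algebra.lmul k _ Polynomial.X) (LinearMap.ext h),
    Polynomial.aeval_algHom_apply, Polynomial.aeval_X_left_apply, Algebra.coe_lmul_eq_mul,
    LinearMap.mul_apply_apply, mul_one]

theorem IsSemisimpleOn.isSemisimple_restrict {E : Type*} [AddCommGroup E] [Module k E]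
    {f : Module.End k E} {U : Submodule k E} (h : IsSemisimpleOn f U) :
    Module.End.IsSemisimple (f.restrict h.1) := by
  have hU := h.1
  obtain ⟨q, hq, hqU⟩ := h.2
  refine Module.End.isSemisimple_of_squarefree_aeval_eq_zero hq (LinearMap.ext fun u ↦ ?_)
  have hrestrict : U.subtype ∘ₗ f.restrict hU = f ∘ₗ U.subtype := rfl
  exact Subtype.ext ((aeval_apply_of_comp_eq hrestrict q u).trans (hqU u u.2))

theorem isSemisimple_algHom_apply {U W : Type*} [AddCommGroup U] [Module k U]
    [FiniteDimensional k U] [AddCommGroup W] [Module k W]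
    (φ : Module.End k U →ₐ[k] Module.End k W) {f : Module.End k U} (hf : f.IsSemisimple) :
    (φ f).IsSemisimple :=
  Module.End.isSemisimple_of_squarefree_aeval_eq_zero hf.minpoly_squarefree <| by
    rw [Polynomial.aeval_algHom_apply, minpoly.aeval, map_zero]

theorem isSemisimple_rTensor_add_lTensor [PerfectField k] {U V : Type*} [AddCommGroup U]
    [Module k U] [FiniteDimensional k U] [AddCommGroup V] [Module k V] [FiniteDimensional k V]
    {f : Module.End k U} {g : Module.End k V} (hf : f.IsSemisimple) (hg : g.IsSemisimple) :
    Module.End.IsSemisimple (f.rTensor V + g.lTensor U) :=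
  have hcomm : Commute (f.rTensor V : Module.End k (U ⊗[k] V)) (g.lTensor U) := by
    rw [commute_iff_eq, Module.End.mul_eq_comp, Module.End.mul_eq_comp,
      LinearMap.rTensor_comp_lTensor, LinearMap.lTensor_comp_rTensor]
  (isSemisimple_algHom_apply (Module.End.rTensorAlgHom k U V) hf).add_of_commute hcomm
    (isSemisimple_algHom_apply (Module.End.lTensorAlgHom k V U) hg)

theorem isSemisimpleOn_range {E F : Type*} [AddCommGroup E] [Module k E] [FiniteDimensional k E]
    [AddCommGroup F] [Module k F] {Φ : E →ₗ[k] F} {f : Module.End k E} {g : Module.End k F}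
    (hf : f.IsSemisimple) (h : Φ ∘ₗ f = g ∘ₗ Φ) : IsSemisimpleOn g (LinearMap.range Φ) := by
  refine ⟨?_, minpoly k f, hf.minpoly_squarefree, ?_⟩
  · rintro _ ⟨t, rfl⟩
    exact ⟨f t, LinearMap.congr_fun h t⟩
  · rintro _ ⟨t, rfl⟩
    rw [← aeval_apply_of_comp_eq h, minpoly.aeval, LinearMap.zero_apply, map_zero]

/-- By the Leibniz rule, multiplication `U ⊗ V → U * V` intertwines `D ⊗ 1 + 1 ⊗ D` with `D`. -/
theorem IsSemisimpleOn.mul [PerfectField k] {D : Derivation k A A} {U V : Submodule k A}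
    [FiniteDimensional k U] [FiniteDimensional k V] (hU : IsSemisimpleOn D.toLinearMap U)
    (hV : IsSemisimpleOn D.toLinearMap V) : IsSemisimpleOn D.toLinearMap (U * V) := by
  have hss := isSemisimple_rTensor_add_lTensor hU.isSemisimple_restrict hV.isSemisimple_restrict
  rw [← Submodule.mulMap_range]
  refine isSemisimpleOn_range hss ?_
  ext u v
  simp [mul_comm, add_comm]

theorem IsSemisimpleOn.pow [PerfectField k] {D : Derivation k A A} {U : Submodule k A}
    [FiniteDimensional k U] (hU : IsSemisimpleOn D.toLinearMap U) (d : ℕ) :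
    IsSemisimpleOn D.toLinearMap (U ^ d) := by
  induction d with
  | zero =>
    have hD : ∀ u ∈ (1 : Submodule k A), D u = 0 := by
      intro u hu
      obtain ⟨c, rfl⟩ := Submodule.mem_one.1 hu
      exact D.map_algebraMap c
    rw [pow_zero]
    refine ⟨fun u hu ↦ ?_, Polynomial.X, Polynomial.prime_X.squarefree, fun u hu ↦ ?_⟩
    · simp [hD u hu]
    · simpa using hD u hu
  | succ d ih =>
    have : FiniteDimensional k ↥(U ^ d) :=
      .of_fg (.pow (Module.Finite.iff_fg.1 ‹_›) d)
    rw [pow_succ]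
    exact ih.mul hU

end SemisimpleOn

section DegreeFiltration

variable (σ k : Type*) [Field k]

/-- The space of polynomials of total degree at most `d`, presented as the `d`-th power of the
space of affine forms: in this form its stability under affine substitutions and under derivations
with affine coefficients is that of the space of affine forms. -/
def degreeLE (d : ℕ) : Submodule k (MvPolynomial σ k) :=
  Submodule.span k (insert 1 (Set.range X)) ^ d

variable {σ k}

theorem X_mem_degreeLE_one (i : σ) : X i ∈ degreeLE σ k 1 := by
  rw [degreeLE, pow_one]
  exact Submodule.subset_span (.inr ⟨i, rfl⟩)

theorem degreeLE_mono : Monotone (degreeLE σ k) :=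
  pow_right_mono₀ (Submodule.one_le.2 (Submodule.subset_span (Set.mem_insert _ _)))

theorem exists_mem_degreeLE (p : MvPolynomial σ k) : ∃ d, p ∈ degreeLE σ k d := by
  induction p using MvPolynomial.induction_on with
  | C a => exact ⟨0, by rw [degreeLE, pow_zero]; exact Submodule.mem_one.2 ⟨a, rfl⟩⟩
  | add p q hp hq =>
    obtain ⟨⟨d, hd⟩, ⟨e, he⟩⟩ := And.intro hp hq
    exact ⟨max d e, add_mem (degreeLE_mono (le_max_left d e) hd)
      (degreeLE_mono (le_max_right d e) he)⟩
  | mul_X p i hp =>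
    obtain ⟨d, hd⟩ := hp
    refine ⟨d + 1, ?_⟩
    rw [degreeLE, pow_succ]
    refine Submodule.mul_mem_mul hd (Submodule.subset_span (.inr ⟨i, rfl⟩))

instance [Finite σ] (d : ℕ) : FiniteDimensional k (degreeLE σ k d) :=
  .of_fg (.pow (Submodule.fg_span ((Set.finite_range X).insert 1)) d)

theorem algHom_mem_degreeLE {τ : Type*} {f : MvPolynomial σ k →ₐ[k] MvPolynomial τ k}
    (hf : ∀ i, f (X i) ∈ degreeLE τ k 1) {d : ℕ} {p : MvPolynomial σ k}
    (hp : p ∈ degreeLE σ k d) : f p ∈ degreeLE τ k d := by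
  have haffine : (Submodule.span k (insert 1 (Set.range X))).map f.toLinearMap ≤
      Submodule.span k (insert 1 (Set.range X)) := by
    rw [Submodule.map_span_le]
    rintro _ (rfl | ⟨i, rfl⟩)
    · rw [AlgHom.toLinearMap_apply, map_one]
      exact Submodule.subset_span (Set.mem_insert _ _)
    · simpa only [degreeLE, pow_one] using! hf i
  have hfp := Submodule.mem_map_of_mem (f := f.toLinearMap) hp
  rw [degreeLE, Submodule.map_pow] at hfp
  exact pow_le_pow_left₀ bot_le haffine d hfp

theorem derivation_mem_degreeLE {D : Derivation k (MvPolynomial σ k) (MvPolynomial σ k)}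
    (hD : ∀ i, D (X i) ∈ degreeLE σ k 1) {d : ℕ} {p : MvPolynomial σ k}
    (hp : p ∈ degreeLE σ k d) : D p ∈ degreeLE σ k d := by
  induction d generalizing p with
  | zero =>
    rw [degreeLE, pow_zero] at hp
    obtain ⟨c, rfl⟩ := Submodule.mem_one.1 hp
    rw [D.map_algebraMap]
    exact zero_mem _
  | succ d ih =>
    have haffine : Submodule.span k (insert 1 (Set.range X)) ≤
        (degreeLE σ k 1).comap D.toLinearMap := by
      rw [Submodule.span_le]
      rintro _ (rfl | ⟨i, rfl⟩)
      · simp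
      · exact hD i
    rw [degreeLE, pow_succ] at hp ⊢
    induction hp using Submodule.mul_induction_on' with
    | mem_mul_mem u hu v hv =>
      have hDv : D v ∈ Submodule.span k (insert 1 (Set.range X)) := by
        simpa only [degreeLE, pow_one] using! haffine hv
      rw [D.leibniz, smul_eq_mul, smul_eq_mul, mul_comm v]
      exact add_mem (Submodule.mul_mem_mul hu hDv) (Submodule.mul_mem_mul (ih hu) hv)
    | add p _ q _ hp hq =>
      rw [map_add]
      exact add_mem hp hq

end DegreeFiltration

section ActionOnDegreeLE

variable {m k : Type*} [Fintype m] [DecidableEq m] [Field k]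

theorem genMat_mul_constMat_mem_degreeLE (A : Matrix m m k) (i j : m) :
    (genMat * constMat _ A : Matrix m m (CoordRing m k)) i j ∈ degreeLE _ k 1 := by
  refine Submodule.sum_mem _ fun l _ ↦ ?_
  rw [mul_comm]
  change algebraMap k _ (A l j) * _ ∈ _
  rw [← Algebra.smul_def]
  exact Submodule.smul_mem _ _ (X_mem_degreeLE_one _)

theorem constMat_mul_genInv_mem_degreeLE (A : Matrix m m k) (i j : m) :
    (constMat _ A * genInv : Matrix m m (CoordRing m k)) i j ∈ degreeLE _ k 1 := by
  refine Submodule.sum_mem _ fun l _ ↦ ?_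
  change algebraMap k _ (A i l) * _ ∈ _
  rw [← Algebra.smul_def]
  exact Submodule.smul_mem _ _ (X_mem_degreeLE_one _)

theorem rightTranslate_mem_degreeLE (g : GL m k) {d : ℕ} {p : CoordRing m k}
    (hp : p ∈ degreeLE _ k d) : rightTranslate g p ∈ degreeLE _ k d := by
  refine algHom_mem_degreeLE ?_ hp
  rintro (⟨i, j⟩ | ⟨i, j⟩)
  · simpa only [rightTranslate, evalPair, aeval_X] using!
      genMat_mul_constMat_mem_degreeLE (g : Matrix m m k) i j
  · simpa only [rightTranslate, evalPair, aeval_X] using!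
      constMat_mul_genInv_mem_degreeLE ((g⁻¹ : GL m k) : Matrix m m k) i j

theorem lieDerivation_X_inl (A : Matrix m m k) (i j : m) :
    lieDerivation m k A (X (.inl (i, j))) =
      (genMat * constMat _ A : Matrix m m (CoordRing m k)) i j :=
  congrFun₂ (map_genMat_lieDerivation A) i j

theorem lieDerivation_X_inr (A : Matrix m m k) (i j : m) :
    lieDerivation m k A (X (.inr (i, j))) =
      -(constMat _ A * genInv : Matrix m m (CoordRing m k)) i j :=
  congrFun₂ (map_genInv_lieDerivation A) i j

theorem lieDerivation_mem_degreeLE (A : Matrix m m k) {d : ℕ} {p : CoordRing m k}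
    (hp : p ∈ degreeLE _ k d) : lieDerivation m k A p ∈ degreeLE _ k d := by
  refine derivation_mem_degreeLE ?_ hp
  rintro (⟨i, j⟩ | ⟨i, j⟩)
  · rw [lieDerivation_X_inl]
    exact genMat_mul_constMat_mem_degreeLE A i j
  · rw [lieDerivation_X_inr]
    exact neg_mem (constMat_mul_genInv_mem_degreeLE A i j)

theorem aeval_lieDerivation_X_inl (A : Matrix m m k) (q : Polynomial k) (i j : m) :
    Polynomial.aeval (lieDerivation m k A).toLinearMap q (X (.inl (i, j))) =
      (genMat * constMat _ (Polynomial.aeval A q) : Matrix m m (CoordRing m k)) i j := by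
  let Φ : Polynomial k →ₗ[k] CoordRing m k :=
    Matrix.entryLinearMap k _ i j ∘ₗ LinearMap.mulLeft k genMat ∘ₗ
      ((constMat _).comp (Polynomial.aeval A)).toLinearMap
  have hΦ (r) : Φ (Polynomial.X * r) = lieDerivation m k A (Φ r) := by
    have h := map_derivation_mul (lieDerivation m k A) genMat (constMat _ (Polynomial.aeval A r))
    rw [map_genMat_lieDerivation, map_derivation_constMat, mul_zero, add_zero, mul_assoc,
      ← map_mul] at h
    simpa [Φ] using! (congrFun₂ h i j).symm
  simpa [Φ, genMat] using! aeval_apply_map_one hΦ q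

theorem aeval_lieDerivation_X_inr (A : Matrix m m k) (q : Polynomial k) (i j : m) :
    Polynomial.aeval (lieDerivation m k A).toLinearMap q (X (.inr (i, j))) =
      (constMat _ (Polynomial.aeval (-A) q) * genInv : Matrix m m (CoordRing m k)) i j := by
  let Φ : Polynomial k →ₗ[k] CoordRing m k :=
    Matrix.entryLinearMap k _ i j ∘ₗ LinearMap.mulRight k genInv ∘ₗ
      ((constMat _).comp (Polynomial.aeval (-A))).toLinearMap
  have hΦ (r) : Φ (Polynomial.X * r) = lieDerivation m k A (Φ r) := by
    have h := map_derivation_mul (lieDerivation m k A)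
      (constMat _ (Polynomial.aeval (-A) r)) genInv
    rw [map_genInv_lieDerivation, map_derivation_constMat, zero_mul, zero_add, ← neg_mul,
      ← mul_assoc, ← map_neg, ← map_mul] at h
    rw [mul_comm]
    simpa [Φ] using! (congrFun₂ h i j).symm
  simpa [Φ, genInv] using! aeval_apply_map_one hΦ q

theorem isSemisimpleOn_lieDerivation [CharZero k] {A : Matrix m m k}
    (hA : Module.End.IsSemisimple (Matrix.toLin' A)) (d : ℕ) :
    IsSemisimpleOn (lieDerivation m k A).toLinearMap (degreeLE ((m × m) ⊕ (m × m)) k d) := by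
  suffices h : IsSemisimpleOn (lieDerivation m k A).toLinearMap
      (Submodule.span k (insert (1 : CoordRing m k) (Set.range X))) by
    have := Module.Finite.iff_fg.2 (Submodule.fg_span (R := k)
      ((Set.finite_range (X : _ → CoordRing m k)).insert 1))
    exact h.pow d
  have hneg : Squarefree (minpoly k (-A)) := by
    rw [← Matrix.minpoly_toLin', map_neg]
    exact (Module.End.isSemisimple_neg.2 hA).minpoly_squarefree
  have hA : Squarefree (minpoly k A) := Matrix.minpoly_toLin' A ▸ hA.minpoly_squarefree
  obtain ⟨r₁, hr₁, hXr₁, hAr₁⟩ :=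
    exists_squarefree_dvd_dvd Polynomial.prime_X.squarefree hA
  obtain ⟨r, hr, hr₁r, hnegr⟩ := exists_squarefree_dvd_dvd hr₁ hneg
  refine ⟨fun u hu ↦ ?_, r, hr, fun u hu ↦ ?_⟩
  · simpa only [degreeLE, pow_one] using!
      lieDerivation_mem_degreeLE A (d := 1) (by rwa [degreeLE, pow_one])
  induction hu using Submodule.span_induction with
  | zero => exact map_zero _
  | add _ _ _ _ hu hv => rw [map_add, hu, hv, add_zero]
  | smul c _ _ hu => rw [map_smul, hu, smul_zero]
  | mem u hu =>
    obtain rfl | ⟨⟨i, j⟩ | ⟨i, j⟩, rfl⟩ := hu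
    · exact aeval_apply_eq_zero_of_dvd (hXr₁.trans hr₁r) (by simp)
    · refine aeval_apply_eq_zero_of_dvd (hAr₁.trans hr₁r) ?_
      simp [aeval_lieDerivation_X_inl]
    · refine aeval_apply_eq_zero_of_dvd hnegr ?_
      simp [aeval_lieDerivation_X_inr]

end ActionOnDegreeLE

section VanishingIdeal

variable {m k : Type*} [Fintype m] [DecidableEq m] [Field k]

/-- The ideal of polynomials vanishing on a set of invertible matrices. -/
def vanishingIdeal (S : Set (GL m k)) : Ideal (CoordRing m k) :=
  ⨅ g ∈ S, RingHom.ker (evalGL g)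

theorem mem_vanishingIdeal {S : Set (GL m k)} {p : CoordRing m k} :
    p ∈ vanishingIdeal S ↔ ∀ g ∈ S, evalGL g p = 0 := by
  simp only [vanishingIdeal, Submodule.mem_iInf, RingHom.mem_ker]

theorem isRadical_vanishingIdeal (S : Set (GL m k)) : (vanishingIdeal S).IsRadical := by
  rintro p ⟨r, hp⟩
  rw [mem_vanishingIdeal] at hp ⊢
  exact fun g hg ↦ eq_zero_of_pow_eq_zero (by rw [← map_pow]; exact hp g hg)

variable {G : Subgroup (GL m k)} {g : GL m k}

theorem rightTranslate_mem_vanishingIdeal (hg : g ∈ G) {p : CoordRing m k}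
    (hp : p ∈ vanishingIdeal (G : Set (GL m k))) :
    rightTranslate g p ∈ vanishingIdeal (G : Set (GL m k)) := by
  rw [mem_vanishingIdeal] at hp ⊢
  intro h hh
  rw [evalGL_rightTranslate]
  exact hp _ (mul_mem hh hg)

/-- The Lie algebra of (the Zariski closure of) `G`: the matrices whose left invariant derivation
preserves the ideal of `G`. -/
def lieAlgebraOf (G : Subgroup (GL m k)) : LieSubalgebra k (Matrix m m k) where
  carrier := {A | ∀ p ∈ vanishingIdeal (G : Set (GL m k)),
    lieDerivation m k A p ∈ vanishingIdeal (G : Set (GL m k))}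
  add_mem' hA hB p hp := by
    rw [map_add]
    exact add_mem (hA p hp) (hB p hp)
  zero_mem' p _ := by
    rw [map_zero]
    exact zero_mem _
  smul_mem' c A hA p hp := by
    rw [map_smul, Derivation.smul_apply]
    exact Submodule.smul_of_tower_mem _ c (hA p hp)
  lie_mem' hA hB p hp := by
    rw [LieHom.map_lie, Derivation.commutator_apply]
    exact sub_mem (hA _ (hB p hp)) (hB _ (hA p hp))

theorem mem_lieAlgebraOf_of_evalGL (hg : g ∈ G) {A : Matrix m m k}
    (hA : ∀ p ∈ vanishingIdeal (G : Set (GL m k)), evalGL g (lieDerivation m k A p) = 0) :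
    A ∈ lieAlgebraOf G := by
  intro p hp
  rw [mem_vanishingIdeal] at hp ⊢
  intro h hh
  have hp' : leftTranslate ((h * g⁻¹ : GL m k) : Matrix m m k) ((h * g⁻¹)⁻¹ : GL m k) p ∈
      vanishingIdeal (G : Set (GL m k)) := by
    rw [mem_vanishingIdeal]
    intro h' hh'
    rw [evalGL_leftTranslate_coe]
    exact hp _ (mul_mem (mul_mem hh (inv_mem hg)) hh')
  have hgp := hA _ hp'
  rwa [lieDerivation_leftTranslate, evalGL_leftTranslate_coe, inv_mul_cancel_right] at hgp

theorem conj_mem_lieAlgebraOf (hg : g ∈ G) {A : Matrix m m k} (hA : A ∈ lieAlgebraOf G) :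
    (g : Matrix m m k) * A * ((g⁻¹ : GL m k) : Matrix m m k) ∈ lieAlgebraOf G := by
  intro p hp
  have hgp : rightTranslate g (rightTranslate g⁻¹ p) = p := by
    rw [← AlgHom.comp_apply, ← rightTranslate_mul, mul_inv_cancel, rightTranslate_one,
      AlgHom.id_apply]
  rw [← hgp, lieDerivation_conj_rightTranslate]
  exact rightTranslate_mem_vanishingIdeal hg
    (hA _ (rightTranslate_mem_vanishingIdeal (inv_mem hg) hp))

end VanishingIdeal

section StandardRepresentation

variable {m k : Type*} [Fintype m] [DecidableEq m] [Field k] {G : Subgroup (GL m k)}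

/- A linear form `f` killing `U` gives the matrix coefficient `g ↦ f (g u)`, which vanishes on `G`;
its derivative along `A` at `1` is `f (A u)`. -/
theorem mulVec_mem_of_mem_lieAlgebraOf {U : Submodule k (m → k)}
    (hU : ∀ g ∈ G, ∀ u ∈ U, (g : Matrix m m k) *ᵥ u ∈ U) {A : Matrix m m k}
    (hA : A ∈ lieAlgebraOf G) {u : m → k} (hu : u ∈ U) : A *ᵥ u ∈ U := by
  by_contra hAu
  obtain ⟨f, hf, hfU⟩ := Submodule.exists_le_ker_of_notMem hAu
  let p : CoordRing m k := ∑ i, ∑ j, (f (fun i' ↦ if i = i' then 1 else 0) * u j) • genMat i j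
  have hp (l : CoordRing m k →ₗ[k] k) : l p = f (genMat.map l *ᵥ u) := by
    rw [LinearMap.pi_apply_eq_sum_univ f (genMat.map l *ᵥ u)]
    simp only [p, map_sum, map_smul, mulVec, dotProduct, Matrix.map_apply, smul_eq_mul,
      Finset.sum_mul]
    exact Finset.sum_congr rfl fun i _ ↦ Finset.sum_congr rfl fun j _ ↦ by ring
  have hpG : p ∈ vanishingIdeal (G : Set (GL m k)) := by
    rw [mem_vanishingIdeal]
    intro g hg
    have h := hp (evalGL g).toLinearMap
    rw [show genMat.map (evalGL g).toLinearMap = (g : Matrix m m k) from evalPair_genMat _ _] at h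
    exact h.trans (hfU (hU g hg u hu))
  have hA1 : genMat.map ((evalGL 1).toLinearMap ∘ₗ (lieDerivation m k A).toLinearMap) = A := by
    have h := congrArg (fun M : Matrix m m _ ↦ M.map (evalGL 1)) (map_genMat_lieDerivation A)
    simpa only [map_mul_algHom, map_constMat, constMat_self, evalGL_genMat, Units.val_one,
      one_mul] using! h
  have h := hp ((evalGL 1).toLinearMap ∘ₗ (lieDerivation m k A).toLinearMap)
  rw [hA1] at h
  exact hf (h.symm.trans (mem_vanishingIdeal.1 (hA p hpG) 1 (one_mem G)))

/-- The inverse image of a Lie submodule of `k ^ m` under an element of `G`. -/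
def translateLieSubmodule (g : G) (M : LieSubmodule k (lieAlgebraOf G) (m → k)) :
    LieSubmodule k (lieAlgebraOf G) (m → k) where
  __ := M.toSubmodule.comap (stdRepOf G g)
  lie_mem {A v} hv := by
    have h := M.lie_mem (x := ⟨_, conj_mem_lieAlgebraOf g.2 A.2⟩) hv
    change ((g : GL m k) * (A : Matrix m m k) * ((g : GL m k)⁻¹ : GL m k) : Matrix m m k) *ᵥ
      ((g : GL m k) : Matrix m m k) *ᵥ v ∈ M at h
    change ((g : GL m k) : Matrix m m k) *ᵥ (A : Matrix m m k) *ᵥ v ∈ M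
    rwa [mulVec_mulVec, Matrix.mul_assoc _ _ ((g : GL m k) : Matrix m m k), Units.inv_mul, mul_one,
      ← mulVec_mulVec] at h

theorem mem_translateLieSubmodule {g : G} {M : LieSubmodule k (lieAlgebraOf G) (m → k)}
    {v : m → k} : v ∈ translateLieSubmodule g M ↔ stdRepOf G g v ∈ M :=
  Iff.rfl

/-- The translation by `g` as an automorphism of the lattice of Lie submodules. -/
def translateLieSubmoduleIso (g : G) : LieSubmodule k (lieAlgebraOf G) (m → k) ≃o
    LieSubmodule k (lieAlgebraOf G) (m → k) where
  toFun := translateLieSubmodule g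
  invFun := translateLieSubmodule g⁻¹
  left_inv M := by ext v; simp [mem_translateLieSubmodule]
  right_inv M := by ext v; simp [mem_translateLieSubmodule]
  map_rel_iff' {M N} := by
    refine ⟨fun h v hv ↦ ?_, fun h v hv ↦ h hv⟩
    have hv' := @h (stdRepOf G g⁻¹ v)
    simpa [mem_translateLieSubmodule, hv] using! hv'

/- Translation by `G` preserves the socle, whose `G`-stable complement would contain a simple
submodule if it were nonzero. -/
theorem complementedLattice_lieSubmodule [(stdRepOf G).IsSemisimpleRepresentation] :
    ComplementedLattice (LieSubmodule k (lieAlgebraOf G) (m → k)) := by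
  refine complementedLattice_of_sSup_atoms_eq_top ?_
  set U := sSup {M : LieSubmodule k (lieAlgebraOf G) (m → k) | IsAtom M} with hU
  have hU_translate (g : G) : translateLieSubmoduleIso g U = U := by
    rw [hU, OrderIso.map_sSup_eq_sSup_symm_preimage]
    congr 1
    ext M
    exact OrderIso.isAtom_iff _ _
  obtain ⟨C, hC⟩ := exists_isCompl (α := Subrepresentation (stdRepOf G))
    ⟨U.toSubmodule, fun g v hv ↦ mem_translateLieSubmodule.1 ((hU_translate g).ge hv)⟩
  let C' : LieSubmodule k (lieAlgebraOf G) (m → k) :=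
    { C.toSubmodule with
      lie_mem {A v} hv := mulVec_mem_of_mem_lieAlgebraOf
        (fun g hg u hu ↦ C.apply_mem_toSubmodule ⟨g, hg⟩ hu) A.2 hv }
  have hC_bot : C' = ⊥ := by
    obtain hC' | ⟨M, hM, hMC⟩ := IsAtomic.eq_bot_or_exists_atom_le C'
    · exact hC'
    · refine absurd ((LieSubmodule.eq_bot_iff M).2 fun v hv ↦ ?_) hM.1
      have hMU : M ≤ U := le_sSup hM
      exact (congrArg Subrepresentation.toSubmodule hC.inf_eq_bot).le ⟨hMU hv, hMC hv⟩
  have hC_sup : U.toSubmodule ⊔ C'.toSubmodule = ⊤ :=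
    congrArg Subrepresentation.toSubmodule hC.sup_eq_top
  rw [hC_bot, LieSubmodule.bot_toSubmodule, sup_bot_eq] at hC_sup
  rwa [← LieSubmodule.toSubmodule_eq_top]

end StandardRepresentation

section Derivations

section Field

variable {k F : Type*} [Field k] [CharZero k] [Field F] [Algebra k F] [Algebra.EssFiniteType k F]

theorem mapBaseChange_polynomial_injective [Algebra k[X] F] [IsScalarTower k k[X] F]
    (hinj : Function.Injective (algebraMap k[X] F)) :
    Function.Injective (KaehlerDifferential.mapBaseChange k k[X] F) := by
  have : FaithfulSMul k[X] F := (faithfulSMul_iff_algebraMap_injective _ _).2 hinj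
  let := FractionRing.liftAlgebra k[X] F
  have : IsScalarTower k (FractionRing k[X]) F := .of_algebraMap_eq fun x ↦ by
    rw [IsScalarTower.algebraMap_apply k k[X] F,
      IsScalarTower.algebraMap_apply k[X] (FractionRing k[X]) F,
      IsScalarTower.algebraMap_apply k k[X] (FractionRing k[X])]
  have : Algebra.EssFiniteType (FractionRing k[X]) F := .of_comp k _ _
  have : CharZero (FractionRing k[X]) :=
    charZero_of_injective_algebraMap (FaithfulSMul.algebraMap_injective k _)
  have : Algebra.FormallySmooth (FractionRing k[X]) F := .of_perfectField
  have : Algebra.FormallySmooth k[X] (FractionRing k[X]) :=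
    .of_isLocalization (nonZeroDivisors k[X])
  have : Algebra.FormallySmooth k[X] F := .comp _ (FractionRing k[X]) _
  rw [injective_iff_map_eq_zero]
  intro x hx
  obtain ⟨x, rfl⟩ := (Algebra.H1Cotangent.exact_δ_mapBaseChange k k[X] F x).mp hx
  rw [Subsingleton.elim x 0, map_zero]

theorem exists_derivation_apply_ne_zero {q : F} (hq : Transcendental k q) :
    ∃ δ : Derivation k F F, δ q ≠ 0 := by
  let := (Polynomial.aeval q : k[X] →ₐ[k] F).toAlgebra
  have : IsScalarTower k k[X] F := .of_algebraMap_eq fun x ↦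
    ((Polynomial.aeval q).commutes x).symm
  have hX : (1 : F) ⊗ₜ[k[X]] KaehlerDifferential.D k k[X] Polynomial.X ≠ 0 := by
    intro h
    have h' := congrArg (TensorProduct.rid k[X] F) (congrArg (LinearMap.lTensor F
      (Polynomial.derivative' : Derivation k k[X] k[X]).liftKaehlerDifferential) h)
    simp at h'
  have hdq : KaehlerDifferential.D k F q ≠ 0 := by
    intro h
    refine hX (mapBaseChange_polynomial_injective (transcendental_iff_injective.1 hq) ?_)
    rw [map_zero, KaehlerDifferential.mapBaseChange_tmul, KaehlerDifferential.map_D,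
      show algebraMap k[X] F Polynomial.X = q from Polynomial.aeval_X q, h, smul_zero]
  obtain ⟨f, hf, -⟩ := Submodule.exists_le_ker_of_notMem (p := (⊥ : Submodule F (Ω[F⁄k])))
    (by simpa using hdq)
  exact ⟨f.compDer (KaehlerDifferential.D k F), hf⟩

end Field

variable {σ k : Type*} [Finite σ] [Field k]

-- Only finitely many denominators occur in the values of `δ` on the variables: clear them.
theorem exists_derivation_eq_mul {A F : Type*} [CommRing A] [Algebra k A] [Field F] [Algebra A F]
    [IsFractionRing A F] [Algebra k F] [IsScalarTower k A F] {π : MvPolynomial σ k →ₐ[k] A}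
    (hπ : Function.Surjective π) (δ : Derivation k F F) :
    ∃ (D : Derivation k (MvPolynomial σ k) (MvPolynomial σ k)) (b : nonZeroDivisors A), ∀ p,
      algebraMap A F (π (D p)) = algebraMap A F b * δ (algebraMap A F (π p)) := by
  classical
  have := Fintype.ofFinite σ
  obtain ⟨b, hb⟩ := IsLocalization.exist_integer_multiples_of_finset (nonZeroDivisors A)
    (Finset.univ.image fun i : σ ↦ δ (algebraMap A F (π (X i))))
  have hX (i : σ) :
      ∃ r, algebraMap A F (π r) = algebraMap A F b * δ (algebraMap A F (π (X i))) := by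
    obtain ⟨a, ha⟩ := hb _ (Finset.mem_image_of_mem _ (Finset.mem_univ i))
    obtain ⟨r, rfl⟩ := hπ a
    exact ⟨r, ha.trans (Algebra.smul_def (b : A) _)⟩
  choose r hr using hX
  refine ⟨mkDerivation k r, b, fun p ↦ ?_⟩
  induction p using MvPolynomial.induction_on with
  | C a =>
    rw [← algebraMap_eq, Derivation.map_algebraMap, AlgHom.commutes,
      ← IsScalarTower.algebraMap_apply, Derivation.map_algebraMap, map_zero, map_zero, mul_zero]
  | add p q hp hq => simp only [map_add, hp, hq, mul_add]
  | mul_X p i hp =>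
    simp only [Derivation.leibniz, smul_eq_mul, map_add, map_mul, hp, mkDerivation_X, hr]
    ring

variable [CharZero k]

theorem exists_derivation_notMem_of_isPrime (P : Ideal (MvPolynomial σ k)) [P.IsPrime]
    {q : MvPolynomial σ k} (hq : Transcendental k (Ideal.Quotient.mk P q)) :
    ∃ D : Derivation k (MvPolynomial σ k) (MvPolynomial σ k), (∀ p ∈ P, D p ∈ P) ∧ D q ∉ P := by
  let A := MvPolynomial σ k ⧸ P
  let F := FractionRing A
  have hinj : Function.Injective (algebraMap A F) := IsFractionRing.injective A F
  have : Algebra.EssFiniteType A F := .of_isLocalization F (nonZeroDivisors A)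
  have : Algebra.EssFiniteType k F := .comp k A F
  obtain ⟨δ, hδ⟩ := exists_derivation_apply_ne_zero ((transcendental_algebraMap_iff hinj).2 hq)
  obtain ⟨D, b, hD⟩ := exists_derivation_eq_mul (Ideal.Quotient.mkₐ_surjective k P) δ
  have hmem (p) : D p ∈ P ↔ δ (algebraMap A F (Ideal.Quotient.mk P p)) = 0 := by
    rw [← Ideal.Quotient.eq_zero_iff_mem, ← map_eq_zero_iff _ hinj]
    exact (hD p).congr_left.trans
      (mul_eq_zero_iff_left (IsFractionRing.to_map_ne_zero_of_mem_nonZeroDivisors b.2))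
  refine ⟨D, fun p hp ↦ ?_, fun h ↦ hδ ((hmem q).1 h)⟩
  rw [hmem, Ideal.Quotient.eq_zero_iff_mem.2 hp, map_zero, map_zero]

end Derivations

section MinimalPrimes

variable {R : Type*} [CommRing R] [IsNoetherianRing R] {I : Ideal R}

theorem exists_mem_minimalPrimes_transcendental {k : Type*} [Field k] [Algebra k R]
    (hI : I.IsRadical) {q : R} (hq : Transcendental k (Ideal.Quotient.mk I q)) :
    ∃ P ∈ I.minimalPrimes, Transcendental k (Ideal.Quotient.mk P q) := by
  have hmk (J : Ideal R) (c : k[X]) :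
      Polynomial.aeval (Ideal.Quotient.mk J q) c = 0 ↔ Polynomial.aeval q c ∈ J := by
    rw [← Ideal.Quotient.eq_zero_iff_mem, ← Ideal.Quotient.mkₐ_eq_mk k,
      Polynomial.aeval_algHom_apply]
  simp only [transcendental_iff, hmk] at hq ⊢
  by_contra! hcon
  choose! c hc hc0 using hcon
  have hfin := Ideal.finite_minimalPrimes_of_isNoetherianRing _ I
  have hinf : sInf I.minimalPrimes = I := I.sInf_minimalPrimes.trans hI.radical
  refine Finset.prod_ne_zero_iff.2 (fun P hP ↦ hc0 P (hfin.mem_toFinset.1 hP))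
    (hq _ (hinf.le (Submodule.mem_sInf.2 fun P hP ↦ ?_)))
  rw [map_prod]
  exact Ideal.mem_of_dvd _ (Finset.dvd_prod_of_mem _ (hfin.mem_toFinset.2 hP)) (hc P hP)

theorem exists_notMem_forall_mem_minimalPrimes {P : Ideal R} (hP : P ∈ I.minimalPrimes) :
    ∃ t ∉ P, ∀ Q ∈ I.minimalPrimes, Q ≠ P → t ∈ Q := by
  classical
  have hfin := Ideal.finite_minimalPrimes_of_isNoetherianRing _ I
  have hPQ : ∀ Q ∈ I.minimalPrimes, Q ≠ P → ∃ t ∈ Q, t ∉ P := fun Q hQ hne ↦ by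
    by_contra! hle
    exact hne (le_antisymm hle (hP.2 hQ.1 hle))
  choose! t htQ htP using hPQ
  refine ⟨∏ Q ∈ hfin.toFinset.erase P, t Q, fun h ↦ ?_, fun Q hQ hne ↦ ?_⟩
  · obtain ⟨Q, hQ, htQP⟩ := hP.1.1.prod_mem_iff.1 h
    rw [Finset.mem_erase, hfin.mem_toFinset] at hQ
    exact htP Q hQ.2 hQ.1 htQP
  · exact Ideal.mem_of_dvd _
      (Finset.dvd_prod_of_mem _ (Finset.mem_erase.2 ⟨hne, hfin.mem_toFinset.2 hQ⟩)) (htQ Q hQ hne)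

end MinimalPrimes

theorem exists_derivation_notMem_of_isRadical {σ k : Type*} [Finite σ] [Field k] [CharZero k]
    {I : Ideal (MvPolynomial σ k)} (hI : I.IsRadical) {q : MvPolynomial σ k}
    (hq : Transcendental k (Ideal.Quotient.mk I q)) :
    ∃ D : Derivation k (MvPolynomial σ k) (MvPolynomial σ k), (∀ p ∈ I, D p ∈ I) ∧ D q ∉ I := by
  obtain ⟨P, hP, hPq⟩ := exists_mem_minimalPrimes_transcendental hI hq
  have := hP.1.1
  obtain ⟨D, hD, hDq⟩ := exists_derivation_notMem_of_isPrime P hPq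
  obtain ⟨t, htP, ht⟩ := exists_notMem_forall_mem_minimalPrimes hP
  refine ⟨t • D, fun p hp ↦ ?_, fun h ↦ ?_⟩
  · rw [Derivation.smul_apply, smul_eq_mul, ← hI.radical, ← Ideal.sInf_minimalPrimes,
      Submodule.mem_sInf]
    intro Q hQ
    obtain rfl | hne := eq_or_ne Q P
    · exact Ideal.mul_mem_left _ _ (hD p (hP.1.2 hp))
    · exact Ideal.mul_mem_right _ _ (ht Q hQ hne)
  · exact (this.mem_or_mem (hP.1.2 h)).elim htP hDq

section FiniteValues

variable {m k : Type*} [Fintype m] [DecidableEq m] [Field k] {G : Subgroup (GL m k)}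
  {g : GL m k} {D : Derivation k (CoordRing m k) (CoordRing m k)}

theorem genInv_map_derivation_map_evalGL
    (hD : ∀ p ∈ vanishingIdeal (G : Set (GL m k)), evalGL g (D p) = 0) :
    ((genInv (m := m) (k := k)).map D).map (evalGL g) =
      -(((g⁻¹ : GL m k) : Matrix m m k) * (genMat.map D).map (evalGL g) * (g⁻¹ : GL m k)) := by
  have hmul : ((genMat * genInv : Matrix m m (CoordRing m k)).map D).map (evalGL g) = 0 := by
    ext i j
    have hmem : (genMat * genInv - constMat _ 1 : Matrix m m (CoordRing m k)) i j ∈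
        vanishingIdeal (G : Set (GL m k)) := mem_vanishingIdeal.2 fun h _ ↦ by
      have hone := congrFun₂ (map_mul_algHom (evalGL h) (genMat (m := m) (k := k)) genInv) i j
      rw [evalGL_genMat, evalGL_genInv, Units.mul_inv] at hone
      rw [Matrix.sub_apply, map_sub, sub_eq_zero]
      exact hone.trans (congrFun₂ (map_constMat (evalGL h) 1) i j).symm
    have hD' := hD _ hmem
    rw [Matrix.sub_apply, map_sub, map_sub] at hD'
    rwa [show D ((constMat _ 1 : Matrix m m (CoordRing m k)) i j) = 0 from
      congrFun₂ (map_derivation_constMat D 1) i j, map_zero, sub_zero] at hD'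
  have hadd : (genMat.map D).map (evalGL g) * ((g⁻¹ : GL m k) : Matrix m m k) +
      (g : Matrix m m k) * (genInv.map D).map (evalGL g) = 0 := by
    rw [map_derivation_mul, Matrix.map_add _ (map_add _), map_mul_algHom, map_mul_algHom] at hmul
    simpa only [evalGL_genMat, evalGL_genInv] using hmul
  have hinv := congrArg (((g⁻¹ : GL m k) : Matrix m m k) * ·) hadd
  simp only [mul_add, ← mul_assoc, Units.inv_mul, one_mul, mul_zero] at hinv
  exact eq_neg_of_add_eq_zero_right hinv

-- Translating the tangent vector given by `D` from `g` back to the identity yields `A`.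
theorem exists_mem_lieAlgebraOf_evalGL_eq (hg : g ∈ G)
    (hD : ∀ p ∈ vanishingIdeal (G : Set (GL m k)), evalGL g (D p) = 0) :
    ∃ A ∈ lieAlgebraOf G, ∀ p, evalGL g (lieDerivation m k A p) = evalGL g (D p) := by
  let A : Matrix m m k := (g⁻¹ : GL m k) * (genMat.map D).map (evalGL g)
  have hA (p) : evalGL g (lieDerivation m k A p) = evalGL g (D p) := by
    refine algHom_derivation_eq ?_ ?_ p
    · rw [map_genMat_lieDerivation, map_mul_algHom, map_constMat, constMat_self,
        evalGL_genMat, ← mul_assoc, Units.mul_inv, one_mul]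
    · rw [genInv_map_derivation_map_evalGL hD, map_genInv_lieDerivation, map_neg_algHom,
        map_mul_algHom, map_constMat, constMat_self, evalGL_genInv]
  exact ⟨A, mem_lieAlgebraOf_of_evalGL hg fun p hp ↦ (hA p).trans (hD p hp), hA⟩

-- If `q` were transcendental modulo the ideal of `G`, some derivation of the coordinate ring of
-- `G` would not kill it.
theorem finite_image_evalGL [CharZero k] {q : CoordRing m k}
    (hq : ∀ A ∈ lieAlgebraOf G, lieDerivation m k A q ∈ vanishingIdeal (G : Set (GL m k))) :
    ((evalGL · q) '' (G : Set (GL m k))).Finite := by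
  have halg : IsAlgebraic k (Ideal.Quotient.mk (vanishingIdeal (G : Set (GL m k))) q) := by
    by_contra htr
    obtain ⟨D, hD, hDq⟩ :=
      exists_derivation_notMem_of_isRadical (isRadical_vanishingIdeal _) htr
    refine hDq (mem_vanishingIdeal.2 fun g hg ↦ ?_)
    obtain ⟨A, hA, hAD⟩ :=
      exists_mem_lieAlgebraOf_evalGL_eq hg fun p hp ↦ mem_vanishingIdeal.1 (hD p hp) g hg
    exact (hAD q).symm.trans (mem_vanishingIdeal.1 (hq A hA) g hg)
  obtain ⟨c, hc, hcq⟩ := halg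
  rw [← Ideal.Quotient.mkₐ_eq_mk k, Polynomial.aeval_algHom_apply, Ideal.Quotient.mkₐ_eq_mk,
    Ideal.Quotient.eq_zero_iff_mem, mem_vanishingIdeal] at hcq
  refine (Polynomial.finite_setOfPred_isRoot hc).subset ?_
  rintro _ ⟨g, hg, rfl⟩
  simpa [Polynomial.IsRoot, ← Polynomial.aeval_algHom_apply] using hcq g hg

end FiniteValues

section Separation

variable {m k : Type*} [Fintype m] [DecidableEq m] [Field k]

theorem exists_evalGL_eq_evalGL_linearMap (g : GL m k)
    (Q : CoordRing m k →ₗ[k] CoordRing m k) (p : CoordRing m k) :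
    ∃ a, ∀ h : GL m k, evalGL h a = evalGL h (Q (rightTranslate (h⁻¹ * g) p)) := by
  obtain ⟨s, hs⟩ := exists_rightTranslate_eq_sum p
  refine ⟨∑ t ∈ s, leftTranslate ((g⁻¹ : GL m k) : Matrix m m k) ((g⁻¹)⁻¹ : GL m k)
    (antipode t.1) * Q t.2, fun h ↦ ?_⟩
  rw [hs, map_sum, map_sum, map_sum]
  refine Finset.sum_congr rfl fun t _ ↦ ?_
  rw [map_mul, evalGL_leftTranslate_coe, evalGL_antipode, _root_.mul_inv_rev, inv_inv, map_smul,
    map_smul, smul_eq_mul]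

-- Project the right translates of `p` onto the span `B` of its translates by `H`: at `h ∈ H` all of
-- `B` vanishes, while for `h ∈ g H` the translate of `p` by `h⁻¹ g` lies in `B` already.
theorem exists_evalGL_eq_zero_and_eq_one {H : Subgroup (GL m k)} {g : GL m k} {p : CoordRing m k}
    (hp : p ∈ vanishingIdeal (H : Set (GL m k))) (hg : evalGL g p ≠ 0) :
    ∃ a, (∀ h ∈ H, evalGL h a = 0) ∧ ∀ h, h⁻¹ * g ∈ H → evalGL h a = 1 := by
  let B : Submodule k (CoordRing m k) := .span k ((rightTranslate · p) '' (H : Set (GL m k)))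
  have hB : B ≤ (vanishingIdeal (H : Set (GL m k))).restrictScalars k :=
    Submodule.span_le.2 (Set.image_subset_iff.2 fun h hh ↦ rightTranslate_mem_vanishingIdeal hh hp)
  obtain ⟨Q, hQ⟩ := B.subtype.exists_leftInverse_of_injective B.ker_subtype
  obtain ⟨a, ha⟩ := exists_evalGL_eq_evalGL_linearMap g (B.subtype ∘ₗ Q) p
  refine ⟨C (evalGL g p)⁻¹ * a, fun h hh ↦ ?_, fun h hh ↦ ?_⟩
  · rw [map_mul, ha, LinearMap.comp_apply, B.subtype_apply, mem_vanishingIdeal.1 (hB (Q _).2) h hh,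
      mul_zero]
  · have hmem : rightTranslate (h⁻¹ * g) p ∈ B := Submodule.subset_span ⟨_, hh, rfl⟩
    have hfix : Q (rightTranslate (h⁻¹ * g) p) = ⟨_, hmem⟩ := LinearMap.congr_fun hQ ⟨_, hmem⟩
    rw [map_mul, ha, LinearMap.comp_apply, hfix, B.subtype_apply, evalGL_rightTranslate,
      mul_inv_cancel_left, ← algebraMap_eq, AlgHom.commutes, Algebra.algebraMap_self,
      RingHom.id_apply, inv_mul_cancel₀ hg]

end Separation

section ZariskiTopology

variable {m k : Type*} [Fintype m] [DecidableEq m] [Field k]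

theorem evalGL_eq_eval (g : GL m k) (p : CoordRing m k) :
    evalGL g p = eval (Sum.elim (fun q ↦ (g : Matrix m m k) q.1 q.2)
      (fun q ↦ ((g⁻¹ : GL m k) : Matrix m m k) q.1 q.2)) p := by
  rw [evalGL, evalPair, aeval_eq_eval]

theorem evalGL_C (g : GL m k) (c : k) : evalGL g (C c) = c :=
  (evalGL g).commutes c

theorem eval_adjugate_mvPolynomialX (g : GL m k) (i j : m) :
    eval (fun q ↦ (g : Matrix m m k) q.1 q.2) ((mvPolynomialX m m k).adjugate i j) =
      (g : Matrix m m k).det * ((g⁻¹ : GL m k) : Matrix m m k) i j := by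
  have hadj : (g : Matrix m m k).adjugate =
      (g : Matrix m m k).det • ((g⁻¹ : GL m k) : Matrix m m k) := by
    rw [← mul_one (adjugate _), ← Units.mul_inv g, ← mul_assoc, adjugate_mul, smul_mul, one_mul]
  have hmap := RingHom.map_adjugate (eval fun q : m × m ↦ (g : Matrix m m k) q.1 q.2)
    (mvPolynomialX m m k)
  rw [mvPolynomialX_mapMatrix_eval, hadj] at hmap
  exact congrFun₂ hmap i j

theorem exists_eval_eq_det_pow_mul_evalGL (p : CoordRing m k) :
    ∃ (p' : MvPolynomial (m × m) k) (N : ℕ), ∀ g : GL m k,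
      eval (fun q ↦ (g : Matrix m m k) q.1 q.2) p' = (g : Matrix m m k).det ^ N * evalGL g p := by
  have hdet (g : GL m k) : eval (fun q ↦ (g : Matrix m m k) q.1 q.2) (mvPolynomialX m m k).det =
      (g : Matrix m m k).det := by
    rw [RingHom.map_det, mvPolynomialX_mapMatrix_eval]
  induction p using MvPolynomial.induction_on with
  | C a => exact ⟨C a, 0, fun g ↦ by rw [evalGL_C, eval_C, pow_zero, one_mul]⟩
  | add p q hp hq =>
    obtain ⟨p', N, hp⟩ := hp
    obtain ⟨q', M, hq⟩ := hq
    refine ⟨p' * (mvPolynomialX m m k).det ^ M + q' * (mvPolynomialX m m k).det ^ N, N + M,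
      fun g ↦ ?_⟩
    simp only [map_add, map_mul, map_pow, hdet, hp, hq]
    ring
  | mul_X p v hp =>
    obtain ⟨p', N, hp⟩ := hp
    obtain ⟨i, j⟩ | ⟨i, j⟩ := v
    · refine ⟨p' * X (i, j), N, fun g ↦ ?_⟩
      rw [map_mul, hp, eval_X, map_mul, evalGL_eq_eval g (X _), eval_X, Sum.elim_inl, mul_assoc]
    · refine ⟨p' * (mvPolynomialX m m k).adjugate i j, N + 1, fun g ↦ ?_⟩
      rw [map_mul, hp, eval_adjugate_mvPolynomialX, map_mul, evalGL_eq_eval g (X _), eval_X,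
        Sum.elim_inr]
      ring

/-- `zariskiGL`, as an instance for the topology library. -/
local instance zariskiTopology : TopologicalSpace (GL m k) := zariskiGL m k

theorem isOpen_evalGL_ne_zero (p : CoordRing m k) : IsOpen {g : GL m k | evalGL g p ≠ 0} := by
  obtain ⟨p', N, hp'⟩ := exists_eval_eq_det_pow_mul_evalGL p
  let := zariskiMat m k
  have hU : IsOpen {M : Matrix m m k | eval (fun q ↦ M q.1 q.2) p' ≠ 0} :=
    TopologicalSpace.isOpen_generateFrom_of_mem ⟨p', rfl⟩
  refine isOpen_induced_iff.2 ⟨_, hU.preimage continuous_fst, Set.ext fun g ↦ ?_⟩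
  have hdet : (g : Matrix m m k).det ≠ 0 := (g.isUnit.map detMonoidHom).ne_zero
  simp [hp', hdet]

theorem zariskiGL_eq_generateFrom : zariskiGL m k =
    .generateFrom {U | ∃ p : CoordRing m k, U = {g : GL m k | evalGL g p ≠ 0}} := by
  refine le_antisymm (le_generateFrom fun U ⟨p, hU⟩ ↦ hU ▸ isOpen_evalGL_ne_zero p) ?_
  let := zariskiMat m k
  let : TopologicalSpace (GL m k) :=
    .generateFrom {U | ∃ p : CoordRing m k, U = {g : GL m k | evalGL g p ≠ 0}}
  refine continuous_iff_le_induced.1 (.prodMk ?_ ?_)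
  · refine continuous_generateFrom_iff.2 ?_
    rintro _ ⟨p, rfl⟩
    refine TopologicalSpace.isOpen_generateFrom_of_mem ⟨rename Sum.inl p, ?_⟩
    ext g
    simp [evalGL_eq_eval, eval_rename, Function.comp_def]
  · refine continuous_generateFrom_iff.2 ?_
    rintro _ ⟨p, rfl⟩
    refine TopologicalSpace.isOpen_generateFrom_of_mem ⟨rename Sum.inr p, ?_⟩
    ext g
    simp [evalGL_eq_eval, eval_rename, Function.comp_def]

theorem isTopologicalBasis_evalGL_ne_zero : TopologicalSpace.IsTopologicalBasis
    {U | ∃ p : CoordRing m k, U = {g : GL m k | evalGL g p ≠ 0}} := by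
  refine TopologicalSpace.isTopologicalBasis_of_subbasis_of_finiteInter zariskiGL_eq_generateFrom
    ⟨⟨1, by simp⟩, ?_⟩
  rintro _ ⟨p, rfl⟩ _ ⟨q, rfl⟩
  exact ⟨p * q, by ext; simp⟩

theorem exists_mem_vanishingIdeal_evalGL_ne_zero {Z : Set (GL m k)} (hZ : IsClosed Z) {g : GL m k}
    (hg : g ∉ Z) : ∃ p ∈ vanishingIdeal Z, evalGL g p ≠ 0 := by
  obtain ⟨_, ⟨p, rfl⟩, hgp, hsub⟩ :=
    isTopologicalBasis_evalGL_ne_zero.exists_subset_of_mem_open hg hZ.isOpen_compl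
  exact ⟨p, mem_vanishingIdeal.2 fun h hh ↦ of_not_not fun hne ↦ hsub hne hh, hgp⟩

theorem noetherianSpace_GL : TopologicalSpace.NoetherianSpace (GL m k) := by
  refine ((TopologicalSpace.noetherianSpace_TFAE (GL m k)).out 0 1).2 ?_
  let φ (Z : TopologicalSpace.Closeds (GL m k)) : (Ideal (CoordRing m k))ᵒᵈ :=
    .toDual (vanishingIdeal (Z : Set (GL m k)))
  refine StrictMono.wellFoundedLT (f := φ) fun Z W hZW ↦ ?_
  obtain ⟨g, hgW, hgZ⟩ := Set.exists_of_ssubset (show (Z : Set (GL m k)) ⊂ W from hZW)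
  obtain ⟨p, hp, hpg⟩ := exists_mem_vanishingIdeal_evalGL_ne_zero Z.isClosed hgZ
  refine OrderDual.toDual_lt_toDual.2 (lt_of_le_not_ge (fun q hq ↦ ?_) fun hle ↦ ?_)
  · exact mem_vanishingIdeal.2 fun h hh ↦ mem_vanishingIdeal.1 hq h (hZW.le hh)
  · exact hpg (mem_vanishingIdeal.1 (hle hp) g hgW)

theorem continuousConstSMul_GL : ContinuousConstSMul (GL m k) (GL m k) where
  continuous_const_smul h := by
    rw [isTopologicalBasis_evalGL_ne_zero.continuous_iff]
    rintro _ ⟨p, rfl⟩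
    convert isOpen_evalGL_ne_zero (leftTranslate (h : Matrix m m k) (h⁻¹ : GL m k) p) using 1
    exact Set.ext fun g ↦ by
      rw [Set.mem_preimage, Set.mem_ofPred, Set.mem_ofPred, evalGL_leftTranslate_coe, smul_eq_mul]

theorem isClosed_evalGL_eq (q : CoordRing m k) (c : k) :
    IsClosed {g : GL m k | evalGL g q = c} := by
  rw [← isOpen_compl_iff]
  convert isOpen_evalGL_ne_zero (q - C c) using 1
  ext g
  simp [sub_eq_zero]

theorem continuous_of_evalGL (q : CoordRing m k) :
    Continuous fun g : GL m k ↦ CofiniteTopology.of (evalGL g q) := by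
  refine continuous_iff_isClosed.2 fun T hT ↦ ?_
  obtain rfl | hT := CofiniteTopology.isClosed_iff.1 hT
  · exact isClosed_univ
  · convert hT.isClosed_biUnion fun c _ ↦ isClosed_evalGL_eq q (CofiniteTopology.of.symm c)
    ext g
    simp [Equiv.eq_symm_apply]

theorem evalGL_eq_of_mem_connectedComponentIn {S : Set (GL m k)} {q : CoordRing m k}
    (hq : ((evalGL · q) '' S).Finite) {x g : GL m k} (hx : x ∈ S)
    (hg : g ∈ connectedComponentIn S x) : evalGL g q = evalGL x q := by
  have hpre := (isPreconnected_connectedComponentIn (F := S) (x := x)).image _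
    (continuous_of_evalGL q).continuousOn
  have hfin := (hq.subset (Set.image_mono (connectedComponentIn_subset S x))).image
    CofiniteTopology.of
  rw [Set.image_image] at hfin
  by_contra hne
  exact hpre.infinite_of_nontrivial
    ⟨_, ⟨g, hg, rfl⟩, _, ⟨x, mem_connectedComponentIn hx, rfl⟩,
      CofiniteTopology.of.injective.ne hne⟩ hfin

end ZariskiTopology

theorem finite_connectedComponents (X : Type*) [TopologicalSpace X]
    [TopologicalSpace.NoetherianSpace X] : Finite (ConnectedComponents X) := by
  have hfin : (⋃ Z ∈ irreducibleComponents X, ConnectedComponents.mk '' Z).Finite :=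
    TopologicalSpace.NoetherianSpace.finite_irreducibleComponents.biUnion fun Z hZ ↦
      (hZ.1.isPreirreducible.isPreconnected.image _
        ConnectedComponents.continuous_coe.continuousOn).subsingleton.finite
  refine Set.finite_univ_iff.1 (hfin.subset fun c _ ↦ ?_)
  obtain ⟨x, rfl⟩ := ConnectedComponents.surjective_coe c
  exact Set.mem_biUnion (irreducibleComponent_mem_irreducibleComponents x)
    ⟨x, mem_irreducibleComponent, rfl⟩

section IdentityComponent

variable {X : Type*} [Group X] [TopologicalSpace X] [ContinuousConstSMul X X]

theorem continuousConstSMul_subgroup (H : Subgroup X) : ContinuousConstSMul H H where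
  continuous_const_smul h :=
    ((continuous_const_smul (h : X)).comp continuous_subtype_val).subtype_mk _

theorem mul_mem_connectedComponent (g : X) {a b : X} (h : a ∈ connectedComponent b) :
    g * a ∈ connectedComponent (g * b) :=
  (continuous_const_smul g).mapsTo_connectedComponent b h

variable (X) in
/-- The connected component of `1`. Only left translations are assumed to be continuous: the
Zariski topology does not make `GL m k` a topological group. -/
def identityComponent : Subgroup X where
  carrier := connectedComponent 1
  one_mem' := mem_connectedComponent
  mul_mem' {a b} ha hb := by
    have hab := mul_mem_connectedComponent a hb
    rwa [mul_one, ← connectedComponent_eq ha] at hab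
  inv_mem' {a} ha := by
    have hinv := mul_mem_connectedComponent a⁻¹ ha
    rw [inv_mul_cancel, mul_one] at hinv
    rw [← connectedComponent_eq hinv]
    exact mem_connectedComponent

end IdentityComponent

section Indicator

variable {m k : Type*} [Fintype m] [DecidableEq m] [Field k] {G : Subgroup (GL m k)}

attribute [local instance] zariskiTopology continuousConstSMul_GL continuousConstSMul_subgroup

theorem exists_evalGL_eq_one_on_connectedComponent {x : G} (hx : x ∉ identityComponent G) :
    ∃ a : CoordRing m k, (∀ h ∈ identityComponent G, evalGL (h : GL m k) a = 0) ∧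
      ∀ h ∈ connectedComponent x, evalGL (h : GL m k) a = 1 := by
  let H : Subgroup (GL m k) := (identityComponent G).map G.subtype
  obtain ⟨Z, hZ, hZH⟩ := isClosed_induced_iff.1 (isClosed_connectedComponent (x := (1 : G)))
  have hmem (g : G) : (g : GL m k) ∈ Z ↔ g ∈ identityComponent G := Set.ext_iff.1 hZH g
  obtain ⟨p, hp, hpx⟩ := exists_mem_vanishingIdeal_evalGL_ne_zero hZ (mt (hmem x).1 hx)
  have hpH : p ∈ vanishingIdeal (H : Set (GL m k)) := mem_vanishingIdeal.2 <| by
    rintro _ ⟨h, hh, rfl⟩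
    exact mem_vanishingIdeal.1 hp _ ((hmem h).2 hh)
  obtain ⟨a, ha, ha'⟩ := exists_evalGL_eq_zero_and_eq_one hpH hpx
  refine ⟨a, fun h hh ↦ ha h ⟨h, hh, rfl⟩, fun h hh ↦ ha' h ⟨h⁻¹ * x, ?_, rfl⟩⟩
  have hhx := mul_mem_connectedComponent h⁻¹ (connectedComponent_eq hh ▸ mem_connectedComponent)
  rwa [inv_mul_cancel] at hhx

variable (G) in
theorem exists_evalGL_eq_indicator_identityComponent : ∃ f : CoordRing m k, ∀ g : G,
    evalGL (g : GL m k) f = (identityComponent G : Set G).indicator 1 g := by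
  classical
  have := noetherianSpace_GL (m := m) (k := k)
  have : TopologicalSpace.NoetherianSpace G := Topology.IsInducing.subtypeVal.noetherianSpace
  have := finite_connectedComponents G
  have := Fintype.ofFinite (ConnectedComponents G)
  have hsep (c : ConnectedComponents G) (hc : c ≠ (1 : G)) : ∃ a : CoordRing m k,
      (∀ h ∈ identityComponent G, evalGL (h : GL m k) a = 0) ∧
        ∀ h : G, (h : ConnectedComponents G) = c → evalGL (h : GL m k) a = 1 := by
    obtain ⟨x, rfl⟩ := ConnectedComponents.surjective_coe c
    simp only [ConnectedComponents.coe_eq_coe', ne_eq] at hc ⊢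
    exact exists_evalGL_eq_one_on_connectedComponent hc
  choose! a ha ha' using hsep
  refine ⟨∏ c ∈ Finset.univ.erase ((1 : G) : ConnectedComponents G), (1 - a c), fun g ↦ ?_⟩
  simp only [map_prod, map_sub, map_one]
  by_cases hg : g ∈ identityComponent G
  · rw [Set.indicator_of_mem hg, Pi.one_apply]
    refine Finset.prod_eq_one fun c hc ↦ ?_
    rw [ha c (Finset.ne_of_mem_erase hc) g hg, sub_zero]
  · have hc : (g : ConnectedComponents G) ≠ (1 : G) := mt ConnectedComponents.coe_eq_coe'.1 hg
    rw [Set.indicator_of_notMem hg]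
    exact Finset.prod_eq_zero (Finset.mem_erase.2 ⟨hc, Finset.mem_univ _⟩)
      (by rw [ha' _ hc g rfl, sub_self])

variable (G) in
theorem exists_evalGL_eq_indicator_zComponentIn : ∃ f : CoordRing m k, ∀ g ∈ G,
    evalGL g f = (zComponentIn (G : Set (GL m k)) 1).indicator 1 g := by
  obtain ⟨f, hf⟩ := exists_evalGL_eq_indicator_identityComponent G
  have himage : zComponentIn (G : Set (GL m k)) 1 = (↑) '' (identityComponent G : Set G) :=
    connectedComponentIn_eq_image G.one_mem
  refine ⟨f, fun g hg ↦ ?_⟩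
  rw [hf ⟨g, hg⟩]
  by_cases h : (⟨g, hg⟩ : G) ∈ identityComponent G
  · rw [Set.indicator_of_mem h, Set.indicator_of_mem (himage ▸ ⟨_, h, rfl⟩)]
    rfl
  · rw [Set.indicator_of_notMem h, Set.indicator_of_notMem]
    rw [himage]
    rintro ⟨_, hg', rfl⟩
    exact h hg'

end Indicator

section InvariantFunction

variable {m k : Type*} [Fintype m] [DecidableEq m] [Field k] {G : Subgroup (GL m k)}

theorem lieDerivation_mem_vanishingIdeal_of_isIdempotentElem {f : CoordRing m k}
    (hf : ∀ g ∈ G, IsIdempotentElem (evalGL g f)) {A : Matrix m m k} (hA : A ∈ lieAlgebraOf G) :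
    lieDerivation m k A f ∈ vanishingIdeal (G : Set (GL m k)) := by
  have hff : f * f - f ∈ vanishingIdeal (G : Set (GL m k)) :=
    mem_vanishingIdeal.2 fun g hg ↦ by rw [map_sub, map_mul, hf g hg, sub_self]
  refine mem_vanishingIdeal.2 fun g hg ↦ ?_
  have h := mem_vanishingIdeal.1 (hA _ hff) g hg
  rw [map_sub, Derivation.leibniz, map_sub, map_add, smul_eq_mul, map_mul] at h
  obtain h0 | h1 := IsIdempotentElem.iff_eq_zero_or_one.1 (hf g hg)
  · simpa [h0] using! h
  · simpa [h1] using! h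

variable (m k) in
/-- The action of `Matrix m m k` by left invariant derivations on the polynomials of degree at most
`d`. -/
def lieDerivationDegreeLE (d : ℕ) :
    Matrix m m k →ₗ⁅k⁆ Module.End k (degreeLE ((m × m) ⊕ (m × m)) k d) where
  toFun A := (lieDerivation m k A).toLinearMap.restrict fun _ ↦ lieDerivation_mem_degreeLE A
  map_add' A B := LinearMap.ext fun p ↦ Subtype.ext <| by
    simp only [map_add]
    rfl
  map_smul' c A := LinearMap.ext fun p ↦ Subtype.ext <| by
    simp only [map_smul]
    rfl
  map_lie' {A B} := LinearMap.ext fun p ↦ Subtype.ext <| by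
    simp only [LieHom.map_lie]
    exact Derivation.commutator_apply (D2 := lieDerivation m k B) (p : CoordRing m k)

theorem isSemisimple_lieDerivationDegreeLE [CharZero k]
    [(stdRepOf G).IsSemisimpleRepresentation] {z : lieAlgebraOf G}
    (hz : z ∈ center k (lieAlgebraOf G)) (d : ℕ) :
    Module.End.IsSemisimple (lieDerivationDegreeLE m k d z) := by
  have := complementedLattice_lieSubmodule (G := G)
  have hz' : Module.End.IsSemisimple (Matrix.toLin' (z : Matrix m m k)) :=
    isSemisimple_toEnd_of_mem_center (L := lieAlgebraOf G) (V := m → k) hz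
  exact (isSemisimpleOn_lieDerivation hz' d).isSemisimple_restrict

theorem exists_lieDerivation_eq_zero_sub_smul_mem [CharZero k]
    [(stdRepOf G).IsSemisimpleRepresentation] {f : CoordRing m k}
    (hf : ∀ g ∈ G, IsIdempotentElem (evalGL g f)) (hfG : f ∉ vanishingIdeal (G : Set (GL m k))) :
    ∃ (w : CoordRing m k) (c : k), c ≠ 0 ∧
      (∀ A ∈ lieAlgebraOf G, lieDerivation m k A w = 0) ∧
      w - c • f ∈ vanishingIdeal (G : Set (GL m k)) := by
  have := complementedLattice_lieSubmodule (G := G)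
  have := hasTrivialRadical_quotient_center (k := k) (L := lieAlgebraOf G) (m → k)
  obtain ⟨d, hd⟩ := exists_mem_degreeLE f
  obtain ⟨w, c, hc, hw, hwf⟩ := exists_forall_apply_eq_zero_sub_smul_mem
    ((lieDerivationDegreeLE m k d).comp (lieAlgebraOf G).incl)
    (fun z hz ↦ isSemisimple_lieDerivationDegreeLE hz d)
    (N := ((vanishingIdeal (G : Set (GL m k))).restrictScalars k).comap (Submodule.subtype _))
    (fun A p hp ↦ A.2 p hp) (v := ⟨f, hd⟩) hfG
    (fun A ↦ lieDerivation_mem_vanishingIdeal_of_isIdempotentElem hf A.2)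
  exact ⟨w, c, hc, fun A hA ↦ congrArg Subtype.val (hw ⟨A, hA⟩), hwf⟩

end InvariantFunction

section FixedByComponent

attribute [local instance] zariskiTopology

theorem evalPair_ext {m k : Type*} [Field k] [Infinite k] {p q : CoordRing m k}
    (h : ∀ A B : Matrix m m k, evalPair A B p = evalPair A B q) : p = q := by
  refine MvPolynomial.funext fun x ↦ ?_
  have hx := h (fun i j ↦ x (.inl (i, j))) (fun i j ↦ x (.inr (i, j)))
  have hsum : Sum.elim (fun q ↦ x (.inl q)) (fun q ↦ x (.inr q)) = x := Sum.elim_comp_inl_inr x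
  simpa only [evalPair, aeval_eq_eval, hsum] using! hx

variable {m k : Type*} [Fintype m] [DecidableEq m] [Field k] {G : Subgroup (GL m k)}

/- Every left translate of `w` is killed by the Lie algebra as well, hence takes finitely many
values on `G`, hence is constant on the component of `1`. -/
theorem rightTranslate_eq_self_of_mem_zComponentIn [CharZero k] {w : CoordRing m k}
    (hw : ∀ A ∈ lieAlgebraOf G, lieDerivation m k A w = 0) {g : GL m k}
    (hg : g ∈ zComponentIn (G : Set (GL m k)) 1) : rightTranslate g w = w := by
  refine evalPair_ext fun a b ↦ ?_
  have hfin : ((evalGL · (leftTranslate a b w)) '' (G : Set (GL m k))).Finite :=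
    finite_image_evalGL fun A hA ↦ by
      rw [lieDerivation_leftTranslate, hw A hA, map_zero]
      exact zero_mem _
  have h := evalGL_eq_of_mem_connectedComponentIn hfin G.one_mem hg
  rwa [evalGL_leftTranslate, evalGL_leftTranslate, inv_one, Units.val_one, mul_one, one_mul,
    ← evalPair_rightTranslate] at h

variable (G) in
theorem exists_rightTranslate_eq_self_iff_mem_zComponentIn [CharZero k]
    [(stdRepOf G).IsSemisimpleRepresentation] : ∃ w : CoordRing m k, ∀ g ∈ G,
      rightTranslate g w = w ↔ g ∈ zComponentIn (G : Set (GL m k)) 1 := by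
  obtain ⟨f, hf⟩ := exists_evalGL_eq_indicator_zComponentIn G
  have h1 : (1 : GL m k) ∈ zComponentIn (G : Set (GL m k)) 1 :=
    mem_connectedComponentIn (α := GL m k) G.one_mem
  have hf1 : evalGL 1 f = 1 := by rw [hf 1 G.one_mem, Set.indicator_of_mem h1, Pi.one_apply]
  have hidem (g : GL m k) (hg : g ∈ G) : IsIdempotentElem (evalGL g f) := by
    classical
    rw [hf g hg, Set.indicator_apply]
    split_ifs
    exacts [IsIdempotentElem.one, IsIdempotentElem.zero]
  obtain ⟨w, c, hc, hw, hwf⟩ := exists_lieDerivation_eq_zero_sub_smul_mem hidem fun h ↦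
    one_ne_zero (hf1.symm.trans (mem_vanishingIdeal.1 h 1 G.one_mem))
  have hwG (g : GL m k) (hg : g ∈ G) : evalGL g w = c * evalGL g f := by
    simpa [sub_eq_zero] using mem_vanishingIdeal.1 hwf g hg
  refine ⟨w, fun g hg ↦ ⟨fun hgw ↦ ?_, rightTranslate_eq_self_of_mem_zComponentIn hw⟩⟩
  have hgf : evalGL g f = 1 := by
    have h := congrArg (evalGL 1) hgw
    rwa [evalGL_rightTranslate, one_mul, hwG g hg, hwG 1 G.one_mem, mul_right_inj' hc, hf1] at h
  exact Set.mem_of_indicator_ne_zero ((hf g hg).symm.trans hgf ▸ one_ne_zero)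

end FixedByComponent

section RegularRepresentation

variable {m k : Type*} [Fintype m] [DecidableEq m] [Field k]

variable (m k) in
/-- The action of `GL m k` by right translations on the polynomials of degree at most `d`. -/
def rightTranslateDegreeLE (d : ℕ) :
    GL m k →* Module.End k (degreeLE ((m × m) ⊕ (m × m)) k d) where
  toFun g := (rightTranslate g).toLinearMap.restrict fun _ ↦ rightTranslate_mem_degreeLE g
  map_one' := LinearMap.ext fun p ↦ Subtype.ext <|
    DFunLike.congr_fun rightTranslate_one (p : CoordRing m k)
  map_mul' g h := LinearMap.ext fun p ↦ Subtype.ext <|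
    DFunLike.congr_fun (rightTranslate_mul g h) (p : CoordRing m k)

variable (m k) in
/-- The matrix form of `rightTranslateDegreeLE` in the basis `Module.finBasis`. -/
def regularRep (d : ℕ) :
    GL m k →* GL (Fin (Module.finrank k (degreeLE ((m × m) ⊕ (m × m)) k d))) k :=
  ((LinearMap.toMatrixAlgEquiv (Module.finBasis k _)).toMonoidHom.comp
    (rightTranslateDegreeLE m k d)).toHomUnits

theorem regularRep_mulVec_repr (d : ℕ) (g : GL m k) (p : degreeLE ((m × m) ⊕ (m × m)) k d) :
    (regularRep m k d g : Matrix _ _ k) *ᵥ (Module.finBasis k _).repr p =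
      (Module.finBasis k _).repr (rightTranslateDegreeLE m k d g p) :=
  LinearMap.toMatrix_mulVec_repr _ _ _ _

theorem regularRep_mulVec_repr_eq_iff {d : ℕ} {g : GL m k}
    {p : degreeLE ((m × m) ⊕ (m × m)) k d} :
    (regularRep m k d g : Matrix _ _ k) *ᵥ (Module.finBasis k _).repr p =
      (Module.finBasis k _).repr p ↔ rightTranslate g (p : CoordRing m k) = p := by
  rw [regularRep_mulVec_repr, DFunLike.coe_fn_eq, EmbeddingLike.apply_eq_iff_eq, Subtype.ext_iff]
  rfl

theorem exists_evalGL_eq_regularRep (d : ℕ)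
    (i j : Fin (Module.finrank k (degreeLE ((m × m) ⊕ (m × m)) k d))) :
    ∃ p : CoordRing m k, ∀ g, (regularRep m k d g : Matrix _ _ k) i j = evalGL g p := by
  let b := Module.finBasis k (degreeLE ((m × m) ⊕ (m × m)) k d)
  obtain ⟨φ, hφ⟩ := LinearMap.exists_extend (b.coord i)
  obtain ⟨s, hs⟩ := exists_rightTranslate_eq_sum (b j : CoordRing m k)
  refine ⟨∑ t ∈ s, φ t.2 • t.1, fun g ↦ ?_⟩
  calc (regularRep m k d g : Matrix _ _ k) i j
      = b.coord i (rightTranslateDegreeLE m k d g (b j)) := LinearMap.toMatrix_apply _ _ _ _ _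
    _ = φ (rightTranslate g (b j : CoordRing m k)) := by rw [← hφ]; rfl
    _ = evalGL g (∑ t ∈ s, φ t.2 • t.1) := by
      rw [hs g, map_sum, map_sum]
      simp only [map_smul, smul_eq_mul, mul_comm]

end RegularRepresentation

end LarsenPink

open LarsenPink

theorem larsen_pink_connectedness_criterion_general
    {k : Type*} [Field k] [CharZero k] {m : Type*} [Fintype m] [DecidableEq m]
    (G : Subgroup (GL m k))
    (hred : IsSemisimpleModule (MonoidAlgebra k G) (Representation.asModule (stdRepOf G)))
    (hinv : ∀ (s : ℕ) (ρ : GL m k →* GL (Fin s) k),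
      (∀ i j : Fin s, ∃ p : CoordRing m k, ∀ g, (ρ g : Matrix (Fin s) (Fin s) k) i j = evalGL g p) →
      ∀ w : Fin s → k,
        (∀ g ∈ zComponentIn (G : Set (GL m k)) 1, (ρ g : Matrix (Fin s) (Fin s) k) *ᵥ w = w) →
          ∀ g ∈ G, (ρ g : Matrix (Fin s) (Fin s) k) *ᵥ w = w) :
    zIsConnected (G : Set (GL m k)) := by
  have := (Representation.isSemisimpleRepresentation_iff_isSemisimpleModule_asModule _).2 hred
  obtain ⟨w, hw⟩ := exists_rightTranslate_eq_self_iff_mem_zComponentIn G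
  obtain ⟨d, hd⟩ := exists_mem_degreeLE w
  let w' : degreeLE ((m × m) ⊕ (m × m)) k d := ⟨w, hd⟩
  have hfix (g : GL m k) : (regularRep m k d g : Matrix _ _ k) *ᵥ (Module.finBasis k _).repr w' =
      (Module.finBasis k _).repr w' ↔ rightTranslate g w = w :=
    regularRep_mulVec_repr_eq_iff
  have hsub : zComponentIn (G : Set (GL m k)) 1 ⊆ G :=
    @connectedComponentIn_subset _ (zariskiGL m k) _ _
  have hG : zComponentIn (G : Set (GL m k)) 1 = G := by
    refine hsub.antisymm fun g hg ↦ (hw g hg).1 <| (hfix g).1 ?_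
    exact hinv _ _ (exists_evalGL_eq_regularRep d) _
      (fun h hh ↦ (hfix h).2 <| (hw h (hsub hh)).2 hh) g hg
  rw [← hG]
  exact (@isConnected_connectedComponentIn_iff _ (zariskiGL m k) _ _).2 G.one_mem

/-- Larsen–Pink criterion: Let `G ⊆ GL(V)` be a reductive algebraic group over
a field of characteristic zero (reductivity being expressed, as is equivalent in
characteristic zero, by the semisimplicity of the standard module `V` over `G`). If for
every finite-dimensional (algebraic) representation `W` of the ambient `GL(V)` one has
`W^G = W^{G⁰}`, then `G` is connected. -/
theorem larsen_pink_connectedness_criterion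
    {K : Type*} [Field K] [CharZero K] {nn : Type*} [Fintype nn] [DecidableEq nn]
    (G : Subgroup (GL nn K)) (hGcl : zIsClosed (G : Set (GL nn K)))
    (hred : IsSemisimpleModule (MonoidAlgebra K G)
      (Representation.asModule (stdRepOf G)))
    (hinv : ∀ (s : ℕ) (ρW : GL nn K →* GL (Fin s) K),
      (∀ i j : Fin s, ∃ p : MvPolynomial ((nn × nn) ⊕ (nn × nn)) K,
        ∀ g : GL nn K, ((ρW g : GL (Fin s) K) : Matrix (Fin s) (Fin s) K) i j =
          MvPolynomial.eval
            (Sum.elim (fun q => ((g : GL nn K) : Matrix nn nn K) q.1 q.2)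
              (fun q => (((g⁻¹ : GL nn K)) : Matrix nn nn K) q.1 q.2)) p) →
      ∀ w : Fin s → K,
        ((∀ g ∈ G, ((ρW g : GL (Fin s) K) : Matrix (Fin s) (Fin s) K).mulVec w = w) ↔
          (∀ g ∈ zComponentIn (G : Set (GL nn K)) 1,
            ((ρW g : GL (Fin s) K) : Matrix (Fin s) (Fin s) K).mulVec w = w))) :
    zIsConnected (G : Set (GL nn K)) :=
  larsen_pink_connectedness_criterion_general G hred fun s ρ hρ w ↦
    (hinv s ρ (fun i j ↦ (hρ i j).imp fun p hp g ↦ (hp g).trans (evalGL_eq_eval g p)) w).2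
end
end
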